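/- There exist k₀ > 0 and K₀ ≥ 1 such that for all ε, k, K with 0 < ε < k < k₀ and K ≥ K₀, the metric measure space (X, d_∞, m) satisfies the CD(0,∞) condition: for every pair of probability measures μ₀, μ₁ on X absolutely continuous with respect to m, there exists a constant-speed W₂-geodesic (μ_t)_{t∈[0,1]} from μ₀ to μ₁ such that Ent(μ_t) ≤ (1−t)·Ent(μ₀) + t·Ent(μ₁) for every t ∈ [0,1]. -/

import Mathlib

open MeasureTheory

-- relative entropy with values in `EReal` (`+∞` if not absolutely continuous or not integrable)
open Classical in
noncomputable def Ent {α : Type*} [MeasurableSpace α] (m μ : Measure α) : EReal :=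
  if μ ≪ m ∧ Integrable (llr μ m) μ then ((∫ z, llr μ m z ∂μ : ℝ) : EReal) else ⊤

-- squared 2-Wasserstein distance w.r.t. cost `d`, as an infimum over couplings
noncomputable def W2sq {α : Type*} [MeasurableSpace α] (d : α → α → ℝ)
    (μ ν : Measure α) : ENNReal :=
  ⨅ (π : Measure (α × α)) (_ : Measure.map Prod.fst π = μ ∧ Measure.map Prod.snd π = ν),
    ∫⁻ p, ENNReal.ofReal (d p.1 p.2 ^ 2) ∂π

open MeasureTheory ProbabilityTheory
open scoped ENNReal

/-- The plane with the sup distance. -/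
abbrev Pl := ℝ × ℝ

/-- Being a coupling of two measures. -/
def IsCpl (μ ν : Measure Pl) (π : Measure (Pl × Pl)) : Prop :=
  Measure.map Prod.fst π = μ ∧ Measure.map Prod.snd π = ν

lemma IsCpl.prob {μ ν : Measure Pl} {π : Measure (Pl × Pl)} [IsProbabilityMeasure μ]
    (h : IsCpl μ ν π) : IsProbabilityMeasure π := by
  constructor
  have : Measure.map Prod.fst π Set.univ = 1 := by rw [h.1]; simp
  rwa [Measure.map_apply measurable_fst MeasurableSet.univ, Set.preimage_univ] at this

lemma glue_cpl {μ ν ρ : Measure Pl} [IsProbabilityMeasure μ] [IsProbabilityMeasure ν]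
    [IsProbabilityMeasure ρ] {π₁ π₂ : Measure (Pl × Pl)} (h₁ : IsCpl μ ν π₁) (h₂ : IsCpl ν ρ π₂) :
    ∃ G : Measure (Pl × Pl × Pl), G.map (fun p => (p.2.1, p.1)) = π₁ ∧
      G.map (fun p => (p.1, p.2.2)) = π₂ := by
  have := h₁.prob
  have := h₂.prob
  have e1 : (π₁.map Prod.swap).fst = ν := by
    rw [Measure.fst, Measure.map_map measurable_fst measurable_swap]; exact h₁.2
  have e2 : π₂.fst = ν := h₂.1
  have := Measure.isProbabilityMeasure_map (μ := π₁) (f := Prod.swap) measurable_swap.aemeasurable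
  set κ₁ := (π₁.map Prod.swap).condKernel
  set κ₂ := π₂.condKernel
  have d1 : ν ⊗ₘ κ₁ = π₁.map Prod.swap := by rw [← e1]; exact Measure.disintegrate _ _
  have d2 : ν ⊗ₘ κ₂ = π₂ := by rw [← e2]; exact Measure.disintegrate _ _
  have f1 : (ν ⊗ₘ (κ₁ ×ₖ κ₂)).map (Prod.map id Prod.fst) = ν ⊗ₘ κ₁ := by
    rw [← Measure.compProd_map measurable_fst, ← Kernel.fst_eq, Kernel.fst_prod]
  have f2 : (ν ⊗ₘ (κ₁ ×ₖ κ₂)).map (Prod.map id Prod.snd) = ν ⊗ₘ κ₂ := by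
    rw [← Measure.compProd_map measurable_snd, ← Kernel.snd_eq, Kernel.snd_prod]
  refine ⟨ν ⊗ₘ (κ₁ ×ₖ κ₂), ?_, ?_⟩
  · have : π₁ = (π₁.map Prod.swap).map Prod.swap := by
      rw [Measure.map_map measurable_swap measurable_swap]; simp
    rw [this, ← d1, ← f1, Measure.map_map measurable_swap (by fun_prop)]
    rfl
  · rw [← d2, ← f2]; rfl

lemma W2_tri {μ ν ρ : Measure Pl} [IsProbabilityMeasure μ] [IsProbabilityMeasure ν]
    [IsProbabilityMeasure ρ] {l : ℝ} (h0 : 0 < l) (h1 : l < 1) :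
    W2sq dist μ ρ ≤ ENNReal.ofReal (1 / l) * W2sq dist μ ν
      + ENNReal.ofReal (1 / (1 - l)) * W2sq dist ν ρ := by
  have key : ∀ π₁ π₂, IsCpl μ ν π₁ → IsCpl ν ρ π₂ → W2sq dist μ ρ ≤
      ENNReal.ofReal (1 / l) * ∫⁻ p, ENNReal.ofReal (dist p.1 p.2 ^ 2) ∂π₁
      + ENNReal.ofReal (1 / (1 - l)) * ∫⁻ p, ENNReal.ofReal (dist p.1 p.2 ^ 2) ∂π₂ := by
    intro π₁ π₂ h₁ h₂
    obtain ⟨G, g1, g2⟩ := glue_cpl h₁ h₂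
    have hc : IsCpl μ ρ (G.map (fun p => (p.2.1, p.2.2))) := by
      constructor
      · rw [Measure.map_map measurable_fst (by fun_prop), ← h₁.1, ← g1,
          Measure.map_map measurable_fst (by fun_prop)]; rfl
      · rw [Measure.map_map measurable_snd (by fun_prop), ← h₂.2, ← g2,
          Measure.map_map measurable_snd (by fun_prop)]; rfl
    refine (iInf₂_le _ hc).trans ?_
    rw [← g1, ← g2, lintegral_map (by fun_prop) (by fun_prop),
      lintegral_map (by fun_prop) (by fun_prop), lintegral_map (by fun_prop) (by fun_prop),
      ← lintegral_const_mul _ (by fun_prop), ← lintegral_const_mul _ (by fun_prop),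
      ← lintegral_add_left (by fun_prop)]
    refine lintegral_mono fun p => ?_
    have hl : 0 < 1 - l := by linarith
    dsimp only
    rw [← ENNReal.ofReal_mul (by positivity), ← ENNReal.ofReal_mul (by positivity),
      ← ENNReal.ofReal_add (by positivity) (by positivity)]
    apply ENNReal.ofReal_le_ofReal
    have ht := dist_triangle p.2.1 p.1 p.2.2
    set a := dist p.2.1 p.1
    set b := dist p.1 p.2.2
    set c := dist p.2.1 p.2.2
    have hc0 : 0 ≤ c := dist_nonneg
    have : c ^ 2 ≤ (a + b) ^ 2 := by gcongr
    refine this.trans ?_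
    rw [div_mul_eq_mul_div, div_mul_eq_mul_div, div_add_div _ _ h0.ne' hl.ne', le_div_iff₀ (by positivity)]
    nlinarith [sq_nonneg ((1 - l) * a - l * b)]
  have hd : ∀ μ ν : Measure Pl, W2sq dist μ ν = ⨅ π : {π // IsCpl μ ν π},
      ∫⁻ p, ENNReal.ofReal (dist p.1 p.2 ^ 2) ∂π.1 := fun μ ν => by
    rw [iInf_subtype]; rfl
  rw [hd μ ν, hd ν ρ, ENNReal.mul_iInf_of_ne (by simp [h0]) (by simp),
    ENNReal.mul_iInf_of_ne (by simp [h1]) (by simp)]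
  rw [ENNReal.iInf_add]
  refine le_iInf fun π₁ => ?_
  rw [ENNReal.add_iInf]
  exact le_iInf fun π₂ => key _ _ π₁.2 π₂.2

open MeasureTheory ProbabilityTheory
open scoped ENNReal NNReal

/-- Primary cost. -/
noncomputable def cst1 (ω : Pl × Pl) : ℝ := dist ω.1 ω.2 ^ 2
/-- Secondary cost. -/
noncomputable def cst2 (ω : Pl × Pl) : ℝ := (ω.1.1 - ω.2.1) ^ 2 + (ω.1.2 - ω.2.2) ^ 2

lemma cst1_cont : Continuous cst1 := by unfold cst1; fun_prop
lemma cst2_cont : Continuous cst2 := by unfold cst2; fun_prop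
lemma cst1_nonneg (ω) : 0 ≤ cst1 ω := by unfold cst1; positivity
lemma cst2_nonneg (ω) : 0 ≤ cst2 ω := by unfold cst2; positivity

/-- Total cost. -/
noncomputable def Tot (c : Pl × Pl → ℝ) (π : Measure (Pl × Pl)) : ℝ≥0∞ :=
  ∫⁻ ω, ENNReal.ofReal (c ω) ∂π

/-- Lexicographically optimal couplings. -/
structure LexOpt (μ ν : Measure Pl) (π : Measure (Pl × Pl)) : Prop where
  cpl : IsCpl μ ν π
  opt1 : ∀ π', IsCpl μ ν π' → Tot cst1 π ≤ Tot cst1 π'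
  opt2 : ∀ π', IsCpl μ ν π' → Tot cst1 π' ≤ Tot cst1 π → Tot cst2 π ≤ Tot cst2 π'
  fin1 : Tot cst1 π ≠ ∞
  fin2 : Tot cst2 π ≠ ∞

lemma IsCpl.ae_mem {μ ν : Measure Pl} {π : Measure (Pl × Pl)} (h : IsCpl μ ν π) {X : Set Pl}
    (hX : MeasurableSet X) (hμ : μ Xᶜ = 0) (hν : ν Xᶜ = 0) : π (X ×ˢ X)ᶜ = 0 := by
  have h1 : π (Prod.fst ⁻¹' Xᶜ) = 0 := by
    rw [← Measure.map_apply measurable_fst hX.compl, h.1, hμ]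
  have h2 : π (Prod.snd ⁻¹' Xᶜ) = 0 := by
    rw [← Measure.map_apply measurable_snd hX.compl, h.2, hν]
  refine measure_mono_null ?_ (measure_union_null h1 h2)
  intro ω hω
  simp only [Set.mem_compl_iff, Set.mem_prod, not_and_or] at hω
  exact hω

lemma exists_bcf {Y : Set (Pl × Pl)} (hY : IsCompact Y) {c : Pl × Pl → ℝ} (hc : Continuous c) :
    ∃ g : BoundedContinuousFunction (Pl × Pl) ℝ≥0, ∀ ω ∈ Y, (g ω : ℝ≥0∞) = ENNReal.ofReal (c ω) := by
  obtain ⟨C, hC⟩ := hY.exists_bound_of_continuousOn hc.continuousOn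
  refine ⟨BoundedContinuousFunction.mkOfBound
    ⟨fun ω => min (c ω).toNNReal C.toNNReal, by fun_prop⟩ (C.toNNReal) ?_, ?_⟩
  · intro x y
    rw [NNReal.dist_eq]
    have h1 : (min (c x).toNNReal C.toNNReal : ℝ≥0) ≤ C.toNNReal := min_le_right _ _
    have h2 : (min (c y).toNNReal C.toNNReal : ℝ≥0) ≤ C.toNNReal := min_le_right _ _
    have h1' : ((min (c x).toNNReal C.toNNReal : ℝ≥0) : ℝ) ≤ C.toNNReal := by exact_mod_cast h1
    have h2' : ((min (c y).toNNReal C.toNNReal : ℝ≥0) : ℝ) ≤ C.toNNReal := by exact_mod_cast h2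
    have h3 := (min (c x).toNNReal C.toNNReal : ℝ≥0).2
    have h4 := (min (c y).toNNReal C.toNNReal : ℝ≥0).2
    rw [abs_le]
    constructor
    · show _ ≤ ((min (c x).toNNReal C.toNNReal : ℝ≥0) : ℝ) - ((min (c y).toNNReal C.toNNReal : ℝ≥0) : ℝ)
      linarith [(min (c x).toNNReal C.toNNReal : ℝ≥0).coe_nonneg]
    · show ((min (c x).toNNReal C.toNNReal : ℝ≥0) : ℝ) - ((min (c y).toNNReal C.toNNReal : ℝ≥0) : ℝ) ≤ _
      linarith [(min (c y).toNNReal C.toNNReal : ℝ≥0).coe_nonneg]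
  · intro ω hω
    have : (c ω).toNNReal ≤ C.toNNReal := Real.toNNReal_le_toNNReal ((le_abs_self _).trans (hC ω hω))
    show ((min (c ω).toNNReal C.toNNReal : ℝ≥0) : ℝ≥0∞) = _
    rw [min_eq_left this]; rfl

lemma exists_lexOpt {μ ν : Measure Pl} [IsProbabilityMeasure μ] [IsProbabilityMeasure ν]
    {X : Set Pl} (hX : IsCompact X) (hμ : μ Xᶜ = 0) (hν : ν Xᶜ = 0) : ∃ π, LexOpt μ ν π := by
  have hXm := hX.measurableSet
  obtain ⟨g1, hg1⟩ := exists_bcf (hX.prod hX) cst1_cont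
  obtain ⟨g2, hg2⟩ := exists_bcf (hX.prod hX) cst2_cont
  have key : ∀ {c : Pl × Pl → ℝ} {g : BoundedContinuousFunction (Pl × Pl) ℝ≥0},
      (∀ ω ∈ X ×ˢ X, (g ω : ℝ≥0∞) = ENNReal.ofReal (c ω)) → ∀ π, IsCpl μ ν π →
      Tot c π = ∫⁻ ω, g ω ∂π := by
    intro c g hg π hπ
    refine lintegral_congr_ae ?_
    have := hπ.ae_mem hXm hμ hν
    filter_upwards [show ∀ᵐ ω ∂π, ω ∈ X ×ˢ X from this] with ω hω
    exact (hg ω hω).symm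
  let S : Set (ProbabilityMeasure (Pl × Pl)) := {π | IsCpl μ ν π}
  have hScl : IsClosed S := by
    have e : S = (fun π : ProbabilityMeasure (Pl × Pl) => π.map (f := Prod.fst) (by fun_prop)) ⁻¹' {⟨μ, inferInstance⟩} ∩
        (fun π : ProbabilityMeasure (Pl × Pl) => π.map (f := Prod.snd) (by fun_prop)) ⁻¹' {⟨ν, inferInstance⟩} := by
      ext π
      constructor
      · rintro ⟨h1, h2⟩
        exact ⟨Subtype.ext h1, Subtype.ext h2⟩
      · rintro ⟨h1, h2⟩
        exact ⟨congrArg Subtype.val h1, congrArg Subtype.val h2⟩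
    rw [e]
    exact (isClosed_singleton.preimage (ProbabilityMeasure.continuous_map continuous_fst)).inter
      (isClosed_singleton.preimage (ProbabilityMeasure.continuous_map continuous_snd))
  have hSc : IsCompact S := by
    have := isCompact_closure_of_isTightMeasureSet (S := S) (by
      rw [isTightMeasureSet_iff_exists_isCompact_measure_compl_le]
      intro ε hε
      refine ⟨X ×ˢ X, hX.prod hX, ?_⟩
      rintro _ ⟨π, hπ, rfl⟩
      rw [IsCpl.ae_mem hπ hXm hμ hν]; exact zero_le)
    rwa [hScl.closure_eq] at this
  have hSn : S.Nonempty := ⟨⟨μ.prod ν, inferInstance⟩, by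
    constructor <;> simp⟩
  have c1 : Continuous fun π : ProbabilityMeasure (Pl × Pl) => ∫⁻ ω, g1 ω ∂(π : Measure (Pl × Pl)) :=
    ProbabilityMeasure.continuous_lintegral_boundedContinuousFunction g1
  have c2 : Continuous fun π : ProbabilityMeasure (Pl × Pl) => ∫⁻ ω, g2 ω ∂(π : Measure (Pl × Pl)) :=
    ProbabilityMeasure.continuous_lintegral_boundedContinuousFunction g2
  obtain ⟨π1, hπ1, hm1⟩ := hSc.exists_isMinOn hSn c1.continuousOn
  set v := ∫⁻ ω, g1 ω ∂(π1 : Measure (Pl × Pl))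
  have hS2 : IsCompact (S ∩ {π : ProbabilityMeasure (Pl × Pl) | ∫⁻ ω, g1 ω ∂(π : Measure (Pl × Pl)) ≤ v}) :=
    hSc.inter_right (isClosed_le c1 continuous_const)
  obtain ⟨π2, hπ2, hm2⟩ := hS2.exists_isMinOn ⟨π1, hπ1, le_refl v⟩ c2.continuousOn
  have fin : ∀ g : BoundedContinuousFunction (Pl × Pl) ℝ≥0, ∫⁻ ω, g ω ∂(π2 : Measure (Pl × Pl)) ≠ ∞ := by
    intro g
    exact (BoundedContinuousFunction.lintegral_lt_top_of_nnreal _ g).ne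
  refine ⟨π2, hπ2.1, ?_, ?_, ?_, ?_⟩
  · intro π' h'
    rw [key hg1 _ hπ2.1, key hg1 _ h']
    exact hπ2.2.trans (hm1 (a := ⟨π', h'.prob⟩) h')
  · intro π' h' hle
    rw [key hg2 _ hπ2.1, key hg2 _ h']
    rw [key hg1 _ hπ2.1, key hg1 _ h'] at hle
    exact hm2 (a := ⟨π', h'.prob⟩) ⟨h', hle.trans hπ2.2⟩
  · rw [key hg1 _ hπ2.1]; exact fin _
  · rw [key hg2 _ hπ2.1]; exact fin _

open MeasureTheory ProbabilityTheory
open scoped ENNReal NNReal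

set_option maxHeartbeats 1000000 in
lemma theta_lemma {μ ν : Measure Pl} [IsProbabilityMeasure μ] {π : Measure (Pl × Pl)} (hπ : LexOpt μ ν π)
    (g : Pl × Pl → Pl) (hg : Measurable g) (Γ0 : Set (Pl × Pl)) (hΓ0 : MeasurableSet Γ0)
    (hΓ0' : π Γ0ᶜ = 0) (U V : ℕ → Set (Pl × Pl)) (hU : ∀ n, MeasurableSet (U n))
    (hV : ∀ n, MeasurableSet (V n))
    (H : ∀ ω ∈ Γ0, ∀ ω' ∈ Γ0, g ω = g ω' → (∃ n, ω ∈ U n ∧ ω' ∈ V n) →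
      cst1 (ω.1, ω'.2) + cst1 (ω'.1, ω.2) ≤ cst1 ω + cst1 ω' ∧
      (cst1 (ω.1, ω'.2) + cst1 (ω'.1, ω.2) = cst1 ω + cst1 ω' →
        cst2 (ω.1, ω'.2) + cst2 (ω'.1, ω.2) < cst2 ω + cst2 ω')) :
    ∃ Γ ⊆ Γ0, MeasurableSet Γ ∧ π Γᶜ = 0 ∧ ∀ ω ∈ Γ, ∀ ω' ∈ Γ, g ω = g ω' →
      ¬ ∃ n, ω ∈ U n ∧ ω' ∈ V n := by
  classical
  have := hπ.cpl.prob
  set κ : Kernel Pl (Pl × Pl) := condDistrib id g π with hκ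
  set η := π.map g with hη
  have : IsProbabilityMeasure η := Measure.isProbabilityMeasure_map hg.aemeasurable
  have hcomp : η ⊗ₘ κ = π.map (fun ω => (g ω, ω)) :=
    compProd_map_condDistrib aemeasurable_id
  set P := η ⊗ₘ (κ ×ₖ κ) with hP
  have f1 : P.map (fun z => (z.1, z.2.1)) = π.map (fun ω => (g ω, ω)) := by
    rw [← hcomp]
    have := Measure.compProd_map (μ := η) (κ := κ ×ₖ κ) measurable_fst
    rw [← Kernel.fst_eq, Kernel.fst_prod] at this
    rw [this]; rfl
  have f2 : P.map (fun z => (z.1, z.2.2)) = π.map (fun ω => (g ω, ω)) := by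
    rw [← hcomp]
    have := Measure.compProd_map (μ := η) (κ := κ ×ₖ κ) measurable_snd
    rw [← Kernel.snd_eq, Kernel.snd_prod] at this
    rw [this]; rfl
  have m1 : P.map (fun z => z.2.1) = π := by
    have := congrArg (Measure.map Prod.snd) f1
    rw [Measure.map_map (by fun_prop) (by fun_prop), Measure.map_map (by fun_prop) (by fun_prop)] at this
    exact this.trans Measure.map_id
  have m2 : P.map (fun z => z.2.2) = π := by
    have := congrArg (Measure.map Prod.snd) f2
    rw [Measure.map_map (by fun_prop) (by fun_prop), Measure.map_map (by fun_prop) (by fun_prop)] at this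
    exact this.trans Measure.map_id
  have hgr : MeasurableSet {q : Pl × (Pl × Pl) | q.1 = g q.2} :=
    measurableSet_eq_fun (by fun_prop) (by fun_prop)
  have hgae : ∀ᵐ q ∂(π.map (fun ω => (g ω, ω))), q.1 = g q.2 := by
    rw [ae_map_iff (by fun_prop) hgr]; exact Filter.Eventually.of_forall fun _ => rfl
  have g1 : ∀ᵐ z ∂P, z.1 = g z.2.1 := by
    rw [← f1, ae_map_iff (by fun_prop) hgr] at hgae; exact hgae
  have g2 : ∀ᵐ z ∂P, z.1 = g z.2.2 := by
    rw [← f2, ae_map_iff (by fun_prop) hgr] at hgae; exact hgae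
  have k0 : ∀ᵐ ω ∂π, ω ∈ Γ0 := hΓ0'
  have k1 : ∀ᵐ z ∂P, z.2.1 ∈ Γ0 := by
    rw [← m1, ae_map_iff (p := fun ω => ω ∈ Γ0) (by fun_prop) hΓ0] at k0; exact k0
  have k2 : ∀ᵐ z ∂P, z.2.2 ∈ Γ0 := by
    rw [← m2, ae_map_iff (p := fun ω => ω ∈ Γ0) (by fun_prop) hΓ0] at k0; exact k0
  set R : Set (Pl × (Pl × Pl) × (Pl × Pl)) := ⋃ n, {z | z.2.1 ∈ U n ∧ z.2.2 ∈ V n} with hR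
  have hRm : MeasurableSet R := by
    refine MeasurableSet.iUnion fun n => ?_
    exact (measurable_fst.comp measurable_snd (hU n)).inter (measurable_snd.comp measurable_snd (hV n))
  set F1 : Pl × (Pl × Pl) × (Pl × Pl) → Pl × Pl := fun z => if z ∈ R then (z.2.1.1, z.2.2.2) else z.2.1
  set F2 : Pl × (Pl × Pl) × (Pl × Pl) → Pl × Pl := fun z => if z ∈ R then (z.2.2.1, z.2.1.2) else z.2.2
  have hF1 : Measurable F1 := Measurable.ite hRm (by fun_prop) (by fun_prop)
  have hF2 : Measurable F2 := Measurable.ite hRm (by fun_prop) (by fun_prop)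
  set π' : Measure (Pl × Pl) := (2⁻¹ : ℝ≥0∞) • (P.map F1 + P.map F2) with hπ'
  have I' : ∀ h : Pl × Pl → ℝ≥0∞, Measurable h →
      ∫⁻ ω, h ω ∂π' = 2⁻¹ * ∫⁻ z, (h (F1 z) + h (F2 z)) ∂P := by
    intro h hh
    rw [hπ', lintegral_smul_measure, lintegral_add_measure, lintegral_map hh hF1,
      lintegral_map hh hF2, lintegral_add_left (by fun_prop), smul_eq_mul]
  have I : ∀ h : Pl × Pl → ℝ≥0∞, Measurable h →
      ∫⁻ ω, h ω ∂π = 2⁻¹ * ∫⁻ z, (h z.2.1 + h z.2.2) ∂P := by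
    intro h hh
    rw [lintegral_add_left (by fun_prop)]
    have a1 : ∫⁻ z, h z.2.1 ∂P = ∫⁻ ω, h ω ∂π := by
      conv_rhs => rw [← m1]
      rw [lintegral_map hh (by fun_prop)]
    have a2 : ∫⁻ z, h z.2.2 ∂P = ∫⁻ ω, h ω ∂π := by
      conv_rhs => rw [← m2]
      rw [lintegral_map hh (by fun_prop)]
    rw [a1, a2, ← two_mul, ← mul_assoc, ENNReal.inv_mul_cancel (by simp) (by simp), one_mul]
  have hcpl : IsCpl μ ν π' := by
    constructor
    · rw [← hπ.cpl.1]
      ext E hE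
      rw [← lintegral_indicator_one hE, ← lintegral_indicator_one hE,
        lintegral_map (measurable_one.indicator hE) measurable_fst,
        lintegral_map (measurable_one.indicator hE) measurable_fst,
        I' (fun a => E.indicator 1 a.1) ((measurable_one.indicator hE).comp measurable_fst),
        I (fun a => E.indicator 1 a.1) ((measurable_one.indicator hE).comp measurable_fst)]
      congr 2
      ext z
      by_cases hz : z ∈ R <;> simp [F1, F2, hz]
    · rw [← hπ.cpl.2]
      ext E hE
      rw [← lintegral_indicator_one hE, ← lintegral_indicator_one hE,
        lintegral_map (measurable_one.indicator hE) measurable_snd,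
        lintegral_map (measurable_one.indicator hE) measurable_snd,
        I' (fun a => E.indicator 1 a.2) ((measurable_one.indicator hE).comp measurable_snd),
        I (fun a => E.indicator 1 a.2) ((measurable_one.indicator hE).comp measurable_snd)]
      congr 2
      ext z
      by_cases hz : z ∈ R <;> simp [F1, F2, hz, add_comm]
  have mc1 : Measurable fun ω => ENNReal.ofReal (cst1 ω) := cst1_cont.measurable.ennreal_ofReal
  have mc2 : Measurable fun ω => ENNReal.ofReal (cst2 ω) := cst2_cont.measurable.ennreal_ofReal
  have hH : ∀ᵐ z ∂P, z ∈ R → cst1 (F1 z) + cst1 (F2 z) ≤ cst1 z.2.1 + cst1 z.2.2 ∧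
      (cst1 (F1 z) + cst1 (F2 z) = cst1 z.2.1 + cst1 z.2.2 →
        cst2 (F1 z) + cst2 (F2 z) < cst2 z.2.1 + cst2 z.2.2) := by
    filter_upwards [g1, g2, k1, k2] with z a1 a2 a3 a4 hz
    have := H z.2.1 a3 z.2.2 a4 (a1.symm.trans a2) (by simpa [hR] using hz)
    simpa [F1, F2, hz] using this
  have hN : ∀ z, z ∉ R → F1 z = z.2.1 ∧ F2 z = z.2.2 := by
    intro z hz; simp [F1, F2, hz]
  have le1 : ∀ᵐ z ∂P, ENNReal.ofReal (cst1 (F1 z)) + ENNReal.ofReal (cst1 (F2 z)) ≤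
      ENNReal.ofReal (cst1 z.2.1) + ENNReal.ofReal (cst1 z.2.2) := by
    filter_upwards [hH] with z hz
    by_cases hzR : z ∈ R
    · rw [← ENNReal.ofReal_add (cst1_nonneg _) (cst1_nonneg _), ← ENNReal.ofReal_add (cst1_nonneg _) (cst1_nonneg _)]
      exact ENNReal.ofReal_le_ofReal (hz hzR).1
    · rw [(hN z hzR).1, (hN z hzR).2]
  have half : ∀ {a b : ℝ≥0∞}, 2⁻¹ * a ≤ 2⁻¹ * b → a ≤ b := by
    intro a b h
    exact (ENNReal.mul_le_mul_iff_right (by simp) (by simp)).1 h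
  have halffin : ∀ {a : ℝ≥0∞}, 2⁻¹ * a ≠ ∞ → a ≠ ∞ := by
    rintro a h rfl
    exact h (ENNReal.mul_top (by simp))
  have T1 := hπ.opt1 π' hcpl
  have fin1 := hπ.fin1
  unfold Tot at T1 fin1
  rw [I _ mc1, I' _ mc1] at T1
  rw [I _ mc1] at fin1
  have eq1 := ae_eq_of_ae_le_of_lintegral_le le1
    (ne_top_of_le_ne_top (halffin fin1) (lintegral_mono_ae le1)) ((mc1.comp (measurable_fst.comp measurable_snd)).add (mc1.comp (measurable_snd.comp measurable_snd))).aemeasurable (half T1)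
  have lt2 : ∀ᵐ z ∂P, z ∈ R → ENNReal.ofReal (cst2 (F1 z)) + ENNReal.ofReal (cst2 (F2 z)) <
      ENNReal.ofReal (cst2 z.2.1) + ENNReal.ofReal (cst2 z.2.2) := by
    filter_upwards [hH, eq1] with z hz he hzR
    rw [← ENNReal.ofReal_add (cst1_nonneg _) (cst1_nonneg _), ← ENNReal.ofReal_add (cst1_nonneg _) (cst1_nonneg _),
      ENNReal.ofReal_eq_ofReal_iff (add_nonneg (cst1_nonneg _) (cst1_nonneg _)) (add_nonneg (cst1_nonneg _) (cst1_nonneg _))] at he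
    rw [← ENNReal.ofReal_add (cst2_nonneg _) (cst2_nonneg _), ← ENNReal.ofReal_add (cst2_nonneg _) (cst2_nonneg _)]
    have := (hz hzR).2 he
    exact (ENNReal.ofReal_lt_ofReal_iff_of_nonneg (add_nonneg (cst2_nonneg _) (cst2_nonneg _))).2 this
  have le2 : ∀ᵐ z ∂P, ENNReal.ofReal (cst2 (F1 z)) + ENNReal.ofReal (cst2 (F2 z)) ≤
      ENNReal.ofReal (cst2 z.2.1) + ENNReal.ofReal (cst2 z.2.2) := by
    filter_upwards [lt2] with z hz
    by_cases hzR : z ∈ R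
    · exact (hz hzR).le
    · rw [(hN z hzR).1, (hN z hzR).2]
  have T2 := hπ.opt2 π' hcpl (by
    unfold Tot
    rw [I _ mc1, I' _ mc1]
    exact mul_le_mul_right (lintegral_mono_ae le1) _)
  have fin2 := hπ.fin2
  unfold Tot at T2 fin2
  rw [I _ mc2, I' _ mc2] at T2
  rw [I _ mc2] at fin2
  have eq2 := ae_eq_of_ae_le_of_lintegral_le le2
    (ne_top_of_le_ne_top (halffin fin2) (lintegral_mono_ae le2)) ((mc2.comp (measurable_fst.comp measurable_snd)).add (mc2.comp (measurable_snd.comp measurable_snd))).aemeasurable (half T2)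
  have hR0 : ∀ n, ∀ᵐ w ∂η, κ w (U n) * κ w (V n) = 0 := by
    intro n
    have : P (Set.univ ×ˢ (U n ×ˢ V n)) = 0 := by
      rw [measure_eq_zero_iff_ae_notMem]
      filter_upwards [lt2, eq2] with z hz he hzR
      have : z ∈ R := Set.mem_iUnion.2 ⟨n, hzR.2⟩
      exact absurd he (hz this).ne
    rw [hP, Measure.compProd_apply_prod MeasurableSet.univ ((hU n).prod (hV n)),
      Measure.restrict_univ] at this
    simp only [Kernel.prod_apply_prod] at this
    exact (lintegral_eq_zero_iff ((κ.measurable_coe (hU n)).mul (κ.measurable_coe (hV n)))).1 this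
  set A := fun n => {ω | κ (g ω) (U n) * κ (g ω) (V n) = 0}
  have hA : ∀ n, MeasurableSet (A n) := fun n =>
    (((κ.measurable_coe (hU n)).mul (κ.measurable_coe (hV n))).comp hg) (measurableSet_singleton 0)
  have hA' : ∀ n, π (A n)ᶜ = 0 := fun n => by
    have := hR0 n
    exact (ae_map_iff hg.aemeasurable (((κ.measurable_coe (hU n)).mul (κ.measurable_coe (hV n))) (measurableSet_singleton 0))).1 this
  have hB : ∀ U : Set (Pl × Pl), MeasurableSet U → MeasurableSet {ω | κ (g ω) U = 0 ∧ ω ∈ U} ∧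
      π {ω | κ (g ω) U = 0 ∧ ω ∈ U} = 0 := by
    intro U hU
    have hm : MeasurableSet {w | κ w U = 0} := (κ.measurable_coe hU) (measurableSet_singleton 0)
    have h1 : {ω | κ (g ω) U = 0 ∧ ω ∈ U} = (fun ω => (g ω, ω)) ⁻¹' ({w | κ w U = 0} ×ˢ U) := rfl
    rw [h1]
    refine ⟨(by fun_prop : Measurable (fun ω => (g ω, ω))) (hm.prod hU), ?_⟩
    rw [← Measure.map_apply (by fun_prop) (hm.prod hU), ← hcomp, Measure.compProd_apply_prod hm hU]
    rw [setLIntegral_congr_fun (g := fun _ => 0) hm (fun w hw => hw)]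
    simp
  refine ⟨Γ0 ∩ ⋂ n, (A n ∩ {ω | κ (g ω) (U n) = 0 ∧ ω ∈ U n}ᶜ ∩ {ω | κ (g ω) (V n) = 0 ∧ ω ∈ V n}ᶜ),
    Set.inter_subset_left, hΓ0.inter (MeasurableSet.iInter fun n =>
      ((hA n).inter (hB _ (hU n)).1.compl).inter (hB _ (hV n)).1.compl), ?_, ?_⟩
  · simp only [Set.compl_inter, Set.compl_iInter, compl_compl]
    refine measure_union_null hΓ0' (measure_iUnion_null fun n => ?_)
    exact measure_union_null (measure_union_null (hA' n) (hB _ (hU n)).2) (hB _ (hV n)).2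
  · rintro ω ⟨_, h1⟩ ω' ⟨_, h2⟩ hgg ⟨n, hn1, hn2⟩
    obtain ⟨⟨a1, a2⟩, a3⟩ := Set.mem_iInter.1 h1 n
    obtain ⟨⟨b1, b2⟩, b3⟩ := Set.mem_iInter.1 h2 n
    rcases mul_eq_zero.1 a1 with h | h
    · exact a2 ⟨h, hn1⟩
    · rw [hgg] at h; exact b3 ⟨h, hn2⟩

open MeasureTheory ProbabilityTheory
open scoped ENNReal NNReal

lemma mul_ediam_add_le {s : Set ℝ} (hs : s.Nonempty) {c N M : ℝ≥0∞} (hM : M ≠ ∞)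
    (h : ∀ x ∈ s, ∀ y ∈ s, c * edist x y + N ≤ M) : c * Metric.ediam s + N ≤ M := by
  obtain ⟨x, hx⟩ := hs
  have hN : N ≤ M := le_trans le_add_self (h x hx x hx)
  have hN' : N ≠ ∞ := ne_top_of_le_ne_top hM hN
  refine add_le_of_le_tsub_right_of_le hN ?_
  rw [Metric.ediam]
  simp only [ENNReal.mul_iSup]
  refine iSup₂_le fun x hx => iSup₂_le fun y hy => ?_
  exact ENNReal.le_sub_of_add_le_right hN' (h x hx y hy)

/-- One dimensional covering lemma. -/
lemma cover1D {ι : Type*} (S : Set ι) (u v ζ : ι → ℝ) {c0 c1 : ℝ} (h0 : 0 ≤ c0) (h1 : 0 ≤ c1)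
    (H : ∀ a ∈ S, ∀ b ∈ S,
      (u a ≤ u b ∧ v a ≤ v b ∧ c0 * (u b - u a) + c1 * (v b - v a) ≤ ζ b - ζ a) ∨
      (u b ≤ u a ∧ v b ≤ v a ∧ c0 * (u a - u b) + c1 * (v a - v b) ≤ ζ a - ζ b)) :
    ENNReal.ofReal c0 * volume (u '' S) + ENNReal.ofReal c1 * volume (v '' S)
      ≤ volume (ζ '' S) := by
  set N : OuterMeasure ℝ :=
    { measureOf := fun E => ENNReal.ofReal c0 * volume (u '' (S ∩ ζ ⁻¹' E)) +
        ENNReal.ofReal c1 * volume (v '' (S ∩ ζ ⁻¹' E))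
      empty := by simp
      mono := by
        intro E F h
        gcongr
      iUnion_nat := by
        intro E _
        simp only [Set.preimage_iUnion, Set.inter_iUnion, Set.image_iUnion]
        refine (add_le_add (mul_le_mul_right (measure_iUnion_le _) _)
          (mul_le_mul_right (measure_iUnion_le _) _)).trans ?_
        rw [← ENNReal.tsum_mul_left, ← ENNReal.tsum_mul_left, ← ENNReal.tsum_add] } with hN
  have hle : ∀ a b : ℝ, N (Set.Ioc a b) ≤ ENNReal.ofReal (b - a) := by
    intro a b
    change ENNReal.ofReal c0 * volume (u '' (S ∩ ζ ⁻¹' Set.Ioc a b)) +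
        ENNReal.ofReal c1 * volume (v '' (S ∩ ζ ⁻¹' Set.Ioc a b)) ≤ _
    set T := S ∩ ζ ⁻¹' Set.Ioc a b with hT
    rcases T.eq_empty_or_nonempty with h | h
    · rw [h]; simp
    have hm : ∀ p ∈ T, ∀ q ∈ T, ∀ p' ∈ T, ∀ q' ∈ T,
        c0 * |u p - u q| + c1 * |v p' - v q'| ≤ b - a := by
      have hc : ∀ p ∈ T, ∀ q ∈ T, (c0 * u p ≤ c0 * u q ∧ c1 * v p ≤ c1 * v q ∧
          c0 * u q - c0 * u p + (c1 * v q - c1 * v p) ≤ ζ q - ζ p ∧ u p ≤ u q ∧ v p ≤ v q) ∨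
          (c0 * u q ≤ c0 * u p ∧ c1 * v q ≤ c1 * v p ∧
          c0 * u p - c0 * u q + (c1 * v p - c1 * v q) ≤ ζ p - ζ q ∧ u q ≤ u p ∧ v q ≤ v p) := by
        intro p hp q hq
        rcases H p hp.1 q hq.1 with ⟨x1, x2, x3⟩ | ⟨x1, x2, x3⟩
        · exact Or.inl ⟨mul_le_mul_of_nonneg_left x1 h0, mul_le_mul_of_nonneg_left x2 h1, by linarith, x1, x2⟩
        · exact Or.inr ⟨mul_le_mul_of_nonneg_left x1 h0, mul_le_mul_of_nonneg_left x2 h1, by linarith, x1, x2⟩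
      have main : ∀ p ∈ T, ∀ q ∈ T, ∀ p' ∈ T, ∀ q' ∈ T, u p ≤ u q → v p' ≤ v q' → 
          c0 * u p ≤ c0 * u q → c1 * v p' ≤ c1 * v q' →
          c0 * (u q - u p) + c1 * (v q' - v p') ≤ b - a := by
        intro p hp q hq p' hp' q' hq' e1 e2 e3 e4
        have z1 := hp.2.1; have z2 := hp.2.2; have z3 := hq.2.1; have z4 := hq.2.2
        have z5 := hp'.2.1; have z6 := hp'.2.2; have z7 := hq'.2.1; have z8 := hq'.2.2
        rcases hc p hp p' hp' with ⟨x1, x2, x3, -⟩ | ⟨x1, x2, x3, -⟩ <;>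
        rcases hc q hq q' hq' with ⟨y1, y2, y3, -⟩ | ⟨y1, y2, y3, -⟩ <;>
        rcases hc p hp q hq with ⟨w1, w2, w3, -⟩ | ⟨w1, w2, w3, -⟩ <;>
        rcases hc p' hp' q' hq' with ⟨v1, v2, v3, -⟩ | ⟨v1, v2, v3, -⟩ <;>
        rcases hc p hp q' hq' with ⟨t1, t2, t3, -⟩ | ⟨t1, t2, t3, -⟩ <;>
        rcases hc p' hp' q hq with ⟨s1, s2, s3, -⟩ | ⟨s1, s2, s3, -⟩ <;> linarith
      intro p hp q hq p' hp' q' hq'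
      rcases le_total (u p) (u q) with e1 | e1 <;> rcases le_total (v p') (v q') with e2 | e2
      · rw [abs_sub_comm, abs_of_nonneg (sub_nonneg.2 e1), abs_sub_comm, abs_of_nonneg (sub_nonneg.2 e2)]
        exact main p hp q hq p' hp' q' hq' e1 e2 (mul_le_mul_of_nonneg_left e1 h0) (mul_le_mul_of_nonneg_left e2 h1)
      · rw [abs_sub_comm, abs_of_nonneg (sub_nonneg.2 e1), abs_of_nonneg (sub_nonneg.2 e2)]
        exact main p hp q hq q' hq' p' hp' e1 e2 (mul_le_mul_of_nonneg_left e1 h0) (mul_le_mul_of_nonneg_left e2 h1)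
      · rw [abs_of_nonneg (sub_nonneg.2 e1), abs_sub_comm, abs_of_nonneg (sub_nonneg.2 e2)]
        exact main q hq p hp p' hp' q' hq' e1 e2 (mul_le_mul_of_nonneg_left e1 h0) (mul_le_mul_of_nonneg_left e2 h1)
      · rw [abs_of_nonneg (sub_nonneg.2 e1), abs_of_nonneg (sub_nonneg.2 e2)]
        exact main q hq p hp q' hq' p' hp' e1 e2 (mul_le_mul_of_nonneg_left e1 h0) (mul_le_mul_of_nonneg_left e2 h1)
    refine (add_le_add (mul_le_mul_right (Real.volume_le_diam _) _)
      (mul_le_mul_right (Real.volume_le_diam _) _)).trans ?_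
    refine mul_ediam_add_le (h.image u) ENNReal.ofReal_ne_top ?_
    rintro _ ⟨p, hp, rfl⟩ _ ⟨q, hq, rfl⟩
    rw [add_comm]
    refine mul_ediam_add_le (h.image v) ENNReal.ofReal_ne_top ?_
    rintro _ ⟨p', hp', rfl⟩ _ ⟨q', hq', rfl⟩
    rw [add_comm, edist_dist, edist_dist, Real.dist_eq, Real.dist_eq, ← ENNReal.ofReal_mul h0,
      ← ENNReal.ofReal_mul h1, ← ENNReal.ofReal_add (by positivity) (by positivity)]
    exact ENNReal.ofReal_le_ofReal (hm p hp q hq p' hp' q' hq')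
  have hNv : ∀ E, N E ≤ volume E := by
    intro E
    have : N ≤ StieltjesFunction.id.outer := by
      rw [StieltjesFunction.outer, OuterMeasure.le_ofFunction]
      intro s
      have hb : (botSet : Set ℝ) = ∅ := by ext x; exact ⟨fun h => (not_isBot x h).elim, fun h => h.elim⟩
      rw [StieltjesFunction.length, if_neg (not_isEmpty_of_nonempty ℝ), hb, Set.sdiff_empty]
      refine le_iInf fun a => le_iInf fun b => le_iInf fun hs => ?_
      exact (N.mono hs).trans (hle a b)
    rw [Real.volume_eq_stieltjes_id, StieltjesFunction.measure_def]
    exact this E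
  have := hNv (ζ '' S)
  change ENNReal.ofReal c0 * volume (u '' (S ∩ ζ ⁻¹' (ζ '' S))) +
        ENNReal.ofReal c1 * volume (v '' (S ∩ ζ ⁻¹' (ζ '' S))) ≤ _ at this
  rwa [Set.inter_eq_left.2 (Set.subset_preimage_image ζ S)] at this

open MeasureTheory ProbabilityTheory
open scoped ENNReal NNReal

lemma mono_ext {ι : Type*} (S : Set ι) (hS : S.Nonempty) (z x : ι → ℝ) {K C : ℝ} (hK : 0 ≤ K)
    (hC : ∀ s ∈ S, |x s| ≤ C)
    (H : ∀ a ∈ S, ∀ b ∈ S, z a ≤ z b → x a ≤ x b ∧ x b - x a ≤ K * (z b - z a)) :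
    ∃ X : ℝ → ℝ, Monotone X ∧ (∀ u v, u ≤ v → X v - X u ≤ K * (v - u)) ∧ ∀ s ∈ S, X (z s) = x s := by
  have : Nonempty S := hS.to_subtype
  have bdd : ∀ u, BddAbove (Set.range fun s : S => x s - K * max (z s - u) 0) := by
    intro u
    refine ⟨C, ?_⟩
    rintro _ ⟨s, rfl⟩
    have := (abs_le.1 (hC s s.2)).2
    have : 0 ≤ K * max (z s - u) 0 := by positivity
    simp only; linarith
  refine ⟨fun u => ⨆ s : S, (x s - K * max (z s - u) 0), ?_, ?_, ?_⟩
  · intro u v huv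
    refine ciSup_mono (bdd v) fun s => ?_
    have : max (z s - v) 0 ≤ max (z s - u) 0 := max_le_max (by linarith) le_rfl
    have := mul_le_mul_of_nonneg_left this hK
    linarith
  · intro u v huv
    rw [sub_le_iff_le_add']
    refine ciSup_le fun s => ?_
    refine le_trans ?_ (add_le_add_left (le_ciSup (bdd u) s) _)
    have : max (z s - u) 0 ≤ max (z s - v) 0 + (v - u) := by
      rcases max_cases (z s - u) 0 with h | h <;> rcases max_cases (z s - v) 0 with h' | h' <;> linarith
    have := mul_le_mul_of_nonneg_left this hK
    linarith
  · intro s hs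
    refine le_antisymm (ciSup_le fun s' => ?_) (le_trans (by simp) (le_ciSup (bdd (z s)) ⟨s, hs⟩))
    rcases le_total (z s') (z s) with h | h
    · rw [max_eq_right (by linarith)]; have := (H s' s'.2 s hs h).1; simpa using this
    · rw [max_eq_left (by linarith)]; have := (H s hs s' s'.2 h).2; linarith

lemma vol_stretch {X : ℝ → ℝ} (hX : Monotone X) {K : ℝ} (hK : 0 < K)
    (hL : ∀ u v, u ≤ v → X v - X u ≤ K * (v - u)) {Q : Set Pl} (hQ : MeasurableSet Q)
    {E : Set ℝ} (hE : MeasurableSet E) :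
    volume ((fun q : Pl => (X q.1, q.2)) '' (Q ∩ E ×ˢ Set.univ)) ≤
      ∫⁻ z in E, ENNReal.ofReal (deriv X z) * volume (Prod.mk z ⁻¹' Q) := by
  set D := {z | DifferentiableAt ℝ X z} with hD
  have hDm : MeasurableSet D := measurableSet_of_differentiableAt ℝ X
  have hD0 : volume Dᶜ = 0 := hX.ae_differentiableAt
  have hXD : volume (X '' Dᶜ) = 0 := by
    have := cover1D Dᶜ X (fun _ => 0) id (c0 := 1 / K) (c1 := 0) (by positivity) le_rfl (by
      intro a _ b _
      rcases le_total a b with h | h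
      · left; refine ⟨hX h, le_rfl, ?_⟩
        have := hL a b h
        simp only [id]
        rw [div_mul_eq_mul_div, zero_mul, add_zero, div_le_iff₀ hK]; linarith
      · right; refine ⟨hX h, le_rfl, ?_⟩
        have := hL b a h
        simp only [id]
        rw [div_mul_eq_mul_div, zero_mul, add_zero, div_le_iff₀ hK]; linarith)
    simp only [ENNReal.ofReal_zero, zero_mul, add_zero, Set.image_id, hD0, nonpos_iff_eq_zero,
      mul_eq_zero] at this
    rcases this with h | h
    · rw [ENNReal.ofReal_eq_zero] at h
      have : 0 < 1 / K := by positivity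
      linarith
    · exact h
  have hsub : (fun q : Pl => (X q.1, q.2)) '' (Q ∩ E ×ˢ Set.univ) ⊆
      (fun q : Pl => (X q.1, q.2)) '' (Q ∩ (E ∩ D) ×ˢ Set.univ) ∪ (X '' Dᶜ) ×ˢ Set.univ := by
    rintro _ ⟨q, ⟨hq1, hq2⟩, rfl⟩
    by_cases h : q.1 ∈ D
    · left; exact ⟨q, ⟨hq1, ⟨hq2.1, h⟩, trivial⟩, rfl⟩
    · right; exact ⟨⟨q.1, h, rfl⟩, trivial⟩
  have h0 : volume ((X '' Dᶜ) ×ˢ (Set.univ : Set ℝ)) = 0 := by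
    rw [Measure.volume_eq_prod, Measure.prod_prod, hXD, zero_mul]
  refine (measure_mono hsub).trans ((measure_union_le _ _).trans ?_)
  rw [h0, add_zero]
  have hQm : MeasurableSet (Q ∩ (E ∩ D) ×ˢ (Set.univ : Set ℝ)) := hQ.inter ((hE.inter hDm).prod MeasurableSet.univ)
  have key := addHaar_image_le_lintegral_abs_det_fderiv (μ := (volume : Measure Pl))
    (f := fun q : Pl => (X q.1, q.2))
    (f' := fun q => ((ContinuousLinearMap.toSpanSingleton ℝ (deriv X q.1)).prodMap (ContinuousLinearMap.id ℝ ℝ))) hQm (by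
      intro q hq
      have h1 : HasDerivAt X (deriv X q.1) q.1 := hq.2.1.2.hasDerivAt
      exact (HasFDerivAt.prodMap q h1.hasFDerivAt (hasFDerivAt_id q.2)).hasFDerivWithinAt)
  refine key.trans ?_
  have hdet : ∀ q : Pl, ENNReal.ofReal |((ContinuousLinearMap.toSpanSingleton ℝ (deriv X q.1)).prodMap (ContinuousLinearMap.id ℝ ℝ)).det| = ENNReal.ofReal (deriv X q.1) := by
    intro q
    have : ((ContinuousLinearMap.toSpanSingleton ℝ (deriv X q.1)).prodMap (ContinuousLinearMap.id ℝ ℝ)).det = deriv X q.1 := by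
      rw [ContinuousLinearMap.det, ContinuousLinearMap.coe_prodMap, LinearMap.det_prodMap]
      simp
    rw [this, abs_of_nonneg hX.deriv_nonneg]
  simp only [hdet]
  rw [← lintegral_indicator hQm, Measure.volume_eq_prod, lintegral_prod _ (by
    refine (Measurable.indicator ?_ hQm).aemeasurable
    exact ((measurable_deriv X).comp measurable_fst).ennreal_ofReal), ← lintegral_indicator hE]
  refine lintegral_mono fun z => ?_
  by_cases hz : z ∈ E
  · rw [Set.indicator_of_mem hz]
    rw [← lintegral_indicator_const (measurable_prodMk_left hQ)]
    refine lintegral_mono fun y => ?_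
    by_cases hy : (z, y) ∈ Q ∩ (E ∩ D) ×ˢ (Set.univ : Set ℝ)
    · rw [Set.indicator_of_mem hy, Set.indicator_of_mem (show y ∈ Prod.mk z ⁻¹' Q from hy.1)]
    · rw [Set.indicator_of_notMem hy]; exact zero_le
  · rw [Set.indicator_of_notMem hz]
    refine (lintegral_mono (g := fun _ => 0) fun y => ?_).trans (by simp)
    rw [Set.indicator_of_notMem]
    exact fun h => hz h.2.1.1

lemma amgm {t : ℝ} (h0 : 0 < t) (h1 : t < 1) (p q : ℝ≥0∞) :
    p ^ (1 - t) * q ^ t ≤ ENNReal.ofReal (1 - t) * p + ENNReal.ofReal t * q := by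
  rcases eq_or_ne p ∞ with rfl | hp
  · rw [ENNReal.mul_top (by simpa using h1)]; simp
  rcases eq_or_ne q ∞ with rfl | hq
  · rw [ENNReal.mul_top (by simpa using h0)]; simp
  lift p to ℝ≥0 using hp
  lift q to ℝ≥0 using hq
  have := NNReal.geom_mean_le_arith_mean2_weighted (1 - t).toNNReal t.toNNReal p q (by
    rw [← Real.toNNReal_add (by linarith) h0.le]; simp)
  rw [Real.coe_toNNReal _ (by linarith), Real.coe_toNNReal _ h0.le] at this
  rw [← ENNReal.coe_rpow_of_nonneg _ (by linarith), ← ENNReal.coe_rpow_of_nonneg _ h0.le,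
    ENNReal.ofReal, ENNReal.ofReal]
  exact_mod_cast this

open MeasureTheory ProbabilityTheory
open scoped ENNReal NNReal

set_option maxHeartbeats 1000000 in
lemma tri_compact {π : Measure (Pl × Pl)} {S : Set (Pl × Pl)} (hS : IsCompact S)
    {t : ℝ} (t0 : 0 < t) (t1 : t < 1) (Z : Pl × Pl → Pl)
    (hZ : ∀ ω ∈ S, (Z ω).1 = (1 - t) * ω.1.1 + t * ω.2.1)
    (ha : ∀ ω ∈ S, ∀ ω' ∈ S, ω.1.1 < ω'.1.1 → ω.2.1 ≤ ω'.2.1)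
    {A B α β : ℝ} (hA : 0 < A) (hB : 0 < B)
    (hb : ∀ ω ∈ S, ∀ ω' ∈ S, ω.1.1 = ω'.1.1 → ω.2.1 = ω'.2.1 →
      (ω.1.2 ≤ ω'.1.2 ∧ ω.2.2 ≤ ω'.2.2 ∧
        A * (1 - t) * (ω'.1.2 - ω.1.2) + B * t * (ω'.2.2 - ω.2.2) ≤ (Z ω').2 - (Z ω).2) ∨
      (ω'.1.2 ≤ ω.1.2 ∧ ω'.2.2 ≤ ω.2.2 ∧
        A * (1 - t) * (ω.1.2 - ω'.1.2) + B * t * (ω.2.2 - ω'.2.2) ≤ (Z ω).2 - (Z ω').2))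
    (hc0 : ∀ E, MeasurableSet E → π (S ∩ Prod.fst ⁻¹' E) ≤ ENNReal.ofReal α * volume E)
    (hc1 : ∀ E, MeasurableSet E → π (S ∩ Prod.snd ⁻¹' E) ≤ ENNReal.ofReal β * volume E) :
    ENNReal.ofReal A ^ (1 - t) * ENNReal.ofReal B ^ t * π S ≤
      ENNReal.ofReal α ^ (1 - t) * ENNReal.ofReal β ^ t * volume (Z '' S) := by
  rcases S.eq_empty_or_nonempty with hSe | hSn
  · rw [hSe]; simp
  have s0 : 0 < 1 - t := by linarith
  set zz : Pl × Pl → ℝ := fun ω => (1 - t) * ω.1.1 + t * ω.2.1 with hzz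
  have hzc : Continuous zz := by fun_prop
  have ord : ∀ ω ∈ S, ∀ ω' ∈ S, zz ω ≤ zz ω' → ω.1.1 ≤ ω'.1.1 ∧ ω.2.1 ≤ ω'.2.1 := by
    intro ω h ω' h' hz
    simp only [hzz] at hz
    constructor
    · by_contra! hc
      have := ha ω' h' ω h hc
      nlinarith
    · by_contra! hc
      have : ω'.1.1 ≤ ω.1.1 := by
        by_contra! hc'
        have := ha ω h ω' h' hc'
        linarith
      nlinarith
  obtain ⟨C, hC⟩ := hS.exists_bound_of_continuousOn (f := fun ω : Pl × Pl => ω.1.1) (by fun_prop)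
  obtain ⟨X0, m0, l0, e0⟩ := mono_ext S hSn zz (fun ω => ω.1.1) (K := 1 / (1 - t)) (by positivity) hC (by
    intro ω h ω' h' hz
    obtain ⟨p1, p2⟩ := ord ω h ω' h' hz
    refine ⟨p1, ?_⟩
    rw [div_mul_eq_mul_div, le_div_iff₀ s0]
    simp only [hzz]
    nlinarith)
  set X1 : ℝ → ℝ := fun u => (u - (1 - t) * X0 u) / t with hX1
  have e1 : ∀ ω ∈ S, X1 (zz ω) = ω.2.1 := by
    intro ω h
    have e := e0 ω h
    simp only [hX1, e]
    simp only [hzz]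
    field_simp; ring
  have m1 : Monotone X1 := by
    intro u v huv
    have := l0 u v huv
    rw [div_mul_eq_mul_div, le_div_iff₀ s0] at this
    simp only [hX1]
    exact div_le_div_of_nonneg_right (by linarith) t0.le
  have l1 : ∀ u v, u ≤ v → X1 v - X1 u ≤ 1 / t * (v - u) := by
    intro u v huv
    have := mul_le_mul_of_nonneg_left (m0 huv) s0.le
    simp only [hX1]
    rw [← sub_div, div_mul_eq_mul_div]
    exact div_le_div_of_nonneg_right (by linarith) t0.le
  set Q0 : Set Pl := (fun ω => (zz ω, ω.1.2)) '' S with hQ0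
  set Q1 : Set Pl := (fun ω => (zz ω, ω.2.2)) '' S with hQ1
  have Q0m : MeasurableSet Q0 := (hS.image (by fun_prop)).measurableSet
  have Q1m : MeasurableSet Q1 := (hS.image (by fun_prop)).measurableSet
  set φ0 : ℝ → ℝ≥0∞ := fun z => volume (Prod.mk z ⁻¹' Q0) with hφ0
  set φ1 : ℝ → ℝ≥0∞ := fun z => volume (Prod.mk z ⁻¹' Q1) with hφ1
  have φ0m : Measurable φ0 := measurable_measure_prodMk_left Q0m
  have φ1m : Measurable φ1 := measurable_measure_prodMk_left Q1m
  set h0 : ℝ → ℝ≥0∞ := fun z => ENNReal.ofReal α * (ENNReal.ofReal (deriv X0 z) * φ0 z)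
  set h1 : ℝ → ℝ≥0∞ := fun z => ENNReal.ofReal β * (ENNReal.ofReal (deriv X1 z) * φ1 z)
  have h0m : Measurable h0 := ((measurable_deriv X0).ennreal_ofReal.mul φ0m).const_mul _
  have h1m : Measurable h1 := ((measurable_deriv X1).ennreal_ofReal.mul φ1m).const_mul _
  have b0 : ∀ E, MeasurableSet E → π (S ∩ zz ⁻¹' E) ≤ ∫⁻ z in E, h0 z := by
    intro E hE
    rw [lintegral_const_mul (f := fun z => ENNReal.ofReal (deriv X0 z) * φ0 z) _ ((measurable_deriv X0).ennreal_ofReal.mul φ0m)]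
    refine le_trans ?_ (mul_le_mul_right (vol_stretch m0 (by positivity) l0 Q0m hE) _)
    rw [← measure_toMeasurable (μ := (volume : Measure Pl))]
    refine le_trans (measure_mono ?_) (hc0 _ (measurableSet_toMeasurable _ _))
    rintro ω ⟨hω, hωE⟩
    refine ⟨hω, subset_toMeasurable _ _ ⟨(zz ω, ω.1.2), ⟨⟨ω, hω, rfl⟩, hωE, trivial⟩, ?_⟩⟩
    simp only [e0 ω hω]
  have b1 : ∀ E, MeasurableSet E → π (S ∩ zz ⁻¹' E) ≤ ∫⁻ z in E, h1 z := by
    intro E hE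
    rw [lintegral_const_mul (f := fun z => ENNReal.ofReal (deriv X1 z) * φ1 z) _ ((measurable_deriv X1).ennreal_ofReal.mul φ1m)]
    refine le_trans ?_ (mul_le_mul_right (vol_stretch m1 (by positivity) l1 Q1m hE) _)
    rw [← measure_toMeasurable (μ := (volume : Measure Pl))]
    refine le_trans (measure_mono ?_) (hc1 _ (measurableSet_toMeasurable _ _))
    rintro ω ⟨hω, hωE⟩
    refine ⟨hω, subset_toMeasurable _ _ ⟨(zz ω, ω.2.2), ⟨⟨ω, hω, rfl⟩, hωE, trivial⟩, ?_⟩⟩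
    simp only [e1 ω hω]
  have self : ∀ a : ℝ≥0∞, a = a ^ (1 - t) * a ^ t := by
    intro a
    rw [← ENNReal.rpow_add_of_nonneg _ _ s0.le t0.le]; simp
  have b2 : π S ≤ ∫⁻ z, h0 z ^ (1 - t) * h1 z ^ t := by
    set P := {z | h0 z ≤ h1 z}
    have hP : MeasurableSet P := measurableSet_le h0m h1m
    rw [← lintegral_add_compl _ hP]
    have : S ⊆ (S ∩ zz ⁻¹' P) ∪ (S ∩ zz ⁻¹' Pᶜ) := by
      intro ω h
      by_cases hω : zz ω ∈ P
      · exact Or.inl ⟨h, hω⟩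
      · exact Or.inr ⟨h, hω⟩
    refine (measure_mono this).trans ((measure_union_le _ _).trans (add_le_add ?_ ?_))
    · refine (b0 P hP).trans (setLIntegral_mono' hP fun z hz => ?_)
      calc h0 z = h0 z ^ (1 - t) * h0 z ^ t := self _
        _ ≤ _ := by gcongr; exact hz
    · refine (b1 _ hP.compl).trans (setLIntegral_mono' hP.compl fun z hz => ?_)
      calc h1 z = h1 z ^ (1 - t) * h1 z ^ t := self _
        _ ≤ _ := by gcongr; exact (not_le.1 (show ¬ h0 z ≤ h1 z from hz)).le
  set T := toMeasurable volume (Z '' S)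
  have hT : volume (Z '' S) = ∫⁻ z, volume (Prod.mk z ⁻¹' T) := by
    rw [← measure_toMeasurable, Measure.volume_eq_prod,
      Measure.prod_apply (measurableSet_toMeasurable _ _)]
    rfl
  have sec : ∀ z, ENNReal.ofReal A ^ (1 - t) * ENNReal.ofReal B ^ t * (φ0 z ^ (1 - t) * φ1 z ^ t) ≤ volume (Prod.mk z ⁻¹' T) := by
    intro z
    have cov := cover1D (S ∩ zz ⁻¹' {z}) (fun ω => ω.1.2) (fun ω => ω.2.2) (fun ω => (Z ω).2)
      (c0 := A * (1 - t)) (c1 := B * t) (by positivity) (by positivity) (by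
        rintro ω ⟨h, hz⟩ ω' ⟨h', hz'⟩
        have hzz' : zz ω = zz ω' := by rw [hz, hz']
        have o1 := ord ω h ω' h' hzz'.le
        have o2 := ord ω' h' ω h hzz'.ge
        exact hb ω h ω' h' (le_antisymm o1.1 o2.1) (le_antisymm o1.2 o2.2))
    have i0 : Prod.mk z ⁻¹' Q0 ⊆ (fun ω : Pl × Pl => ω.1.2) '' (S ∩ zz ⁻¹' {z}) := by
      rintro y ⟨ω, h, hω⟩
      rw [Prod.mk.injEq] at hω
      exact ⟨ω, ⟨h, hω.1⟩, hω.2⟩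
    have i1 : Prod.mk z ⁻¹' Q1 ⊆ (fun ω : Pl × Pl => ω.2.2) '' (S ∩ zz ⁻¹' {z}) := by
      rintro y ⟨ω, h, hω⟩
      rw [Prod.mk.injEq] at hω
      exact ⟨ω, ⟨h, hω.1⟩, hω.2⟩
    have i2 : (fun ω => (Z ω).2) '' (S ∩ zz ⁻¹' {z}) ⊆ Prod.mk z ⁻¹' T := by
      rintro _ ⟨ω, ⟨h, hz⟩, rfl⟩
      refine subset_toMeasurable _ _ ⟨ω, h, ?_⟩
      refine Prod.ext ?_ rfl
      rw [hZ ω h]; exact hz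
    have c : ENNReal.ofReal (A * (1 - t)) * φ0 z + ENNReal.ofReal (B * t) * φ1 z ≤ volume (Prod.mk z ⁻¹' T) :=
      le_trans (add_le_add (mul_le_mul_right (measure_mono i0) _) (mul_le_mul_right (measure_mono i1) _))
        (cov.trans (measure_mono i2))
    refine le_trans ?_ c
    have := amgm t0 t1 (ENNReal.ofReal A * φ0 z) (ENNReal.ofReal B * φ1 z)
    rw [ENNReal.mul_rpow_of_nonneg _ _ s0.le, ENNReal.mul_rpow_of_nonneg _ _ t0.le] at this
    rw [ENNReal.ofReal_mul hA.le, ENNReal.ofReal_mul hB.le]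
    calc _ = _ := by ring
      _ ≤ _ := this
      _ = _ := by ring
  have dae : ∀ᵐ z : ℝ, ENNReal.ofReal (deriv X0 z) ^ (1 - t) * ENNReal.ofReal (deriv X1 z) ^ t ≤ 1 := by
    filter_upwards [m0.ae_differentiableAt] with z hz
    have hd : deriv X1 z = (1 - (1 - t) * deriv X0 z) / t :=
      (((hasDerivAt_id z).sub (hz.hasDerivAt.const_mul (1 - t))).div_const t).deriv
    refine (amgm t0 t1 _ _).trans ?_
    rw [← ENNReal.ofReal_mul s0.le, ← ENNReal.ofReal_mul t0.le, ← ENNReal.ofReal_add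
      (mul_nonneg s0.le m0.deriv_nonneg) (mul_nonneg t0.le m1.deriv_nonneg), hd]
    rw [mul_div_cancel₀ _ t0.ne']
    simp
  rw [hT]
  refine (mul_le_mul_right b2 _).trans ?_
  rw [← lintegral_const_mul (f := fun z => h0 z ^ (1 - t) * h1 z ^ t) _ ((h0m.pow_const _).mul (h1m.pow_const _)), ← lintegral_const_mul _ (measurable_measure_prodMk_left (measurableSet_toMeasurable _ _))]
  refine lintegral_mono_ae ?_
  filter_upwards [dae] with z hz
  simp only [h0, h1]
  simp only [ENNReal.mul_rpow_of_nonneg _ _ s0.le, ENNReal.mul_rpow_of_nonneg _ _ t0.le]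
  calc _ = (ENNReal.ofReal α ^ (1 - t) * ENNReal.ofReal β ^ t) *
      ((ENNReal.ofReal (deriv X0 z) ^ (1 - t) * ENNReal.ofReal (deriv X1 z) ^ t) *
      (ENNReal.ofReal A ^ (1 - t) * ENNReal.ofReal B ^ t * (φ0 z ^ (1 - t) * φ1 z ^ t))) := by ring
    _ ≤ (ENNReal.ofReal α ^ (1 - t) * ENNReal.ofReal β ^ t) * (1 * volume (Prod.mk z ⁻¹' T)) := by
      gcongr
      exact sec z
    _ = _ := by rw [one_mul]

/-- The triangular lemma in transformed coordinates. -/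
lemma tri_gen {π : Measure (Pl × Pl)} [IsFiniteMeasure π] {S : Set (Pl × Pl)} (hS : MeasurableSet S)
    (e : Pl ≃ᵐ Pl) (ep : MeasurePreserving e volume volume)
    {t : ℝ} (t0 : 0 < t) (t1 : t < 1) (Z : Pl × Pl → Pl)
    (hZ : ∀ ω ∈ S, (e (Z ω)).1 = (1 - t) * (e ω.1).1 + t * (e ω.2).1)
    (ha : ∀ ω ∈ S, ∀ ω' ∈ S, (e ω.1).1 < (e ω'.1).1 → (e ω.2).1 ≤ (e ω'.2).1)
    {A B α β : ℝ} (hA : 0 < A) (hB : 0 < B)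
    (hb : ∀ ω ∈ S, ∀ ω' ∈ S, (e ω.1).1 = (e ω'.1).1 → (e ω.2).1 = (e ω'.2).1 →
      ((e ω.1).2 ≤ (e ω'.1).2 ∧ (e ω.2).2 ≤ (e ω'.2).2 ∧
        A * (1 - t) * ((e ω'.1).2 - (e ω.1).2) + B * t * ((e ω'.2).2 - (e ω.2).2) ≤ (e (Z ω')).2 - (e (Z ω)).2) ∨
      ((e ω'.1).2 ≤ (e ω.1).2 ∧ (e ω'.2).2 ≤ (e ω.2).2 ∧
        A * (1 - t) * ((e ω.1).2 - (e ω'.1).2) + B * t * ((e ω.2).2 - (e ω'.2).2) ≤ (e (Z ω)).2 - (e (Z ω')).2))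
    (hc0 : ∀ E, MeasurableSet E → π (S ∩ Prod.fst ⁻¹' E) ≤ ENNReal.ofReal α * volume E)
    (hc1 : ∀ E, MeasurableSet E → π (S ∩ Prod.snd ⁻¹' E) ≤ ENNReal.ofReal β * volume E) :
    ENNReal.ofReal A ^ (1 - t) * ENNReal.ofReal B ^ t * π S ≤
      ENNReal.ofReal α ^ (1 - t) * ENNReal.ofReal β ^ t * volume (Z '' S) := by
  set ee : Pl × Pl ≃ᵐ Pl × Pl := e.prodCongr e with hee
  set π' := π.map ee with hπ'
  have : IsFiniteMeasure π' := by rw [hπ']; infer_instance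
  set S' := ee '' S with hS'
  have hS'm : MeasurableSet S' := (MeasurableEquiv.measurableSet_image ee).2 hS
  have hpi : ∀ E, π' E = π (ee ⁻¹' E) := fun E => ee.map_apply E
  have hpS : π' S' = π S := by rw [hpi, hS', ee.injective.preimage_image]
  have ev : ∀ E, volume (e ⁻¹' E) = volume E := fun E => ep.measure_preimage_equiv E
  have main : ∀ K ⊆ S', IsCompact K → ENNReal.ofReal A ^ (1 - t) * ENNReal.ofReal B ^ t * π' K ≤
      ENNReal.ofReal α ^ (1 - t) * ENNReal.ofReal β ^ t * volume (Z '' S) := by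
    intro K hK hKc
    have hin : ∀ η ∈ K, ee.symm η ∈ S := by
      intro η hη
      obtain ⟨ω, hω, rfl⟩ := hK hη
      simpa using hω
    have h1 : ∀ η : Pl × Pl, e (ee.symm η).1 = η.1 := fun η => e.apply_symm_apply η.1
    have h2 : ∀ η : Pl × Pl, e (ee.symm η).2 = η.2 := fun η => e.apply_symm_apply η.2
    have := tri_compact (π := π') hKc t0 t1 (fun η => e (Z (ee.symm η))) (by
        intro η hη
        have := hZ _ (hin η hη)
        rwa [h1, h2] at this) (by
        intro η hη η' hη' h
        have := ha _ (hin η hη) _ (hin η' hη')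
        rw [h1, h2, h1, h2] at this
        exact this h) hA hB (α := α) (β := β) (by
        intro η hη η' hη' x1 x2
        have := hb _ (hin η hη) _ (hin η' hη')
        rw [h1, h2, h1, h2] at this
        exact this x1 x2) (by
        intro E hE
        rw [hpi]
        refine le_trans (measure_mono ?_) ((hc0 (e ⁻¹' E) (e.measurable hE)).trans ?_)
        · rintro ω ⟨hω, hωE⟩
          refine ⟨?_, hωE⟩
          have := hin _ hω
          simpa using this
        · rw [ev]) (by
        intro E hE
        rw [hpi]
        refine le_trans (measure_mono ?_) ((hc1 (e ⁻¹' E) (e.measurable hE)).trans ?_)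
        · rintro ω ⟨hω, hωE⟩
          refine ⟨?_, hωE⟩
          have := hin _ hω
          simpa using this
        · rw [ev])
    refine this.trans (mul_le_mul_right ?_ _)
    rw [← ev]
    refine measure_mono ?_
    rintro z ⟨η, hη, hz⟩
    exact ⟨_, hin η hη, e.injective hz⟩
  rw [← hpS, hS'm.measure_eq_iSup_isCompact_of_ne_top (measure_ne_top _ _)]
  simp only [ENNReal.mul_iSup]
  exact iSup_le fun K => iSup_le fun hK => iSup_le fun hc => main K hK hc

open MeasureTheory ProbabilityTheory
open scoped ENNReal NNReal

/-- Abstract properties of the profile function. -/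
structure GoodF (f : ℝ → ℝ) (k : ℝ) : Prop where
  k0 : 0 < k
  k1 : k < 1 / 1000
  cont : Continuous f
  pos : ∀ x, 0 < f x
  mono : ∀ x y, x ≤ y → f x ≤ f y
  lip : ∀ x y, x ≤ y → f y - f x ≤ k * (y - x)
  conv : ∀ t, 0 ≤ t → t ≤ 1 → ∀ x y, f ((1 - t) * x + t * y) ≤ (1 - t) * f x + t * f y
  conc : ∀ t, 0 ≤ t → t ≤ 1 → ∀ x y,
    (1 - t) * f x + t * f y ≤ f ((1 - t) * x + t * y) + t * (1 - t) * (y - x) ^ 2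
  up : ∀ x ≤ 1, f x ≤ 3 * k

lemma goodF_of {ε k : ℝ} (h1 : 0 < ε) (h2 : ε < k) (h3 : k < 1 / 1000) {φ : ℝ → ℝ}
    (hc : Continuous φ) (p0 : ∀ x, 0 ≤ φ x) (p1 : ∀ x, φ x ≤ 1)
    (hs : ∀ x, x ∉ Set.Icc (-k) k → φ x = 0) (hi : (∫ x, φ x) = k) {f f' : ℝ → ℝ}
    (hf : ∀ x, HasDerivAt f (f' x) x) (hf' : ∀ x, HasDerivAt f' (φ x) x)
    (e1 : f' (-1) = 0) (e2 : f (-1) = ε) : GoodF f k := by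
  have k0 : 0 < k := h1.trans h2
  have hint : Integrable φ := by
    by_contra h
    rw [integral_undef h] at hi
    exact k0.ne hi
  have m' : Monotone f' := monotone_of_hasDerivAt_nonneg hf' p0
  have ftc : ∀ a b, f' b - f' a = ∫ x in a..b, φ x := fun a b =>
    (intervalIntegral.integral_eq_sub_of_hasDerivAt (fun x _ => hf' x) (hc.intervalIntegrable _ _)).symm
  have f'up : ∀ x, f' x ≤ k := by
    intro x
    rcases le_total x (-1) with h | h
    · exact (m' h).trans (by rw [e1]; exact k0.le)
    · have := ftc (-1) x
      rw [intervalIntegral.integral_of_le h, e1, sub_zero] at this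
      rw [this, ← hi]
      exact setIntegral_le_integral hint (Filter.Eventually.of_forall p0)
  have f'nn : ∀ x, 0 ≤ f' x := by
    intro x
    rcases le_total x (-1) with h | h
    · have := ftc x (-1)
      rw [intervalIntegral.integral_of_le h, e1, setIntegral_congr_fun (g := fun _ => 0) measurableSet_Ioc (by
        intro y hy
        exact hs y (fun h => by have := h.1; have := hy.2; linarith))] at this
      simp at this
      linarith
    · rw [← e1]; exact m' h
  have fm : Monotone f := monotone_of_hasDerivAt_nonneg hf f'nn
  have lipm : Monotone fun x => k * x - f x :=
    monotone_of_hasDerivAt_nonneg (f' := fun x => k * 1 - f' x)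
      (fun x => ((hasDerivAt_id x).const_mul k).sub (hf x)) (fun x => by
        have := f'up x
        change 0 ≤ k * 1 - f' x
        linarith)
  have hd : deriv f = f' := by ext x; exact (hf x).deriv
  have cv : ConvexOn ℝ Set.univ f := Monotone.convexOn_univ_of_deriv
    (fun x => (hf x).differentiableAt) (by rw [hd]; exact m')
  have hg : ∀ x, HasDerivAt (fun x => x ^ 2 - f x) (2 * x - f' x) x := fun x => by
    have h := (hasDerivAt_pow 2 x).sub (hf x)
    have e : ((2 : ℕ) : ℝ) * x ^ (2 - 1) - f' x = 2 * x - f' x := by norm_num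
    rw [e] at h
    exact h
  have cc : ConvexOn ℝ Set.univ (fun x => x ^ 2 - f x) := Monotone.convexOn_univ_of_deriv
    (fun x => (hg x).differentiableAt) (by
      have : deriv (fun x => x ^ 2 - f x) = fun x => 2 * x - f' x := by ext x; exact (hg x).deriv
      rw [this]
      exact monotone_of_hasDerivAt_nonneg (f' := fun x => 2 * 1 - φ x)
        (fun x => ((hasDerivAt_id x).const_mul 2).sub (hf' x)) (fun x => by
          have := p1 x
          change 0 ≤ 2 * 1 - φ x
          linarith))
  have flow : ∀ x, ε ≤ f x := by
    intro x
    rcases le_total x (-1) with h | h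
    · -- on the left of `-1` the function is constant
      have hz : ∀ y ≤ -1, f' y = 0 := fun y hy => le_antisymm (by rw [← e1]; exact m' hy) (f'nn y)
      have : ∫ y in x..(-1), f' y = f (-1) - f x :=
        intervalIntegral.integral_eq_sub_of_hasDerivAt (fun y _ => hf y)
          ((continuous_iff_continuousAt.2 fun y => (hf' y).continuousAt).intervalIntegrable _ _)
      rw [intervalIntegral.integral_of_le h, setIntegral_congr_fun (g := fun _ => 0) measurableSet_Ioc (by
        intro y hy; exact hz y hy.2)] at this
      simp at this
      linarith
    · rw [← e2]; exact fm h
  refine ⟨k0, h3, continuous_iff_continuousAt.2 fun y => (hf y).continuousAt,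
    fun x => h1.trans_le (flow x), fun x y h => fm h, ?_, ?_, ?_, ?_⟩
  · intro x y h
    have := lipm h
    simp only at this
    linarith
  · intro t t0 t1 x y
    exact cv.2 trivial trivial (by linarith) t0 (by ring)
  · intro t t0 t1 x y
    have := cc.2 (Set.mem_univ x) (Set.mem_univ y) (show 0 ≤ 1 - t by linarith) t0 (by ring)
    simp only [smul_eq_mul] at this
    nlinarith
  · intro x hx
    have a1 := fm hx
    have := lipm (show (-1 : ℝ) ≤ 1 by norm_num)
    simp only at this
    linarith

/-- Interpolated abscissa. -/
def xt (t x x' : ℝ) : ℝ := (1 - t) * x + t * x'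
noncomputable def thS (dx dy : ℝ) : ℝ := max 0 (min 1 (2 - 2 * (|dy| / |dx|)))
/-- Proportional interpolation. -/
noncomputable def At (f : ℝ → ℝ) (t x y x' y' : ℝ) : ℝ :=
  f (xt t x x') * xt t (y / f x) (y' / f x')
noncomputable def Yt (f : ℝ → ℝ) (t x y x' y' : ℝ) : ℝ :=
  xt t y y' + thS (x' - x) (y' - y) * (At f t x y x' y' - xt t y y')
noncomputable def Mt (f : ℝ → ℝ) (t : ℝ) (ω : Pl × Pl) : Pl :=
  (xt t ω.1.1 ω.2.1, Yt f t ω.1.1 ω.1.2 ω.2.1 ω.2.2)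

lemma thS_nonneg (a b : ℝ) : 0 ≤ thS a b := le_max_left _ _
lemma thS_le_one (a b : ℝ) : thS a b ≤ 1 := max_le zero_le_one (min_le_left _ _)
lemma thS_mul_le (a b : ℝ) : thS a b * |a| ≤ 2 * max 0 (|a| - |b|) := by
  rcases eq_or_ne a 0 with rfl | ha
  · simp
  have h : 0 < |a| := abs_pos.2 ha
  have e : (2 - 2 * (|b| / |a|)) * |a| = 2 * (|a| - |b|) := by field_simp
  have : thS a b ≤ max 0 (2 - 2 * (|b| / |a|)) := max_le_max le_rfl (min_le_right _ _)
  refine (mul_le_mul_of_nonneg_right this h.le).trans ?_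
  rw [max_mul_of_nonneg _ _ h.le, e, zero_mul]
  apply max_le
  · have := le_max_left 0 (|a| - |b|); linarith
  · have := le_max_right 0 (|a| - |b|); linarith
lemma thS_eq_zero {a b : ℝ} (ha : a ≠ 0) (h : |a| ≤ |b|) : thS a b = 0 := by
  have h0 : 0 < |a| := abs_pos.2 ha
  have : 1 ≤ |b| / |a| := by rwa [le_div_iff₀ h0, one_mul]
  rw [thS, max_eq_left]
  exact (min_le_right _ _).trans (by linarith)
lemma thS_eq_one {a b : ℝ} (h : 2 * |b| ≤ |a|) : thS a b = 1 := by
  rcases eq_or_ne a 0 with rfl | ha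
  · simp [thS]
  have h0 : 0 < |a| := abs_pos.2 ha
  have : |b| / |a| ≤ 1 / 2 := by rw [div_le_iff₀ h0]; linarith
  rw [thS, min_eq_left (by linarith)]; simp
lemma thS_mid {a b : ℝ} (h1 : |a| ≤ 2 * |b|) (h2 : |b| ≤ |a|) (ha : a ≠ 0) :
    thS a b = 2 - 2 * (|b| / |a|) := by
  have h0 : 0 < |a| := abs_pos.2 ha
  have : 1 / 2 ≤ |b| / |a| := by rw [le_div_iff₀ h0]; linarith
  have : |b| / |a| ≤ 1 := by rw [div_le_iff₀ h0]; linarith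
  rw [thS, min_eq_right (by linarith), max_eq_right (by linarith)]

section

lemma Mt_meas {f : ℝ → ℝ} {k : ℝ} (hf : GoodF f k) (t : ℝ) : Measurable (Mt f t) := by
  have := hf.cont.measurable
  unfold Mt Yt At xt thS
  fun_prop

lemma Mt_zero {f : ℝ → ℝ} {k : ℝ} (hf : GoodF f k) (ω : Pl × Pl) : Mt f 0 ω = ω.1 := by
  have := (hf.pos ω.1.1).ne'
  ext
  · simp [Mt, xt]
  · simp only [Mt, Yt, At, xt, sub_zero, one_mul, zero_mul, add_zero]
    rw [mul_div_cancel₀ _ this]; ring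

lemma Mt_one {f : ℝ → ℝ} {k : ℝ} (hf : GoodF f k) (ω : Pl × Pl) : Mt f 1 ω = ω.2 := by
  have := (hf.pos ω.2.1).ne'
  ext
  · simp [Mt, xt]
  · simp only [Mt, Yt, At, xt, sub_self, one_mul, zero_mul, zero_add]
    rw [mul_div_cancel₀ _ this]; ring

lemma f_lip {f : ℝ → ℝ} {k : ℝ} (hf : GoodF f k) (x y : ℝ) : |f y - f x| ≤ k * |y - x| := by
  rcases le_total x y with h | h
  · rw [abs_of_nonneg (sub_nonneg.2 (hf.mono _ _ h)), abs_of_nonneg (sub_nonneg.2 h)]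
    exact hf.lip _ _ h
  · rw [abs_sub_comm, abs_sub_comm y, abs_of_nonneg (sub_nonneg.2 (hf.mono _ _ h)), abs_of_nonneg (sub_nonneg.2 h)]
    exact hf.lip _ _ h

lemma f_between {f : ℝ → ℝ} {k : ℝ} (hf : GoodF f k) {s : ℝ} (s0 : 0 ≤ s) (s1 : s ≤ 1) (x x' : ℝ) :
    (f x ≤ f (xt s x x') ∧ f (xt s x x') ≤ f x') ∨ (f x' ≤ f (xt s x x') ∧ f (xt s x x') ≤ f x) := by
  unfold xt
  rcases le_total x x' with h | h
  · left; constructor <;> apply hf.mono <;> nlinarith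
  · right; constructor <;> apply hf.mono <;> nlinarith

lemma At_speed {f : ℝ → ℝ} {k : ℝ} (hf : GoodF f k) {s t x y x' y' : ℝ} (s0 : 0 ≤ s) (s1 : s ≤ 1) (t0 : 0 ≤ t) (t1 : t ≤ 1)
    (hy0 : 0 ≤ y) (hy1 : y ≤ f x) (hy0' : 0 ≤ y') (hy1' : y' ≤ f x') :
    |At f t x y x' y' - At f s x y x' y' - (t - s) * (y' - y)| ≤ 2 * k * |x' - x| * |t - s| := by
  have p0 := hf.pos x
  have p1 := hf.pos x'
  set u := y / f x with hu
  set u' := y' / f x' with hu'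
  have ey : y = f x * u := by rw [hu]; field_simp
  have ey' : y' = f x' * u' := by rw [hu']; field_simp
  have u0 : 0 ≤ u := by positivity
  have u0' : 0 ≤ u' := by positivity
  have u1 : u ≤ 1 := by rw [hu, div_le_one p0]; exact hy1
  have u1' : u' ≤ 1 := by rw [hu', div_le_one p1]; exact hy1'
  have e : At f t x y x' y' - At f s x y x' y' - (t - s) * (y' - y) =
      (f (xt t x x') - f (xt s x x')) * xt t u u' +
      (t - s) * ((f (xt s x x') - f x') * u' - (f (xt s x x') - f x) * u) := by
    rw [ey, ey']
    simp only [At, xt, mul_div_cancel_left₀ _ p0.ne', mul_div_cancel_left₀ _ p1.ne']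
    ring
  have w0 : 0 ≤ xt t u u' := by unfold xt; nlinarith
  have w1 : xt t u u' ≤ 1 := by unfold xt; nlinarith
  have b1 : |(f (xt t x x') - f (xt s x x')) * xt t u u'| ≤ k * |x' - x| * |t - s| := by
    rw [abs_mul, abs_of_nonneg w0]
    have := f_lip hf (xt s x x') (xt t x x')
    have e : xt t x x' - xt s x x' = (x' - x) * (t - s) := by unfold xt; ring
    rw [e, abs_mul] at this
    calc _ ≤ |f (xt t x x') - f (xt s x x')| * 1 := by gcongr
      _ ≤ _ := by linarith
  have b2 : |(f (xt s x x') - f x') * u' - (f (xt s x x') - f x) * u| ≤ k * |x' - x| := by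
    have l := abs_le.1 (f_lip hf x x')
    rw [abs_le]
    rcases f_between hf s0 s1 x x' with ⟨h1, h2⟩ | ⟨h1, h2⟩ <;> constructor <;> nlinarith
  rw [e]
  refine (abs_add_le _ _).trans ?_
  rw [abs_mul (t - s)]
  have := mul_le_mul_of_nonneg_left b2 (abs_nonneg (t - s))
  linarith

lemma Yt_speed {f : ℝ → ℝ} {k : ℝ} (hf : GoodF f k) {s t x y x' y' : ℝ} (s0 : 0 ≤ s) (s1 : s ≤ 1) (t0 : 0 ≤ t) (t1 : t ≤ 1)
    (hy0 : 0 ≤ y) (hy1 : y ≤ f x) (hy0' : 0 ≤ y') (hy1' : y' ≤ f x') :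
    |Yt f t x y x' y' - Yt f s x y x' y'| ≤
      |t - s| * (|y' - y| + 4 * k * max 0 (|x' - x| - |y' - y|)) := by
  have h := At_speed hf s0 s1 t0 t1 hy0 hy1 hy0' hy1'
  have e : Yt f t x y x' y' - Yt f s x y x' y' = (t - s) * (y' - y) +
      thS (x' - x) (y' - y) * (At f t x y x' y' - At f s x y x' y' - (t - s) * (y' - y)) := by
    simp only [Yt, xt]; ring
  rw [e]
  refine (abs_add_le _ _).trans ?_
  rw [abs_mul, abs_mul, abs_of_nonneg (thS_nonneg _ _)]
  have h1 := mul_le_mul_of_nonneg_left h (thS_nonneg (x' - x) (y' - y))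
  have h2 := mul_le_mul_of_nonneg_right (thS_mul_le (x' - x) (y' - y))
    (show 0 ≤ 2 * k * |t - s| by have := hf.k0; positivity)
  linarith

end

open MeasureTheory ProbabilityTheory
open scoped ENNReal NNReal

/-- The space. -/
def XX (f : ℝ → ℝ) : Set Pl := {p : ℝ × ℝ | p.1 ∈ Set.Icc (-1 : ℝ) 1 ∧ 0 ≤ p.2 ∧ p.2 ≤ f p.1}

lemma thS_lip (a b b' : ℝ) : thS a b ≤ thS a b' + 2 * (|b' - b| / |a|) := by
  have h : |b'| / |a| - |b| / |a| ≤ |b' - b| / |a| := by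
    rw [← sub_div]
    exact div_le_div_of_nonneg_right (abs_sub_abs_le_abs_sub _ _) (abs_nonneg _)
  have h0 : 0 ≤ |b' - b| / |a| := by positivity
  unfold thS
  refine max_le ?_ ?_
  · have := le_max_left 0 (min 1 (2 - 2 * (|b'| / |a|))); linarith
  · have h2 : min 1 (2 - 2 * (|b| / |a|)) ≤ min 1 (2 - 2 * (|b'| / |a|)) + 2 * (|b' - b| / |a|) := by
      rw [← min_add_add_right]
      refine min_le_min (by linarith) (by linarith)
    have := le_max_right 0 (min 1 (2 - 2 * (|b'| / |a|)))
    linarith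

lemma ratio_aux {k D a b c : ℝ} (k0 : 0 < k) (k1 : k < 1 / 1000) (ha : 0 < a) (hb : 0 < b)
    (hF : D ≤ 2 * a ∨ D ≤ 2 * b) (h1 : -(k * D) ≤ b - a) (h2 : b - a ≤ k * D)
    (hc : min a b ≤ c) : (1 - 3 * k) * a ≤ c ∧ (1 - 3 * k) * b ≤ c := by
  have hka := mul_pos k0 ha
  have hkb := mul_pos k0 hb
  have hD : k * D ≤ 2 * (k * a) ∨ k * D ≤ 2 * (k * b) := by
    rcases hF with h | h
    · left; have := mul_le_mul_of_nonneg_left h k0.le; linarith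
    · right; have := mul_le_mul_of_nonneg_left h k0.le; linarith
  rcases le_total a b with h | h
  · rw [min_eq_left h] at hc
    have := mul_le_mul_of_nonneg_left h k0.le
    rcases hD with hD | hD <;> constructor <;> linarith
  · rw [min_eq_right h] at hc
    have := mul_le_mul_of_nonneg_left h k0.le
    rcases hD with hD | hD <;> constructor <;> linarith

section

lemma XX_compact {f : ℝ → ℝ} {k : ℝ} (hf : GoodF f k) : IsCompact (XX f) := by
  have hc := hf.cont
  have h1 : IsClosed (XX f) := by
    have : XX f = (Prod.fst ⁻¹' Set.Icc (-1 : ℝ) 1) ∩ ({p | 0 ≤ p.2} ∩ {p | p.2 ≤ f p.1}) := rfl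
    rw [this]
    exact (isClosed_Icc.preimage continuous_fst).inter
      ((isClosed_le continuous_const continuous_snd).inter (isClosed_le continuous_snd (by fun_prop)))
  refine (isCompact_Icc.prod isCompact_Icc).of_isClosed_subset (s := Set.Icc (-1 : ℝ) 1 ×ˢ Set.Icc 0 (3 * k)) h1 ?_
  rintro p ⟨h, h2, h3⟩
  exact ⟨h, h2, h3.trans (hf.up _ h.2)⟩

lemma AL_bound {f : ℝ → ℝ} {k : ℝ} (hf : GoodF f k) {t x y x' y' : ℝ} (t0 : 0 ≤ t) (t1 : t ≤ 1)
    (hy0 : 0 ≤ y) (hy1 : y ≤ f x) (hy0' : 0 ≤ y') (hy1' : y' ≤ f x') :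
    |At f t x y x' y' - xt t y y'| ≤ 2 * k * |x' - x| * t ∧
    |At f t x y x' y' - xt t y y'| ≤ 2 * k * |x' - x| * (1 - t) := by
  have a := At_speed hf le_rfl zero_le_one t0 t1 hy0 hy1 hy0' hy1'
  have b := At_speed hf zero_le_one le_rfl t0 t1 hy0 hy1 hy0' hy1'
  have e0 : At f 0 x y x' y' = y := by
    simp only [At, xt]; have := (hf.pos x).ne'; simp; field_simp
  have e1 : At f 1 x y x' y' = y' := by
    simp only [At, xt]; have := (hf.pos x').ne'; simp; field_simp
  rw [e0, sub_zero, abs_of_nonneg t0] at a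
  rw [e1, abs_sub_comm t, abs_of_nonneg (sub_nonneg.2 t1)] at b
  constructor
  · convert a using 2; simp only [xt]; ring
  · convert b using 2; simp only [xt]; ring

lemma Mt_mem {f : ℝ → ℝ} {k : ℝ} (hf : GoodF f k) {t : ℝ} (t0 : 0 ≤ t) (t1 : t ≤ 1) {ω : Pl × Pl} (h1 : ω.1 ∈ XX f) (h2 : ω.2 ∈ XX f) :
    Mt f t ω ∈ XX f := by
  obtain ⟨⟨x, y⟩, ⟨x', y'⟩⟩ := ω
  obtain ⟨⟨a1, a2⟩, hy0, hy1⟩ := h1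
  obtain ⟨⟨b1, b2⟩, hy0', hy1'⟩ := h2
  simp only at a1 a2 hy0 hy1 b1 b2 hy0' hy1'
  have p0 := hf.pos x
  have p1 := hf.pos x'
  have pt := hf.pos (xt t x x')
  have s0 : 0 ≤ 1 - t := by linarith
  refine ⟨⟨?_, ?_⟩, ?_, ?_⟩ <;> simp only [Mt]
  · unfold xt; nlinarith
  · unfold xt; nlinarith
  all_goals
    have hA0 : 0 ≤ At f t x y x' y' := by unfold At; unfold xt at *; positivity
    have hA1 : At f t x y x' y' ≤ f (xt t x x') := by
      have : xt t (y / f x) (y' / f x') ≤ 1 := by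
        have i1 : y / f x ≤ 1 := by rw [div_le_one p0]; exact hy1
        have i2 : y' / f x' ≤ 1 := by rw [div_le_one p1]; exact hy1'
        unfold xt; nlinarith
      unfold At; nlinarith
    have hL0 : 0 ≤ xt t y y' := by unfold xt; positivity
    have ht0 := thS_nonneg (x' - x) (y' - y)
    have ht1 := thS_le_one (x' - x) (y' - y)
  · unfold Yt; nlinarith
  · rcases le_total (2 * |y' - y|) |x' - x| with h | h
    · unfold Yt; rw [thS_eq_one h]; linarith
    · have hk := hf.k1
      have hk0 := hf.k0
      have l0 := abs_le.1 (f_lip hf (xt t x x') x)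
      have l1 := abs_le.1 (f_lip hf (xt t x x') x')
      have d0 : |x - xt t x x'| = t * |x' - x| := by
        rw [← abs_of_nonneg t0, ← abs_mul, abs_of_nonneg t0, abs_sub_comm]; unfold xt; ring_nf
      have d1 : |x' - xt t x x'| = (1 - t) * |x' - x| := by
        have : x' - xt t x x' = (1 - t) * (x' - x) := by unfold xt; ring
        rw [this, abs_mul, abs_of_nonneg s0]
      rw [d0] at l0
      rw [d1] at l1
      have hkd : k * |x' - x| ≤ |y' - y| := by nlinarith [abs_nonneg (y' - y)]
      have hL1 : xt t y y' ≤ f (xt t x x') := by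
        rcases abs_cases (y' - y) with ⟨h1, h2⟩ | ⟨h1, h2⟩ <;> rw [h1] at hkd
        · have := mul_le_mul_of_nonneg_left hkd s0
          simp only [xt] at *; nlinarith
        · have := mul_le_mul_of_nonneg_left hkd t0
          simp only [xt] at *; nlinarith
      unfold Yt; nlinarith

lemma Mt_speed {f : ℝ → ℝ} {k : ℝ} (hf : GoodF f k) {s t : ℝ} (s0 : 0 ≤ s) (s1 : s ≤ 1) (t0 : 0 ≤ t) (t1 : t ≤ 1) {ω : Pl × Pl}
    (h1 : ω.1 ∈ XX f) (h2 : ω.2 ∈ XX f) :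
    dist (Mt f s ω) (Mt f t ω) ≤ |t - s| * dist ω.1 ω.2 := by
  obtain ⟨⟨x, y⟩, ⟨x', y'⟩⟩ := ω
  obtain ⟨-, hy0, hy1⟩ := h1
  obtain ⟨-, hy0', hy1'⟩ := h2
  have h := Yt_speed hf s0 s1 t0 t1 hy0 hy1 hy0' hy1'
  have hk := hf.k1
  have hk0 := hf.k0
  have D0 := abs_nonneg (x' - x)
  rw [Prod.dist_eq, Prod.dist_eq]
  simp only [Mt] at *
  rw [dist_comm, dist_comm x, dist_comm y, dist_comm (Yt f s x y x' y')]
  simp only [Real.dist_eq]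
  refine max_le ?_ (h.trans ?_)
  · have e : xt t x x' - xt s x x' = (t - s) * (x' - x) := by unfold xt; ring
    rw [e, abs_mul]
    gcongr; exact le_max_left _ _
  · gcongr
    rcases le_total (|x' - x|) (|y' - y|) with hh | hh
    · rw [max_eq_left (by linarith)]; simp
    · rw [max_eq_right (by linarith), max_eq_left hh]; nlinarith

/-- Monotonicity of the ordinate for fixed abscissae. -/
lemma Yt_mono {f : ℝ → ℝ} {k : ℝ} (hf : GoodF f k) {t x y x' y' z z' : ℝ} (t0 : 0 < t) (t1 : t < 1) (hx : x ≠ x')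
    (hy0 : 0 ≤ y) (hy0' : 0 ≤ y') (hz1 : z ≤ f x) (hz1' : z' ≤ f x')
    (hyz : y ≤ z) (hyz' : y' ≤ z') (hne : y < z ∨ y' < z') :
    Yt f t x y x' y' < Yt f t x z x' z' := by
  have hk := hf.k1
  have hk0 := hf.k0
  have hy1 : y ≤ f x := hyz.trans hz1
  have hy1' : y' ≤ f x' := hyz'.trans hz1'
  have hz0 : 0 ≤ z := hy0.trans hyz
  have hz0' : 0 ≤ z' := hy0'.trans hyz'
  have p0 := hf.pos x
  have p1 := hf.pos x'
  have pt := hf.pos (xt t x x')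
  have s0 : 0 < 1 - t := by linarith
  have hD : 0 < |x' - x| := abs_pos.2 (sub_ne_zero.2 hx.symm)
  set D := |x' - x| with hDdef
  set T := thS (x' - x) (z' - z)
  set T0 := thS (x' - x) (y' - y)
  set E := At f t x y x' y' - xt t y y'
  have eA : At f t x z x' z' - At f t x y x' y' =
      f (xt t x x') / f x * ((1 - t) * (z - y)) + f (xt t x x') / f x' * (t * (z' - y')) := by
    simp only [At, xt]; field_simp; ring
  have e : Yt f t x z x' z' - Yt f t x y x' y' = (1 - T) * ((1 - t) * (z - y) + t * (z' - y')) +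
      T * (f (xt t x x') / f x * ((1 - t) * (z - y)) + f (xt t x x') / f x' * (t * (z' - y')))
      + (T - T0) * E := by
    rw [← eA]; simp only [Yt, T, T0, E, xt]; ring
  have hsum : 0 < (1 - t) * (z - y) + t * (z' - y') := by
    rcases hne with h | h
    · have := mul_pos s0 (sub_pos.2 h); have := mul_nonneg t0.le (sub_nonneg.2 hyz'); linarith
    · have := mul_nonneg s0.le (sub_nonneg.2 hyz); have := mul_pos t0 (sub_pos.2 h); linarith
  have n1 := mul_nonneg s0.le (sub_nonneg.2 hyz)
  have n2 := mul_nonneg t0.le (sub_nonneg.2 hyz')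
  rw [← sub_pos, e]
  by_cases hh : 2 * |y' - y| ≤ D ∧ 2 * |z' - z| ≤ D
  · have h1 : T = 1 := thS_eq_one hh.2
    have h2 : T0 = 1 := thS_eq_one hh.1
    rw [h1, h2, sub_self, zero_mul, zero_mul, zero_add, add_zero, one_mul]
    have q0 : 0 < f (xt t x x') / f x := by positivity
    have q1 : 0 < f (xt t x x') / f x' := by positivity
    rcases hne with h | h
    · have := mul_pos q0 (mul_pos s0 (sub_pos.2 h)); have := mul_nonneg q1.le n2; linarith
    · have := mul_nonneg q0.le n1; have := mul_pos q1 (mul_pos t0 (sub_pos.2 h)); linarith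
  · have hF : D ≤ 2 * f x ∨ D ≤ 2 * f x' := by
      rw [not_and_or, not_le, not_le] at hh
      rcases hh with h | h
      · rcases abs_cases (y' - y) with ⟨h1, h2⟩ | ⟨h1, h2⟩
        · right; linarith
        · left; linarith
      · rcases abs_cases (z' - z) with ⟨h1, h2⟩ | ⟨h1, h2⟩
        · right; linarith
        · left; linarith
    have lf := abs_le.1 (f_lip hf x x')
    have bt := f_between hf t0.le t1.le x x'
    have hmin : min (f x) (f x') ≤ f (xt t x x') := by
      rcases bt with ⟨b1, b2⟩ | ⟨b1, b2⟩
      · exact (min_le_left _ _).trans b1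
      · exact (min_le_right _ _).trans b1
    have rr := ratio_aux hk0 hk p0 p1 hF lf.1 lf.2 hmin
    have r0 : 1 - 3 * k ≤ f (xt t x x') / f x := by
      rw [le_div_iff₀ p0]; exact rr.1
    have r1 : 1 - 3 * k ≤ f (xt t x x') / f x' := by
      rw [le_div_iff₀ p1]; exact rr.2
    have T1 : T ≤ 1 := thS_le_one _ _
    have Tn : 0 ≤ T := thS_nonneg _ _
    have hE : |E| ≤ 2 * k * D * t ∧ |E| ≤ 2 * k * D * (1 - t) := AL_bound hf t0.le t1.le hy0 hy1 hy0' hy1'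
    have hTT : |T - T0| ≤ 2 * (((z - y) + (z' - y')) / D) := by
      have hb : |(y' - y) - (z' - z)| ≤ (z - y) + (z' - y') := by
        rw [abs_le]; constructor <;> linarith
      have i1 := thS_lip (x' - x) (z' - z) (y' - y)
      have i2 := thS_lip (x' - x) (y' - y) (z' - z)
      rw [abs_sub_comm] at i2
      have i3 := div_le_div_of_nonneg_right hb hD.le
      rw [abs_le]; constructor
      · simp only [T, T0]; linarith
      · simp only [T, T0]; linarith
    have hprod : |(T - T0) * E| ≤ 4 * k * ((1 - t) * (z - y) + t * (z' - y')) := by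
      rw [abs_mul]
      have m1 : |T - T0| * D ≤ 2 * ((z - y) + (z' - y')) := by
        have := mul_le_mul_of_nonneg_right hTT hD.le
        rwa [mul_assoc, div_mul_cancel₀ _ hD.ne'] at this
      rcases le_total t (1 - t) with h | h
      · have a1 := mul_le_mul_of_nonneg_left hE.1 (abs_nonneg (T - T0))
        have a2 := mul_le_mul_of_nonneg_right m1 (show 0 ≤ 2 * k * t by positivity)
        have a3 := mul_nonneg (mul_nonneg hk0.le (sub_nonneg.2 hyz)) (sub_nonneg.2 h)
        linarith
      · have a1 := mul_le_mul_of_nonneg_left hE.2 (abs_nonneg (T - T0))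
        have a2 := mul_le_mul_of_nonneg_right m1 (show 0 ≤ 2 * k * (1 - t) by positivity)
        have a3 := mul_nonneg (mul_nonneg hk0.le (sub_nonneg.2 hyz')) (sub_nonneg.2 h)
        linarith
    have hp := (abs_le.1 hprod).1
    have g0 := mul_le_mul_of_nonneg_right r0 n1
    have g1 := mul_le_mul_of_nonneg_right r1 n2
    have g2 := mul_le_mul_of_nonneg_left (add_le_add g0 g1) Tn
    have g3 := mul_pos hsum (show 0 < 1 - 7 * k by linarith)
    have g4 := mul_nonneg (mul_nonneg (sub_nonneg.2 T1) hk0.le) hsum.le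
    linarith

end

open MeasureTheory ProbabilityTheory
open scoped ENNReal NNReal

section

lemma Yt_line {f : ℝ → ℝ} {k : ℝ} (hf : GoodF f k) {t x y x' y' : ℝ} (h : |x' - x| ≤ |y' - y|) : Yt f t x y x' y' = xt t y y' := by
  rcases eq_or_ne x x' with rfl | hx
  · have e : xt t x x = x := by unfold xt; ring
    have p := (hf.pos x).ne'
    have : At f t x y x y' = xt t y y' := by
      unfold At; rw [e]; unfold xt; field_simp
    unfold Yt; rw [this]; ring
  · unfold Yt; rw [thS_eq_zero (sub_ne_zero.2 hx.symm) h]; ring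

lemma nocross_H {f : ℝ → ℝ} {k : ℝ} (hf : GoodF f k) {t x y x' y' a b a' b' D : ℝ} (t0 : 0 < t) (t1 : t < 1)
    (h1 : (x, y) ∈ XX f) (h2 : (x', y') ∈ XX f) (h3 : (a, b) ∈ XX f) (h4 : (a', b') ∈ XX f)
    (hH : |y' - y| < |x' - x|) (hD : |x' - x| = D) (hD1 : |a' - a| ≤ D) (hD2 : |b' - b| ≤ D)
    (hs1 : max |x - a'| |y - b'| = D) (hs2 : max |a - x'| |b - y'| = D)
    (ex : xt t x x' = xt t a a') (ey : Yt f t x y x' y' = Yt f t a b a' b')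
    (hne : ¬ (x = a ∧ y = b ∧ x' = a' ∧ y' = b')) :
    (x - a) * (x' - a') + (y - b) * (y' - b') < 0 := by
  have hk := hf.k1
  have hk0 := hf.k0
  have D0 : 0 < D := hD ▸ (abs_nonneg _).trans_lt hH
  obtain ⟨-, hy0, hy1⟩ := h1
  obtain ⟨-, hy0', hy1'⟩ := h2
  obtain ⟨-, hb0, hb1⟩ := h3
  obtain ⟨-, hb0', hb1'⟩ := h4
  simp only at hy0 hy1 hy0' hy1' hb0 hb1 hb0' hb1'
  have Y0 : ∀ x y x' y', Yt f 0 x y x' y' = y := fun x y x' y' =>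
    congrArg Prod.snd (Mt_zero hf ((x, y), (x', y')))
  have Y1 : ∀ x y x' y', Yt f 1 x y x' y' = y' := fun x y x' y' =>
    congrArg Prod.snd (Mt_one hf ((x, y), (x', y')))
  have s0 : 0 < 1 - t := by linarith
  have i1 := Yt_speed hf le_rfl zero_le_one t0.le t1.le hy0 hy1 hy0' hy1'
  have i2 := Yt_speed hf t0.le t1.le zero_le_one le_rfl hy0 hy1 hy0' hy1'
  have i3 := Yt_speed hf le_rfl zero_le_one t0.le t1.le hb0 hb1 hb0' hb1'
  have i4 := Yt_speed hf t0.le t1.le zero_le_one le_rfl hb0 hb1 hb0' hb1'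
  rw [Y0, sub_zero, abs_of_nonneg t0.le] at i1 i3
  rw [Y1, abs_of_nonneg s0.le] at i2 i4
  rw [max_eq_right (by linarith), hD] at i1 i2
  rw [hD] at hH
  have q : |y' - y| + 4 * k * (D - |y' - y|) < D := by nlinarith
  have q' : |b' - b| + 4 * k * max 0 (|a' - a| - |b' - b|) ≤ D := by
    rcases le_total 0 (|a' - a| - |b' - b|) with h | h
    · rw [max_eq_right h]; nlinarith
    · rw [max_eq_left h]; linarith
  have j1 := (abs_lt.1 (i1.trans_lt (mul_lt_mul_of_pos_left q t0)))
  have j2 := (abs_lt.1 (i2.trans_lt (mul_lt_mul_of_pos_left q s0)))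
  have j3 := (abs_le.1 (i3.trans (mul_le_mul_of_nonneg_left q' t0.le)))
  have j4 := (abs_le.1 (i4.trans (mul_le_mul_of_nonneg_left q' s0.le)))
  rw [ey] at j1 j2
  have l1 : |y - b'| < D := by rw [abs_lt]; constructor <;> linarith [j1.1, j1.2, j4.1, j4.2]
  have l2 : |b - y'| < D := by rw [abs_lt]; constructor <;> linarith [j2.1, j2.2, j3.1, j3.2]
  have m1 : |x - a'| = D := by
    rcases max_choice |x - a'| |y - b'| with h | h
    · rw [← h, hs1]
    · rw [h] at hs1; linarith
  have m2 : |a - x'| = D := by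
    rcases max_choice |a - x'| |b - y'| with h | h
    · rw [← h, hs2]
    · rw [h] at hs2; linarith
  have tD := mul_pos t0 D0
  have sD := mul_pos s0 D0
  have hA := abs_le.1 hD1
  have k1 := mul_le_mul_of_nonneg_left hA.1 t0.le
  have k2 := mul_le_mul_of_nonneg_left hA.2 t0.le
  have k3 := mul_le_mul_of_nonneg_left hA.1 s0.le
  have k4 := mul_le_mul_of_nonneg_left hA.2 s0.le
  unfold xt at ex
  have xa : x = a ∧ x' = a' := by
    rcases abs_cases (x' - x) with ⟨c1, -⟩ | ⟨c1, -⟩ <;> rw [c1] at hD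
    · have : x' = x + D := by linarith
      subst this
      have u1 : a' = x + D := by
        rcases abs_cases (x - a') with ⟨c2, -⟩ | ⟨c2, -⟩ <;> rw [c2] at m1 <;> linarith
      have u2 : a = x := by
        rcases abs_cases (a - (x + D)) with ⟨c2, -⟩ | ⟨c2, -⟩ <;> rw [c2] at m2 <;> linarith
      exact ⟨u2.symm, u1.symm⟩
    · have : x' = x - D := by linarith
      subst this
      have u1 : a' = x - D := by
        rcases abs_cases (x - a') with ⟨c2, -⟩ | ⟨c2, -⟩ <;> rw [c2] at m1 <;> linarith
      have u2 : a = x := by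
        rcases abs_cases (a - (x - D)) with ⟨c2, -⟩ | ⟨c2, -⟩ <;> rw [c2] at m2 <;> linarith
      exact ⟨u2.symm, u1.symm⟩
  obtain ⟨rfl, rfl⟩ := xa
  have hx : x ≠ x' := by rintro rfl; simp at hD; linarith
  rw [sub_self, zero_mul, zero_add]
  by_contra hcon
  rw [not_lt] at hcon
  rcases mul_nonneg_iff.1 hcon with ⟨c1, c2⟩ | ⟨c1, c2⟩
  · have hor : b < y ∨ b' < y' := by
      by_contra h
      rw [not_or, not_lt, not_lt] at h
      exact hne ⟨rfl, by linarith, rfl, by linarith⟩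
    exact (Yt_mono hf t0 t1 hx hb0 hb0' hy1 hy1' (by linarith) (by linarith) hor).ne' ey
  · have hor : y < b ∨ y' < b' := by
      by_contra h
      rw [not_or, not_lt, not_lt] at h
      exact hne ⟨rfl, by linarith, rfl, by linarith⟩
    exact (Yt_mono hf t0 t1 hx hy0 hy0' hb1 hb1' (by linarith) (by linarith) hor).ne ey

lemma nocross {f : ℝ → ℝ} {k : ℝ} (hf : GoodF f k) {t : ℝ} (t0 : 0 < t) (t1 : t < 1) {ω η : Pl × Pl} (hω : ω ∈ XX f ×ˢ XX f)
    (hη : η ∈ XX f ×ˢ XX f) (hM : Mt f t ω = Mt f t η) (hne : ω ≠ η) :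
    cst1 (ω.1, η.2) + cst1 (η.1, ω.2) ≤ cst1 ω + cst1 η ∧
    (cst1 (ω.1, η.2) + cst1 (η.1, ω.2) = cst1 ω + cst1 η →
      cst2 (ω.1, η.2) + cst2 (η.1, ω.2) < cst2 ω + cst2 η) := by
  have s0 : 0 < 1 - t := by linarith
  have hM2 : Mt f t η = Mt f t ω := hM.symm
  have A : ∀ {ω η : Pl × Pl}, ω ∈ XX f ×ˢ XX f → η ∈ XX f ×ˢ XX f → Mt f t ω = Mt f t η →
      dist ω.1 η.2 ≤ t * dist ω.1 ω.2 + (1 - t) * dist η.1 η.2 := by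
    intro ω η hω hη hM
    have a1 := Mt_speed hf le_rfl zero_le_one t0.le t1.le hω.1 hω.2
    have a2 := Mt_speed hf t0.le t1.le zero_le_one le_rfl hη.1 hη.2
    rw [Mt_zero hf, sub_zero, abs_of_nonneg t0.le] at a1
    rw [Mt_one hf, abs_of_nonneg s0.le, ← hM] at a2
    exact (dist_triangle _ _ _).trans (add_le_add a1 a2)
  have a1 := A hω hη hM
  have a2 := A hη hω hM2
  have n1 := @dist_nonneg _ _ ω.1 η.2
  have n2 := @dist_nonneg _ _ η.1 ω.2
  have b1 := pow_le_pow_left₀ n1 a1 2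
  have b2 := pow_le_pow_left₀ n2 a2 2
  set d := dist ω.1 ω.2 with hd
  set e := dist η.1 η.2 with he
  have sq := mul_nonneg (mul_nonneg t0.le s0.le) (sq_nonneg (d - e))
  refine ⟨?_, ?_⟩
  · simp only [cst1]; rw [← hd, ← he]; linarith
  intro heq
  simp only [cst1] at heq
  rw [← hd, ← he] at heq
  have hsq : t * (1 - t) * (d - e) ^ 2 = 0 := by linarith
  have hde : d = e := by
    have := (mul_eq_zero.1 hsq).resolve_left (mul_pos t0 s0).ne'
    have := pow_eq_zero_iff (two_ne_zero) |>.1 this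
    linarith
  have c1 : dist ω.1 η.2 = d := by
    have : dist ω.1 η.2 ^ 2 = d ^ 2 := by rw [← hde] at b1 b2 heq; linarith
    exact (pow_left_inj₀ n1 dist_nonneg two_ne_zero).1 this
  have c2 : dist η.1 ω.2 = d := by
    have : dist η.1 ω.2 ^ 2 = d ^ 2 := by rw [← hde] at b1 b2 heq; linarith
    exact (pow_left_inj₀ n2 dist_nonneg two_ne_zero).1 this
  clear b1 b2 sq heq hsq a1 a2 n1 n2 A
  obtain ⟨⟨x, y⟩, ⟨x', y'⟩⟩ := ω
  obtain ⟨⟨a, b⟩, ⟨a', b'⟩⟩ := η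
  have ex : xt t x x' = xt t a a' := congrArg Prod.fst hM
  have ey : Yt f t x y x' y' = Yt f t a b a' b' := congrArg Prod.snd hM
  have key : (x - a) * (x' - a') + (y - b) * (y' - b') < 0 := by
    have hne' : ¬ (x = a ∧ y = b ∧ x' = a' ∧ y' = b') := by
      rintro ⟨rfl, rfl, rfl, rfl⟩; exact hne rfl
    have hd1 : max |x' - x| |y' - y| = d := by
      rw [hd, dist_comm, Prod.dist_eq, Real.dist_eq, Real.dist_eq]
    have hd2 : max |a' - a| |b' - b| = d := by
      rw [hde, he, dist_comm, Prod.dist_eq, Real.dist_eq, Real.dist_eq]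
    have hd3 : max |x - a'| |y - b'| = d := by
      rw [← c1, Prod.dist_eq, Real.dist_eq, Real.dist_eq]
    have hd4 : max |a - x'| |b - y'| = d := by
      rw [← c2, Prod.dist_eq, Real.dist_eq, Real.dist_eq]
    rcases lt_or_ge |y' - y| |x' - x| with h | h
    · exact nocross_H hf t0 t1 hω.1 hω.2 hη.1 hη.2 h (by rw [← hd1, max_eq_left h.le])
        (hd2 ▸ le_max_left _ _) (hd2 ▸ le_max_right _ _) hd3 hd4 ex ey hne'
    rcases lt_or_ge |b' - b| |a' - a| with h' | h'
    · have := nocross_H hf t0 t1 hη.1 hη.2 hω.1 hω.2 h' (by rw [← hd2, max_eq_left h'.le])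
        (hd1 ▸ le_max_left _ _) (hd1 ▸ le_max_right _ _) hd4 hd3 ex.symm ey.symm (by
          rintro ⟨rfl, rfl, rfl, rfl⟩; exact hne rfl)
      linarith
    · rw [Yt_line hf h, Yt_line hf h'] at ey
      unfold xt at ex ey
      have g1 : (1 - t) * (x - a) = - (t * (x' - a')) := by linarith
      have g2 : (1 - t) * (y - b) = - (t * (y' - b')) := by linarith
      have g3 : (1 - t) * ((x - a) * (x' - a') + (y - b) * (y' - b')) =
        - (t * ((x' - a') ^ 2 + (y' - b') ^ 2)) := by
        calc _ = ((1 - t) * (x - a)) * (x' - a') + ((1 - t) * (y - b)) * (y' - b') := by ring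
          _ = _ := by rw [g1, g2]; ring
      have g4 : 0 < (x' - a') ^ 2 + (y' - b') ^ 2 := by
        by_contra h
        have z1 : x' - a' = 0 := by nlinarith [sq_nonneg (x' - a'), sq_nonneg (y' - b')]
        have z2 : y' - b' = 0 := by nlinarith [sq_nonneg (x' - a'), sq_nonneg (y' - b')]
        rw [z1] at g1; rw [z2] at g2
        simp [s0.ne'] at g1 g2
        exact hne' ⟨by linarith, by linarith, by linarith, by linarith⟩
      have g5 := mul_pos t0 g4
      by_contra h
      have := mul_nonneg s0.le (not_lt.1 h)
      linarith
  simp only [cst2]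
  linarith

end

open MeasureTheory ProbabilityTheory
open scoped ENNReal NNReal

lemma open_rect {α : Type*} [TopologicalSpace α] [SecondCountableTopology α] {R : Set (α × α)}
    (hR : IsOpen R) : ∃ U V : ℕ → Set α, (∀ n, IsOpen (U n)) ∧ (∀ n, IsOpen (V n)) ∧
      ∀ a b, (a, b) ∈ R ↔ ∃ n, a ∈ U n ∧ b ∈ V n := by
  set B := TopologicalSpace.countableBasis α
  have hB := TopologicalSpace.isBasis_countableBasis α
  have hBc : B.Countable := TopologicalSpace.countable_countableBasis α
  set P : Set (Set α × Set α) := insert (∅, ∅) ((B ×ˢ B) ∩ {q | q.1 ×ˢ q.2 ⊆ R}) with hP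
  have hPc : P.Countable := ((hBc.prod hBc).mono Set.inter_subset_left).insert _
  obtain ⟨s, hs⟩ := hPc.exists_eq_range ⟨_, Set.mem_insert _ _⟩
  have hmem : ∀ n, s n ∈ P := fun n => by rw [hs]; exact Set.mem_range_self n
  refine ⟨fun n => (s n).1, fun n => (s n).2, ?_, ?_, ?_⟩
  · intro n
    rcases hmem n with h | h
    · simp [h]
    · exact hB.isOpen h.1.1
  · intro n
    rcases hmem n with h | h
    · simp [h]
    · exact hB.isOpen h.1.2
  · intro a b
    constructor
    · intro h
      obtain ⟨u, v, hu, hv, hau, hbv, huv⟩ := isOpen_prod_iff.1 hR a b h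
      obtain ⟨u', hu'B, hau', hu'⟩ := hB.exists_subset_of_mem_open hau hu
      obtain ⟨v', hv'B, hbv', hv'⟩ := hB.exists_subset_of_mem_open hbv hv
      have : (u', v') ∈ P := Or.inr ⟨⟨hu'B, hv'B⟩, (Set.prod_mono hu' hv').trans huv⟩
      rw [hs] at this
      obtain ⟨n, hn⟩ := this
      exact ⟨n, by beta_reduce; rw [hn]; exact hau', by beta_reduce; rw [hn]; exact hbv'⟩
    · rintro ⟨n, h1, h2⟩
      rcases hmem n with h | h
      · beta_reduce at h1; rw [h] at h1; exact h1.elim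
      · exact h.2 ⟨h1, h2⟩

lemma theta_open {μ ν : Measure Pl} [IsProbabilityMeasure μ] {π : Measure (Pl × Pl)} (hπ : LexOpt μ ν π)
    (g : Pl × Pl → Pl) (hg : Measurable g) (Γ0 : Set (Pl × Pl)) (hΓ0 : MeasurableSet Γ0)
    (hΓ0' : π Γ0ᶜ = 0) (R : Set ((Pl × Pl) × (Pl × Pl))) (hR : IsOpen R)
    (H : ∀ ω ∈ Γ0, ∀ ω' ∈ Γ0, g ω = g ω' → (ω, ω') ∈ R →
      cst1 (ω.1, ω'.2) + cst1 (ω'.1, ω.2) ≤ cst1 ω + cst1 ω' ∧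
      (cst1 (ω.1, ω'.2) + cst1 (ω'.1, ω.2) = cst1 ω + cst1 ω' →
        cst2 (ω.1, ω'.2) + cst2 (ω'.1, ω.2) < cst2 ω + cst2 ω')) :
    ∃ Γ ⊆ Γ0, MeasurableSet Γ ∧ π Γᶜ = 0 ∧ ∀ ω ∈ Γ, ∀ ω' ∈ Γ, g ω = g ω' → (ω, ω') ∉ R := by
  obtain ⟨U, V, hU, hV, h⟩ := open_rect hR
  obtain ⟨Γ, h1, h2, h3, h4⟩ := theta_lemma hπ g hg Γ0 hΓ0 hΓ0' U V (fun n => (hU n).measurableSet)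
    (fun n => (hV n).measurableSet) (fun ω hω ω' hω' e hn => H ω hω ω' hω' e ((h _ _).2 hn))
  exact ⟨Γ, h1, h2, h3, fun ω hω ω' hω' e hR => h4 ω hω ω' hω' e ((h _ _).1 hR)⟩

/-- Support properties of an optimal coupling. -/
structure GoodG (f : ℝ → ℝ) (t : ℝ) (Γ : Set (Pl × Pl)) : Prop where
  meas : MeasurableSet Γ
  sub : Γ ⊆ XX f ×ˢ XX f
  cyc : ∀ ω ∈ Γ, ∀ η ∈ Γ, cst1 ω + cst1 η ≤ cst1 (ω.1, η.2) + cst1 (η.1, ω.2)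
  hor : ∀ ω ∈ Γ, ∀ η ∈ Γ, ω.1.1 = η.1.1 → ω.2.1 = η.2.1 →
    |ω.2.2 - ω.1.2| < |ω.2.1 - ω.1.1| → |η.2.2 - η.1.2| < |η.2.1 - η.1.1| →
    ω.1.2 < η.1.2 → ω.2.2 ≤ η.2.2
  ver : ∀ ω ∈ Γ, ∀ η ∈ Γ, ω.1.2 = η.1.2 → ω.2.2 = η.2.2 →
    |ω.2.1 - ω.1.1| < |ω.2.2 - ω.1.2| → |η.2.1 - η.1.1| < |η.2.2 - η.1.2| →
    ω.1.1 < η.1.1 → ω.2.1 ≤ η.2.1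
  inj : Set.InjOn (Mt f t) Γ

lemma cst1_eq (p q : Pl) : cst1 (p, q) = (max |q.1 - p.1| |q.2 - p.2|) ^ 2 := by
  unfold cst1; rw [dist_comm, Prod.dist_eq, Real.dist_eq, Real.dist_eq]

lemma swap_aux {y z y' z' D : ℝ} (h1 : |y' - y| < D) (h2 : |z' - z| < D) (h3 : y < z) (h4 : z' < y') :
    |z' - y| < D ∧ |y' - z| < D := by
  rw [abs_lt] at h1 h2
  obtain ⟨a, b⟩ := h1
  obtain ⟨c, d⟩ := h2
  rw [abs_lt, abs_lt]
  refine ⟨⟨?_, ?_⟩, ⟨?_, ?_⟩⟩ <;> linarith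

lemma exists_goodG {f : ℝ → ℝ} {k : ℝ} (hf : GoodF f k) {t : ℝ} (t0 : 0 < t) (t1 : t < 1)
    {μ ν : Measure Pl} [IsProbabilityMeasure μ] {π : Measure (Pl × Pl)} (hπ : LexOpt μ ν π)
    (hX : π (XX f ×ˢ XX f)ᶜ = 0) : ∃ Γ, GoodG f t Γ ∧ π Γᶜ = 0 := by
  have hc := cst1_cont
  obtain ⟨Γ1, s1, m1, z1, p1⟩ := theta_open hπ (fun _ => (0, 0)) measurable_const (XX f ×ˢ XX f)
    ((XX_compact hf).measurableSet.prod (XX_compact hf).measurableSet) hX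
    {z | cst1 (z.1.1, z.2.2) + cst1 (z.2.1, z.1.2) < cst1 z.1 + cst1 z.2}
    (isOpen_lt (by fun_prop) (by fun_prop))
    (fun ω _ ω' _ _ h => ⟨le_of_lt h, fun e => absurd e (ne_of_lt h)⟩)
  obtain ⟨Γ2, s2, m2, z2, p2⟩ := theta_open hπ (fun ω => (ω.1.1, ω.2.1)) (by fun_prop) Γ1 m1 z1
    ({z | |z.1.2.2 - z.1.1.2| < |z.1.2.1 - z.1.1.1|} ∩ {z | |z.2.2.2 - z.2.1.2| < |z.2.2.1 - z.2.1.1|}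
      ∩ {z | z.1.1.2 < z.2.1.2} ∩ {z | z.2.2.2 < z.1.2.2})
    ((((isOpen_lt (by fun_prop) (by fun_prop)).inter (isOpen_lt (by fun_prop) (by fun_prop))).inter
      (isOpen_lt (by fun_prop) (by fun_prop))).inter (isOpen_lt (by fun_prop) (by fun_prop)))
    (by
      rintro ⟨⟨x, y⟩, ⟨x', y'⟩⟩ - ⟨⟨a, b⟩, ⟨a', b'⟩⟩ - hg ⟨⟨⟨h1, h2⟩, h3⟩, h4⟩
      simp only [Prod.mk.injEq] at hg
      obtain ⟨rfl, rfl⟩ := hg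
      change |y' - y| < |x' - x| at h1
      change |b' - b| < |x' - x| at h2
      change y < b at h3
      change b' < y' at h4
      have := swap_aux h1 h2 h3 h4
      simp only [cst1_eq, cst2]
      rw [max_eq_left h1.le, max_eq_left h2.le, max_eq_left this.1.le, max_eq_left this.2.le]
      refine ⟨le_rfl, fun _ => ?_⟩
      nlinarith)
  obtain ⟨Γ3, s3, m3, z3, p3⟩ := theta_open hπ (fun ω => (ω.1.2, ω.2.2)) (by fun_prop) Γ2 m2 z2
    ({z | |z.1.2.1 - z.1.1.1| < |z.1.2.2 - z.1.1.2|} ∩ {z | |z.2.2.1 - z.2.1.1| < |z.2.2.2 - z.2.1.2|}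
      ∩ {z | z.1.1.1 < z.2.1.1} ∩ {z | z.2.2.1 < z.1.2.1})
    ((((isOpen_lt (by fun_prop) (by fun_prop)).inter (isOpen_lt (by fun_prop) (by fun_prop))).inter
      (isOpen_lt (by fun_prop) (by fun_prop))).inter (isOpen_lt (by fun_prop) (by fun_prop)))
    (by
      rintro ⟨⟨x, y⟩, ⟨x', y'⟩⟩ - ⟨⟨a, b⟩, ⟨a', b'⟩⟩ - hg ⟨⟨⟨h1, h2⟩, h3⟩, h4⟩
      simp only [Prod.mk.injEq] at hg
      obtain ⟨rfl, rfl⟩ := hg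
      change |x' - x| < |y' - y| at h1
      change |a' - a| < |y' - y| at h2
      change x < a at h3
      change a' < x' at h4
      have := swap_aux h1 h2 h3 h4
      simp only [cst1_eq, cst2]
      rw [max_eq_right h1.le, max_eq_right h2.le, max_eq_right this.1.le, max_eq_right this.2.le]
      refine ⟨le_rfl, fun _ => ?_⟩
      nlinarith)
  have s3X : Γ3 ⊆ XX f ×ˢ XX f := s3.trans (s2.trans s1)
  obtain ⟨Γ, s4, m4, z4, p4⟩ := theta_open hπ (Mt f t) (Mt_meas hf t) Γ3 m3 z3
    {z | z.1 ≠ z.2} (isOpen_ne_fun continuous_fst continuous_snd)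
    (fun ω hω η hη hM hne => nocross hf t0 t1 (s3X hω) (s3X hη) hM hne)
  refine ⟨Γ, ⟨m4, s4.trans s3X, ?_, ?_, ?_, ?_⟩, z4⟩
  · intro ω hω η hη
    exact not_lt.1 (p1 ω (s2 (s3 (s4 hω))) η (s2 (s3 (s4 hη))) rfl)
  · intro ω hω η hη e1 e2 h1 h2 h3
    by_contra h
    exact p2 ω (s3 (s4 hω)) η (s3 (s4 hη)) (by simp only [e1, e2]) ⟨⟨⟨h1, h2⟩, h3⟩, not_le.1 h⟩
  · intro ω hω η hη e1 e2 h1 h2 h3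
    by_contra h
    exact p3 ω (s4 hω) η (s4 hη) (by simp only [e1, e2]) ⟨⟨⟨h1, h2⟩, h3⟩, not_le.1 h⟩
  · intro ω hω η hη hM
    by_contra h
    exact p4 ω hω η hη hM h

open MeasureTheory ProbabilityTheory
open scoped ENNReal NNReal

lemma log_lower {z : ℝ} (h : |z| ≤ 1 / 2) : z - 2 * z ^ 2 ≤ Real.log (1 + z) := by
  have h1 := (abs_le.1 h).1
  have h2 := (abs_le.1 h).2
  have h3 : 0 < 1 + z := by linarith
  have := Real.one_sub_inv_le_log_of_pos h3
  refine le_trans ?_ this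
  have e : 1 - (1 + z)⁻¹ = z / (1 + z) := by field_simp; ring
  rw [e, le_div_iff₀ h3]
  have : 0 ≤ z ^ 2 := sq_nonneg z
  nlinarith [mul_nonneg this (show 0 ≤ 1/2 + z by linarith), mul_nonneg this h3.le]

/-- Analytic core, first part: size estimates. -/
lemma jac_bounds {t k u u' f0 f1 ft D g : ℝ} (t0 : 0 < t) (t1 : t < 1) (k0 : 0 < k) (k1 : k < 1 / 1000)
    (u0 : 0 ≤ u) (u1 : u ≤ 1) (u0' : 0 ≤ u') (u1' : u' ≤ 1)
    (p0 : 0 < f0) (p1 : 0 < f1) (pt : 0 < ft) (pk : ft ≤ 3 * k) (D0 : 0 ≤ D)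
    (h0 : |f0 - ft| ≤ k * (t * D)) (h1 : |f1 - ft| ≤ k * ((1 - t) * D)) (h01 : |f1 - f0| ≤ k * D)
    (g0 : 0 ≤ g) (g1 : g ≤ D ^ 2) (hd : D ≤ 2 * |f1 * u' - f0 * u|) :
    D ≤ 21 / 10 * ft * |u' - u| ∧ f0 ≤ 101 / 100 * ft ∧ f1 ≤ 101 / 100 * ft ∧
    |(f1 - f0) * (u' - u) + g * xt t u u'| ≤ k * D * |u' - u| + D ^ 2 ∧
    |(f1 - f0) * (u' - u) + g * xt t u u'| ≤ 16 * k * |u' - u| ^ 2 * ft := by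
  set δ := |u' - u| with hδ
  have δ0 : 0 ≤ δ := abs_nonneg _
  have δ1 : δ ≤ 1 := by rw [hδ, abs_le]; constructor <;> linarith
  have hkD : 0 ≤ k * D := by positivity
  have i1 : |f1 * u' - f0 * u| ≤ f1 * δ + k * D := by
    have e : f1 * u' - f0 * u = f1 * (u' - u) + (f1 - f0) * u := by ring
    rw [e]
    refine (abs_add_le _ _).trans ?_
    rw [abs_mul, abs_mul, abs_of_pos p1, abs_of_nonneg u0]
    have : |f1 - f0| * u ≤ k * D * 1 := mul_le_mul h01 u1 u0 hkD
    linarith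
  have i2 : |f1 * u' - f0 * u| ≤ f0 * δ + k * D := by
    have e : f1 * u' - f0 * u = f0 * (u' - u) + (f1 - f0) * u' := by ring
    rw [e]
    refine (abs_add_le _ _).trans ?_
    rw [abs_mul, abs_mul, abs_of_pos p0, abs_of_nonneg u0']
    have : |f1 - f0| * u' ≤ k * D * 1 := mul_le_mul h01 u1' u0' hkD
    linarith
  have kD' : k * D ≤ 1 / 1000 * D := mul_le_mul_of_nonneg_right k1.le D0
  have D1 : D ≤ 201 / 100 * (f1 * δ) := by linarith [mul_nonneg p1.le δ0]
  have D2 : D ≤ 201 / 100 * (f0 * δ) := by linarith [mul_nonneg p0.le δ0]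
  have q1 : f1 * δ ≤ f1 := by nlinarith
  have q0 : f0 * δ ≤ f0 := by nlinarith
  have tD : t * D ≤ D := by nlinarith
  have sD : (1 - t) * D ≤ D := by nlinarith
  have ktD : k * (t * D) ≤ k * D := mul_le_mul_of_nonneg_left tD k0.le
  have ksD : k * ((1 - t) * D) ≤ k * D := mul_le_mul_of_nonneg_left sD k0.le
  have r0 : f0 ≤ 101 / 100 * ft := by have := (abs_le.1 h0).2; linarith
  have r1 : f1 ≤ 101 / 100 * ft := by have := (abs_le.1 h1).2; linarith
  have hD : D ≤ 21 / 10 * ft * δ := by nlinarith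
  have w0 : 0 ≤ xt t u u' := by unfold xt; nlinarith
  have w1 : xt t u u' ≤ 1 := by unfold xt; nlinarith
  have hB : |(f1 - f0) * (u' - u) + g * xt t u u'| ≤ k * D * δ + D ^ 2 := by
    refine (abs_add_le _ _).trans ?_
    rw [abs_mul, abs_mul, abs_of_nonneg g0, abs_of_nonneg w0]
    have a1 : |f1 - f0| * δ ≤ k * D * δ := mul_le_mul_of_nonneg_right h01 δ0
    have a2 : g * xt t u u' ≤ D ^ 2 * 1 := mul_le_mul g1 w1 w0 (sq_nonneg _)
    linarith
  refine ⟨hD, r0, r1, hB, hB.trans ?_⟩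
  have b1 : k * D * δ ≤ k * (21 / 10 * ft * δ) * δ := by gcongr
  have b2 : D ^ 2 ≤ (21 / 10 * ft * δ) ^ 2 := by gcongr
  have b3 : ft * (ft * δ ^ 2) ≤ 3 * k * (ft * δ ^ 2) := by gcongr
  nlinarith [mul_nonneg (mul_nonneg k0.le pt.le) (sq_nonneg δ)]

set_option maxHeartbeats 2000000 in
/-- Analytic core. -/
lemma jac_core {t k K u u' f0 f1 ft D g θ τ : ℝ} (t0 : 0 < t) (t1 : t < 1) (k0 : 0 < k) (k1 : k < 1 / 1000)
    (hK : 1 ≤ K)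
    (u0 : 0 ≤ u) (u1 : u ≤ 1) (u0' : 0 ≤ u') (u1' : u' ≤ 1)
    (p0 : 0 < f0) (p1 : 0 < f1) (pt : 0 < ft) (pk : ft ≤ 3 * k) (D0 : 0 ≤ D)
    (h0 : |f0 - ft| ≤ k * (t * D)) (h1 : |f1 - ft| ≤ k * ((1 - t) * D)) (h01 : |f1 - f0| ≤ k * D)
    (hg : t * (1 - t) * g = (1 - t) * f0 + t * f1 - ft)
    (g0 : 0 ≤ g) (g1 : g ≤ D ^ 2) (hd : D ≤ 2 * |f1 * u' - f0 * u|)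
    (θ0 : 0 ≤ θ) (θ1 : θ ≤ 1) (hτ : |τ| * D ≤ 2) {AL α β : ℝ}
    (hAL : AL = (1 - t) * (ft - f0) * u + t * (ft - f1) * u')
    (hα : α = (1 - θ) * ((f0 - ft) / ft) + τ / (1 - t) * AL * (f0 / ft))
    (hβ : β = (1 - θ) * ((f1 - ft) / ft) - τ / t * AL * (f1 / ft)) :
    0 < 1 + α ∧ 0 < 1 + β ∧ 0 ≤ (1 - t) * Real.log (1 + α) + t * Real.log (1 + β) +
      K * ((1 - t) * u ^ 2 + t * u' ^ 2 - (xt t u u' - (1 - θ) * (AL / ft)) ^ 2) := by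
  have s0 : 0 < 1 - t := by linarith
  obtain ⟨bD, r0, r1, bB1, bB2⟩ := jac_bounds t0 t1 k0 k1 u0 u1 u0' u1' p0 p1 pt pk D0 h0 h1 h01 g0 g1 hd
  set B := -((f1 - f0) * (u' - u) + g * xt t u u') with hB
  have hABS : |(f1 - f0) * (u' - u) + g * xt t u u'| = |B| := by rw [hB, abs_neg]
  rw [hABS] at bB1 bB2
  have eAL : AL = t * (1 - t) * B := by
    rw [hAL, hB]
    have : t * (1 - t) * -((f1 - f0) * (u' - u) + g * xt t u u') =
      - (t * (1 - t) * ((f1 - f0) * (u' - u))) - (t * (1 - t) * g) * xt t u u' := by ring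
    rw [this, hg]; unfold xt; ring
  set δ := |u' - u| with hδ
  have δ0 : 0 ≤ δ := abs_nonneg _
  have δ1 : δ ≤ 1 := by rw [hδ, abs_le]; constructor <;> linarith
  set E := B / ft with hE
  have bE : |E| ≤ 16 * k * δ ^ 2 := by rw [hE, abs_div, abs_of_pos pt, div_le_iff₀ pt]; exact bB2
  have hα' : α = (1 - θ) * ((f0 - ft) / ft) + t * (τ * B * (f0 / ft)) := by
    rw [hα, eAL]; field_simp
  have hβ' : β = (1 - θ) * ((f1 - ft) / ft) - (1 - t) * (τ * B * (f1 / ft)) := by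
    rw [hβ, eAL]; field_simp
  have m0 : 0 ≤ 1 - θ := by linarith
  have m1 : 1 - θ ≤ 1 := by linarith
  -- size of the quadratic part
  have hτB : |τ * B| ≤ 15 * k * δ := by
    rw [abs_mul]
    have a1 := mul_le_mul_of_nonneg_left bB1 (abs_nonneg τ)
    have a2 := mul_le_mul_of_nonneg_right hτ (show 0 ≤ k * δ + D by positivity)
    have a3 : D ≤ 63 / 10 * (k * δ) := by linarith [mul_le_mul_of_nonneg_right pk δ0]
    have a5 : |τ| * (k * D * δ + D ^ 2) = |τ| * D * (k * δ + D) := by ring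
    have a4 : 0 ≤ k * δ := by positivity
    linarith
  have q0 : |(f0 - ft) / ft| ≤ t * (21 / 10 * k * δ) := by
    rw [abs_div, abs_of_pos pt, div_le_iff₀ pt]
    refine h0.trans ?_
    have := mul_le_mul_of_nonneg_left bD (show 0 ≤ k * t by positivity)
    linarith
  have q1 : |(f1 - ft) / ft| ≤ (1 - t) * (21 / 10 * k * δ) := by
    rw [abs_div, abs_of_pos pt, div_le_iff₀ pt]
    refine h1.trans ?_
    have := mul_le_mul_of_nonneg_left bD (show 0 ≤ k * (1 - t) by positivity)
    linarith
  have v0 : f0 / ft ≤ 101 / 100 := by rw [div_le_iff₀ pt]; exact r0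
  have v1 : f1 / ft ≤ 101 / 100 := by rw [div_le_iff₀ pt]; exact r1
  have v0' : 0 < f0 / ft := by positivity
  have v1' : 0 < f1 / ft := by positivity
  have kδ : 0 ≤ k * δ := by positivity
  have w0 : |τ * B * (f0 / ft)| ≤ 1515 / 100 * (k * δ) := by
    rw [abs_mul, abs_of_pos v0']
    have := mul_le_mul hτB v0 v0'.le (by positivity)
    linarith
  have w1 : |τ * B * (f1 / ft)| ≤ 1515 / 100 * (k * δ) := by
    rw [abs_mul, abs_of_pos v1']
    have := mul_le_mul hτB v1 v1'.le (by positivity)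
    linarith
  have bα : |α| ≤ t * (18 * (k * δ)) := by
    rw [hα']
    refine (abs_add_le _ _).trans ?_
    rw [abs_mul, abs_mul, abs_of_nonneg m0, abs_of_pos t0]
    have a1 := mul_le_mul_of_nonneg_right m1 (abs_nonneg ((f0 - ft) / ft))
    have a2 := mul_le_mul_of_nonneg_left w0 t0.le
    have := mul_nonneg t0.le kδ
    linarith
  have bβ : |β| ≤ (1 - t) * (18 * (k * δ)) := by
    rw [hβ']
    refine (abs_sub _ _).trans ?_
    rw [abs_mul, abs_mul, abs_of_nonneg m0, abs_of_pos s0]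
    have a1 := mul_le_mul_of_nonneg_right m1 (abs_nonneg ((f1 - ft) / ft))
    have a2 := mul_le_mul_of_nonneg_left w1 s0.le
    have := mul_nonneg s0.le kδ
    linarith
  have kδ1 : k * δ ≤ 1 / 1000 := (mul_le_of_le_one_right k0.le δ1).trans k1.le
  have cα : |α| ≤ 1 / 2 := by linarith [mul_nonneg s0.le kδ]
  have cβ : |β| ≤ 1 / 2 := by linarith [mul_nonneg t0.le kδ]
  have lα := log_lower cα
  have lβ := log_lower cβ
  have sqα : α ^ 2 ≤ (t * (18 * (k * δ))) ^ 2 := sq_le_sq' (by linarith [(abs_le.1 bα).1]) (abs_le.1 bα).2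
  have sqβ : β ^ 2 ≤ ((1 - t) * (18 * (k * δ))) ^ 2 := sq_le_sq' (by linarith [(abs_le.1 bβ).1]) (abs_le.1 bβ).2
  -- the linear part
  have lin : -(t * (1 - t) * (32 * (k * δ) ^ 2)) ≤ (1 - t) * α + t * β := by
    have e : (1 - t) * α + t * β = t * (1 - t) * ((1 - θ) * (g / ft) + τ * (f0 - f1) * E) := by
      rw [hα', hβ', hE]
      have : t * (1 - t) * ((1 - θ) * (g / ft) + τ * (f0 - f1) * (B / ft)) =
        (1 - θ) * ((t * (1 - t) * g) / ft) + t * (1 - t) * (τ * (f0 - f1) * (B / ft)) := by ring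
      rw [this, hg]
      field_simp; ring
    have a1 : |τ * (f0 - f1) * E| ≤ 32 * (k * δ) ^ 2 := by
      rw [abs_mul, abs_mul, abs_sub_comm f0]
      have b1 : |τ| * |f1 - f0| ≤ 2 * k := by
        have := mul_le_mul_of_nonneg_left h01 (abs_nonneg τ)
        have := mul_le_mul_of_nonneg_left hτ k0.le
        linarith
      have := mul_le_mul b1 bE (abs_nonneg _) (by positivity)
      linarith
    have a2 := (abs_le.1 a1).1
    have a3 : 0 ≤ (1 - θ) * (g / ft) := by positivity
    rw [e]
    have := mul_le_mul_of_nonneg_left (show -(32 * (k * δ) ^ 2) ≤ (1 - θ) * (g / ft) + τ * (f0 - f1) * E by linarith)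
      (mul_nonneg t0.le s0.le)
    linarith
  -- the potential part
  have pot : t * (1 - t) * (95 / 100 * δ ^ 2) ≤
      (1 - t) * u ^ 2 + t * u' ^ 2 - (xt t u u' - (1 - θ) * (AL / ft)) ^ 2 := by
    have e1 : (1 - t) * u ^ 2 + t * u' ^ 2 = t * (1 - t) * δ ^ 2 + (xt t u u') ^ 2 := by
      rw [hδ, sq_abs]; unfold xt; ring
    have e2 : AL / ft = t * (1 - t) * E := by rw [eAL, hE]; ring
    rw [e1, e2]
    have w0 : 0 ≤ xt t u u' := by unfold xt; positivity
    have w1 : xt t u u' ≤ 1 := by unfold xt; linarith [mul_nonneg s0.le (sub_nonneg.2 u1), mul_nonneg t0.le (sub_nonneg.2 u1')]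
    set w := xt t u u'
    set s := (1 - θ) * E with hs
    have bs : |s| ≤ 16 * k * δ ^ 2 := by
      rw [hs, abs_mul, abs_of_nonneg m0]
      exact (mul_le_of_le_one_left (abs_nonneg _) m1).trans bE
    have ts : t * (1 - t) ≤ 1 := mul_le_one₀ t1.le s0.le (by linarith)
    have ts0 : 0 ≤ t * (1 - t) := by positivity
    have e3 : w ^ 2 - (w - (1 - θ) * (t * (1 - t) * E)) ^ 2 = t * (1 - t) * (s * (2 * w - t * (1 - t) * s)) := by
      rw [hs]; ring
    have kδ2 : k * δ ^ 2 ≤ 1 / 1000 * δ ^ 2 := mul_le_mul_of_nonneg_right k1.le (sq_nonneg _)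
    have hδ2 : δ ^ 2 ≤ 1 := pow_le_one₀ δ0 δ1
    have c1 : |2 * w - t * (1 - t) * s| ≤ 3 := by
      refine (abs_sub _ _).trans ?_
      rw [abs_of_nonneg (show 0 ≤ 2 * w by linarith), abs_mul, abs_of_nonneg ts0]
      have : t * (1 - t) * |s| ≤ 1 * |s| := mul_le_mul_of_nonneg_right ts (abs_nonneg _)
      linarith
    have c2 : |s * (2 * w - t * (1 - t) * s)| ≤ 48 / 1000 * δ ^ 2 := by
      rw [abs_mul]
      have := mul_le_mul bs c1 (abs_nonneg _) (by positivity)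
      linarith
    have c3 := mul_le_mul_of_nonneg_left (abs_le.1 c2).1 ts0
    have c4 := mul_nonneg ts0 (sq_nonneg δ)
    linarith
  refine ⟨by linarith [(abs_le.1 cα).1], by linarith [(abs_le.1 cβ).1], ?_⟩
  have ts0 : 0 ≤ t * (1 - t) := by positivity
  have z0 : 0 ≤ t * (1 - t) * (95 / 100 * δ ^ 2) := by positivity
  have f1' := mul_le_mul_of_nonneg_left lα s0.le
  have f2' := mul_le_mul_of_nonneg_left lβ t0.le
  have f3' := mul_le_mul_of_nonneg_left sqα s0.le
  have f4' := mul_le_mul_of_nonneg_left sqβ t0.le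
  have f5 : t * (1 - t) * (95 / 100 * δ ^ 2) ≤ K * ((1 - t) * u ^ 2 + t * u' ^ 2 - (xt t u u' - (1 - θ) * (AL / ft)) ^ 2) := by
    refine pot.trans ?_
    have := mul_le_mul_of_nonneg_right hK (z0.trans pot)
    linarith
  have f6 : (k * δ) ^ 2 ≤ 1 / 1000000 * δ ^ 2 := by
    rw [mul_pow]; exact mul_le_mul_of_nonneg_right (by rw [show (1:ℝ)/1000000 = (1/1000)^2 by norm_num]; exact pow_le_pow_left₀ k0.le k1.le 2) (sq_nonneg _)
  have f7 := mul_le_mul_of_nonneg_left f6 ts0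
  have f8 : (1 - t) * (t * (18 * (k * δ))) ^ 2 + t * ((1 - t) * (18 * (k * δ))) ^ 2 =
    324 * (t * (1 - t) * (k * δ) ^ 2) := by ring
  have f9 := mul_nonneg ts0 (sq_nonneg δ)
  linarith

open MeasureTheory ProbabilityTheory
open scoped ENNReal NNReal

/-- The density of the reference measure. -/
noncomputable def wt (f : ℝ → ℝ) (K : ℝ) (z : Pl) : ℝ := (1 / f z.1) * Real.exp (-K * (z.2 / f z.1) ^ 2)

/-- Deviation between the proportional and the linear interpolation. -/
noncomputable def AL (f : ℝ → ℝ) (t : ℝ) (ω : Pl × Pl) : ℝ :=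
  At f t ω.1.1 ω.1.2 ω.2.1 ω.2.2 - xt t ω.1.2 ω.2.2
/-- First partial derivative of the ordinate. -/
noncomputable def GA (f : ℝ → ℝ) (t θ τ : ℝ) (ω : Pl × Pl) : ℝ :=
  1 + θ * (f (xt t ω.1.1 ω.2.1) / f ω.1.1 - 1) + τ / (1 - t) * AL f t ω
/-- Second partial derivative of the ordinate. -/
noncomputable def GB (f : ℝ → ℝ) (t θ τ : ℝ) (ω : Pl × Pl) : ℝ :=
  1 + θ * (f (xt t ω.1.1 ω.2.1) / f ω.2.1 - 1) - τ / t * AL f t ω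

section

lemma wt_pos {f : ℝ → ℝ} {k : ℝ} (hf : GoodF f k) (K : ℝ) (z : Pl) : 0 < wt f K z := by
  have := hf.pos z.1
  unfold wt; positivity

lemma wt_cont {f : ℝ → ℝ} {k : ℝ} (hf : GoodF f k) (K : ℝ) : Continuous (wt f K) := by
  have := hf.cont
  have h2 : ∀ z : Pl, f z.1 ≠ 0 := fun z => (hf.pos z.1).ne'
  unfold wt
  fun_prop (disch := exact h2 _)

lemma wt_log {f : ℝ → ℝ} {k : ℝ} (hf : GoodF f k) (K : ℝ) (z : Pl) : Real.log (wt f K z) = - Real.log (f z.1) - K * (z.2 / f z.1) ^ 2 := by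
  have := hf.pos z.1
  unfold wt
  rw [Real.log_mul (by positivity) (by positivity), Real.log_exp, one_div, Real.log_inv]; ring

lemma jac_fin {f : ℝ → ℝ} {k : ℝ} (hf : GoodF f k) {K t a b : ℝ} {p q z : Pl} (ha : 0 < a) (hb : 0 < b)
    (h : 0 ≤ (1 - t) * Real.log (a * f p.1 / f z.1) + t * Real.log (b * f q.1 / f z.1) +
      K * ((1 - t) * (p.2 / f p.1) ^ 2 + t * (q.2 / f q.1) ^ 2 - (z.2 / f z.1) ^ 2)) :
    wt f K p ^ (1 - t) * wt f K q ^ t ≤ a ^ (1 - t) * b ^ t * wt f K z := by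
  have wp := wt_pos hf K p
  have wq := wt_pos hf K q
  have wz := wt_pos hf K z
  have p0 := hf.pos p.1
  have p1 := hf.pos q.1
  have p2 := hf.pos z.1
  rw [← Real.log_le_log_iff (by positivity) (by positivity), Real.log_mul (by positivity) (by positivity),
    Real.log_mul (by positivity) (by positivity), Real.log_mul (by positivity) (by positivity),
    Real.log_rpow wp, Real.log_rpow wq, Real.log_rpow ha, Real.log_rpow hb, wt_log hf, wt_log hf, wt_log hf]
  rw [Real.log_div (by positivity) p2.ne', Real.log_mul ha.ne' p0.ne',
    Real.log_div (by positivity) p2.ne', Real.log_mul hb.ne' p1.ne'] at h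
  linarith

lemma jac {f : ℝ → ℝ} {k : ℝ} (hf : GoodF f k) {K t θ τ : ℝ} (hK : 1 ≤ K) (t0 : 0 < t) (t1 : t < 1) {ω : Pl × Pl} (hω : ω ∈ XX f ×ˢ XX f)
    (hY : (Mt f t ω).2 = xt t ω.1.2 ω.2.2 + θ * AL f t ω)
    (hc : (θ = 1 ∧ τ = 0) ∨ (0 ≤ θ ∧ θ ≤ 1 ∧ |τ| * |ω.2.1 - ω.1.1| ≤ 2 ∧
      |ω.2.1 - ω.1.1| ≤ 2 * |ω.2.2 - ω.1.2|)) :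
    0 < GA f t θ τ ω ∧ 0 < GB f t θ τ ω ∧
    wt f K ω.1 ^ (1 - t) * wt f K ω.2 ^ t ≤ GA f t θ τ ω ^ (1 - t) * GB f t θ τ ω ^ t * wt f K (Mt f t ω) := by
  obtain ⟨⟨x, y⟩, ⟨x', y'⟩⟩ := ω
  obtain ⟨⟨⟨-, a2⟩, hy0, hy1⟩, ⟨⟨-, b2⟩, hy0', hy1'⟩⟩ := hω
  have k0 := hf.k0
  have k1 := hf.k1
  simp only at hy0 hy1 hy0' hy1' a2 b2
  have s0 : 0 < 1 - t := by linarith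
  have p0 := hf.pos x
  have p1 := hf.pos x'
  have pt := hf.pos (xt t x x')
  set u := y / f x with hu
  set u' := y' / f x' with hu'
  have ey : y = f x * u := by rw [hu]; field_simp
  have ey' : y' = f x' * u' := by rw [hu']; field_simp
  have u0 : 0 ≤ u := by positivity
  have u0' : 0 ≤ u' := by positivity
  have u1 : u ≤ 1 := by rw [hu, div_le_one p0]; exact hy1
  have u1' : u' ≤ 1 := by rw [hu', div_le_one p1]; exact hy1'
  set ω : Pl × Pl := ((x, y), (x', y')) with hω
  have eM1 : (Mt f t ω).1 = xt t x x' := rfl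
  have eAL : AL f t ω = (1 - t) * (f (xt t x x') - f x) * u + t * (f (xt t x x') - f x') * u' := by
    have : AL f t ω = f (xt t x x') * xt t u u' - xt t y y' := rfl
    rw [this, ey, ey']; unfold xt; ring
  have eYu : (Mt f t ω).2 / f (Mt f t ω).1 = xt t u u' - (1 - θ) * (AL f t ω / f (xt t x x')) := by
    rw [hY, eM1]
    have : xt t y y' = f (xt t x x') * xt t u u' - AL f t ω := by
      have : AL f t ω = f (xt t x x') * xt t u u' - xt t y y' := rfl
      rw [this]; ring
    change (xt t y y' + θ * AL f t ω) / _ = _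
    rw [this]; field_simp; ring
  have eA : GA f t θ τ ω = 1 + θ * (f (xt t x x') / f x - 1) + τ / (1 - t) * AL f t ω := rfl
  have eB : GB f t θ τ ω = 1 + θ * (f (xt t x x') / f x' - 1) - τ / t * AL f t ω := rfl
  rcases hc with ⟨rfl, rfl⟩ | ⟨θ0, θ1, hτ, hd⟩
  · have eA' : GA f t 1 0 ω = f (xt t x x') / f x := by rw [eA]; ring
    have eB' : GB f t 1 0 ω = f (xt t x x') / f x' := by rw [eB]; ring
    have gA : 0 < GA f t 1 0 ω := by rw [eA']; positivity
    have gB : 0 < GB f t 1 0 ω := by rw [eB']; positivity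
    refine ⟨gA, gB, jac_fin hf gA gB ?_⟩
    rw [eYu, eA', eB']
    have q1 : f (xt t x x') / f x * f ω.1.1 / f (Mt f t ω).1 = 1 := by
      change f (xt t x x') / f x * f x / f (xt t x x') = 1
      field_simp
    have q2 : f (xt t x x') / f x' * f ω.2.1 / f (Mt f t ω).1 = 1 := by
      change f (xt t x x') / f x' * f x' / f (xt t x x') = 1
      field_simp
    rw [q1, q2, Real.log_one]
    change 0 ≤ (1 - t) * 0 + t * 0 + K * ((1 - t) * u ^ 2 + t * u' ^ 2 - _)
    have : (1 - t) * u ^ 2 + t * u' ^ 2 - (xt t u u' - (1 - 1) * (AL f t ω / f (xt t x x'))) ^ 2 =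
      t * (1 - t) * (u - u') ^ 2 := by unfold xt; ring
    rw [this]
    have := mul_nonneg (mul_nonneg t0.le s0.le) (sq_nonneg (u - u'))
    have : 0 ≤ K := by linarith
    positivity
  · change |τ| * |x' - x| ≤ 2 at hτ
    change |x' - x| ≤ 2 * |y' - y| at hd
    rw [ey, ey'] at hd
    set D := |x' - x| with hD
    have d0 : |x - xt t x x'| = t * |x' - x| := by
      have : x - xt t x x' = - (t * (x' - x)) := by unfold xt; ring
      rw [this, abs_neg, abs_mul, abs_of_nonneg t0.le]
    have d1 : |x' - xt t x x'| = (1 - t) * |x' - x| := by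
      have : x' - xt t x x' = (1 - t) * (x' - x) := by unfold xt; ring
      rw [this, abs_mul, abs_of_nonneg s0.le]
    have l0 := f_lip hf (xt t x x') x
    have l1 := f_lip hf (xt t x x') x'
    rw [d0] at l0
    rw [d1] at l1
    have pk : f (xt t x x') ≤ 3 * k := by
      apply hf.up; unfold xt; nlinarith
    set g := ((1 - t) * f x + t * f x' - f (xt t x x')) / (t * (1 - t)) with hg
    have ts : 0 < t * (1 - t) := by positivity
    have hg' : t * (1 - t) * g = (1 - t) * f x + t * f x' - f (xt t x x') := by
      rw [hg, mul_div_cancel₀ _ ts.ne']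
    have g0 : 0 ≤ g := by
      have := hf.conv t t0.le t1.le x x'
      apply div_nonneg _ ts.le
      unfold xt; linarith
    have g1 : g ≤ D ^ 2 := by
      have := hf.conc t t0.le t1.le x x'
      rw [hg, div_le_iff₀ ts, hD, sq_abs]
      unfold xt; linarith
    have hα : GA f t θ τ ω * f x / f (xt t x x') - 1 = (1 - θ) * ((f x - f (xt t x x')) / f (xt t x x'))
        + τ / (1 - t) * AL f t ω * (f x / f (xt t x x')) := by
      rw [eA]; field_simp; ring
    have hβ : GB f t θ τ ω * f x' / f (xt t x x') - 1 = (1 - θ) * ((f x' - f (xt t x x')) / f (xt t x x'))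
        - τ / t * AL f t ω * (f x' / f (xt t x x')) := by
      rw [eB]; field_simp; ring
    obtain ⟨c1, c2, c3⟩ := jac_core t0 t1 k0 k1 hK u0 u1 u0' u1' p0 p1 pt pk (abs_nonneg _) l0 l1 (f_lip hf x x')
      hg' g0 g1 hd θ0 θ1 hτ eAL hα hβ
    rw [add_sub_cancel] at c1 c2 c3
    rw [add_sub_cancel] at c3
    have gA : 0 < GA f t θ τ ω := by
      rw [div_pos_iff_of_pos_right pt, mul_pos_iff_of_pos_right p0] at c1; exact c1
    have gB : 0 < GB f t θ τ ω := by
      rw [div_pos_iff_of_pos_right pt, mul_pos_iff_of_pos_right p1] at c2; exact c2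
    refine ⟨gA, gB, jac_fin hf gA gB ?_⟩
    rw [eYu]
    exact c3

/-- Exact increments of the ordinate. -/
lemma Yincr {f : ℝ → ℝ} {k : ℝ} (hf : GoodF f k) {t c τ : ℝ} (t0 : 0 < t) (t1 : t < 1) {ω η : Pl × Pl} (e1 : ω.1.1 = η.1.1) (e2 : ω.2.1 = η.2.1)
    (hω : (Mt f t ω).2 = xt t ω.1.2 ω.2.2 + (c - τ * (ω.2.2 - ω.1.2)) * AL f t ω)
    (hη : (Mt f t η).2 = xt t η.1.2 η.2.2 + (c - τ * (η.2.2 - η.1.2)) * AL f t η) :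
    (Mt f t η).2 - (Mt f t ω).2 =
      (GA f t (c - τ * (ω.2.2 - ω.1.2)) τ ω + GA f t (c - τ * (η.2.2 - η.1.2)) τ η) / 2 * (1 - t) * (η.1.2 - ω.1.2) +
      (GB f t (c - τ * (ω.2.2 - ω.1.2)) τ ω + GB f t (c - τ * (η.2.2 - η.1.2)) τ η) / 2 * t * (η.2.2 - ω.2.2) := by
  obtain ⟨⟨x, y⟩, ⟨x', y'⟩⟩ := ω
  obtain ⟨⟨a, b⟩, ⟨a', b'⟩⟩ := η
  simp only at e1 e2
  subst e1 e2
  rw [hω, hη]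
  have s0 : (1 - t) ≠ 0 := by linarith
  have p0 := (hf.pos x).ne'
  have p1 := (hf.pos x').ne'
  have eAL : ∀ y y', AL f t ((x, y), (x', y')) = (1 - t) * (f (xt t x x') / f x - 1) * y +
      t * (f (xt t x x') / f x' - 1) * y' := by
    intro y y'
    change f (xt t x x') * xt t (y / f x) (y' / f x') - xt t y y' = _
    unfold xt; field_simp; ring
  simp only [GA, GB, eAL]
  set P := f (xt t x x') / f x
  set Q := f (xt t x x') / f x'
  unfold xt
  have t0' := t0.ne'
  field_simp
  ring

end

open MeasureTheory ProbabilityTheory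
open scoped ENNReal NNReal

/-- A piece of the coupling on which the mass estimate holds. -/
structure GPiece (f : ℝ → ℝ) (K t : ℝ) (v0 v1 : Pl → ℝ) (π : Measure (Pl × Pl)) (P : Set (Pl × Pl)) : Prop where
  meas : MeasurableSet P
  ex : ∃ ga gb : Pl × Pl → ℝ, Measurable ga ∧ Measurable gb ∧ (∀ ω ∈ P, 0 < ga ω ∧ 0 < gb ω ∧
      wt f K ω.1 ^ (1 - t) * wt f K ω.2 ^ t ≤ ga ω ^ (1 - t) * gb ω ^ t * wt f K (Mt f t ω)) ∧
    ∀ A B α β : ℝ, 0 < A → 0 < B → 0 < α → 0 < β → ∀ S ⊆ P, MeasurableSet S →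
      (∀ ω ∈ S, A ≤ ga ω ∧ B ≤ gb ω ∧ v0 ω.1 ≤ α ∧ v1 ω.2 ≤ β) →
      ENNReal.ofReal A ^ (1 - t) * ENNReal.ofReal B ^ t * π S ≤
        ENNReal.ofReal α ^ (1 - t) * ENNReal.ofReal β ^ t * volume (Mt f t '' S)

noncomputable def hB (f : ℝ → ℝ) (K t : ℝ) (v0 v1 : Pl → ℝ) (ω : Pl × Pl) : ℝ :=
  v0 ω.1 ^ (1 - t) * v1 ω.2 ^ t * wt f K (Mt f t ω) / (wt f K ω.1 ^ (1 - t) * wt f K ω.2 ^ t)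

/-- Level sets. -/
def Lev (r : ℝ) (ga gb : Pl × Pl → ℝ) (v0 v1 : Pl → ℝ) (n : (ℤ × ℤ) × (ℤ × ℤ)) : Set (Pl × Pl) :=
  (ga ⁻¹' Set.Ico (r ^ n.1.1) (r ^ (n.1.1 + 1)) ∩ gb ⁻¹' Set.Ico (r ^ n.1.2) (r ^ (n.1.2 + 1))) ∩
  ((fun ω => v0 ω.1) ⁻¹' Set.Ioc (r ^ n.2.1) (r ^ (n.2.1 + 1)) ∩
    (fun ω => v1 ω.2) ⁻¹' Set.Ioc (r ^ n.2.2) (r ^ (n.2.2 + 1)))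

lemma Lev_meas {r : ℝ} {ga gb : Pl × Pl → ℝ} {v0 v1 : Pl → ℝ} (h1 : Measurable ga) (h2 : Measurable gb)
    (h3 : Measurable v0) (h4 : Measurable v1) (n) : MeasurableSet (Lev r ga gb v0 v1 n) :=
  ((h1 measurableSet_Ico).inter (h2 measurableSet_Ico)).inter
    (((h3.comp measurable_fst) measurableSet_Ioc).inter ((h4.comp measurable_snd) measurableSet_Ioc))

lemma Lev_cover {r : ℝ} (hr : 1 < r) {ga gb : Pl × Pl → ℝ} {v0 v1 : Pl → ℝ} {ω : Pl × Pl} (h1 : 0 < ga ω)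
    (h2 : 0 < gb ω) (h3 : 0 < v0 ω.1) (h4 : 0 < v1 ω.2) : ∃ n, ω ∈ Lev r ga gb v0 v1 n := by
  obtain ⟨a, ha⟩ := exists_mem_Ico_zpow h1 hr
  obtain ⟨b, hb⟩ := exists_mem_Ico_zpow h2 hr
  obtain ⟨c, hc⟩ := exists_mem_Ioc_zpow h3 hr
  obtain ⟨d, hd⟩ := exists_mem_Ioc_zpow h4 hr
  exact ⟨((a, b), (c, d)), ⟨ha, hb⟩, ⟨hc, hd⟩⟩

lemma rpow_pair_le {t a b c d r : ℝ} (t0 : 0 < t) (t1 : t < 1) (hr : 0 < r) (ha : 0 < a) (hb : 0 < b)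
    (hc : 0 < c) (hd : 0 < d) (h1 : a ≤ r * c) (h2 : b ≤ r * d) :
    a ^ (1 - t) * b ^ t ≤ r * (c ^ (1 - t) * d ^ t) := by
  have s0 : 0 < 1 - t := by linarith
  calc a ^ (1 - t) * b ^ t ≤ (r * c) ^ (1 - t) * (r * d) ^ t := by gcongr
    _ = (r ^ (1 - t) * r ^ t) * (c ^ (1 - t) * d ^ t) := by
      rw [Real.mul_rpow hr.le hc.le, Real.mul_rpow hr.le hd.le]; ring
    _ = _ := by rw [← Real.rpow_add hr]; simp

lemma ofReal_pair {t A B : ℝ} (hA : 0 < A) (hB : 0 < B) :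
    ENNReal.ofReal A ^ (1 - t) * ENNReal.ofReal B ^ t = ENNReal.ofReal (A ^ (1 - t) * B ^ t) := by
  rw [ENNReal.ofReal_rpow_of_pos hA, ENNReal.ofReal_rpow_of_pos hB, ENNReal.ofReal_mul (by positivity)]

section

lemma level_bound {f : ℝ → ℝ} {k : ℝ} (hf : GoodF f k) {K t r : ℝ} (t0 : 0 < t) (t1 : t < 1) (hr : 1 < r) {v0 v1 : Pl → ℝ}
    {π : Measure (Pl × Pl)} {P : Set (Pl × Pl)} (hm0 : Measurable v0) (hm1 : Measurable v1)
    (hP : GPiece f K t v0 v1 π P) :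
    ∃ (L : (ℤ × ℤ) × (ℤ × ℤ) → Set (Pl × Pl)) (C : (ℤ × ℤ) × (ℤ × ℤ) → ℝ),
      (∀ n, MeasurableSet (L n)) ∧ (∀ ω ∈ P, 0 < v0 ω.1 → 0 < v1 ω.2 → ∃ n, ω ∈ L n) ∧
      (∀ n, ∀ ω ∈ P ∩ L n, C n ≤ r ^ 2 * hB f K t v0 v1 ω) ∧
      ∀ n, ∀ S ⊆ P ∩ L n, MeasurableSet S → π S ≤ ENNReal.ofReal (C n) * volume (Mt f t '' S) := by
  obtain ⟨ga, gb, mga, mgb, hpos, hmass⟩ := hP.ex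
  have r0 : 0 < r := by linarith
  refine ⟨Lev r ga gb v0 v1, fun n => ((r ^ (n.2.1 + 1)) ^ (1 - t) * (r ^ (n.2.2 + 1)) ^ t) /
    ((r ^ n.1.1) ^ (1 - t) * (r ^ n.1.2) ^ t), Lev_meas mga mgb hm0 hm1, ?_, ?_, ?_⟩
  · intro ω hω h1 h2
    exact Lev_cover hr (hpos ω hω).1 (hpos ω hω).2.1 h1 h2
  · rintro ⟨⟨n1, n2⟩, ⟨n3, n4⟩⟩ ω ⟨hω, ⟨ha, hb⟩, ⟨hc, hd⟩⟩
    simp only [Set.mem_preimage, Set.mem_Ico, Set.mem_Ioc] at ha hb hc hd ⊢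
    obtain ⟨pa, pb, hj⟩ := hpos ω hω
    have c0 : 0 < v0 ω.1 := lt_trans (by positivity) hc.1
    have c1 : 0 < v1 ω.2 := lt_trans (by positivity) hd.1
    have w0 := wt_pos hf K ω.1
    have w1 := wt_pos hf K ω.2
    have w2 := wt_pos hf K (Mt f t ω)
    have e : ∀ n : ℤ, r ^ (n + 1) = r * r ^ n := fun n => by rw [zpow_add_one₀ r0.ne', mul_comm]
    have i1 : (r ^ (n3 + 1)) ^ (1 - t) * (r ^ (n4 + 1)) ^ t ≤ r * (v0 ω.1 ^ (1 - t) * v1 ω.2 ^ t) := by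
      apply rpow_pair_le t0 t1 r0 (by positivity) (by positivity) c0 c1
      · rw [e]; gcongr; exact hc.1.le
      · rw [e]; gcongr; exact hd.1.le
    have i2 : ga ω ^ (1 - t) * gb ω ^ t ≤ r * ((r ^ n1) ^ (1 - t) * (r ^ n2) ^ t) := by
      apply rpow_pair_le t0 t1 r0 pa pb (by positivity) (by positivity)
      · rw [← e]; exact ha.2.le
      · rw [← e]; exact hb.2.le
    unfold hB
    rw [div_le_iff₀ (by positivity)]
    set W := wt f K ω.1 ^ (1 - t) * wt f K ω.2 ^ t with hW
    have W0 : 0 < W := by positivity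
    set Q := (r ^ n1) ^ (1 - t) * (r ^ n2) ^ t with hQ
    have Q0 : 0 < Q := by positivity
    set V := v0 ω.1 ^ (1 - t) * v1 ω.2 ^ t with hV
    have V0 : 0 < V := by positivity
    have i3 : W ≤ r * Q * wt f K (Mt f t ω) := hj.trans (by gcongr)
    refine i1.trans ?_
    have : r ^ 2 * (V * wt f K (Mt f t ω) / W) * Q = r * V * ((r * Q * wt f K (Mt f t ω)) / W) := by
      field_simp
    rw [this]
    have : 1 ≤ (r * Q * wt f K (Mt f t ω)) / W := by rw [le_div_iff₀ W0]; linarith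
    exact le_mul_of_one_le_right (by positivity) this
  · rintro ⟨⟨n1, n2⟩, ⟨n3, n4⟩⟩ S hS mS
    have := hmass (r ^ n1) (r ^ n2) (r ^ (n3 + 1)) (r ^ (n4 + 1)) (by positivity) (by positivity)
      (by positivity) (by positivity) S (hS.trans Set.inter_subset_left) mS (by
        intro ω hω
        obtain ⟨-, ⟨ha, hb⟩, ⟨hc, hd⟩⟩ := hS hω
        exact ⟨ha.1, hb.1, hc.2, hd.2⟩)
    rw [ofReal_pair (by positivity) (by positivity), ofReal_pair (by positivity) (by positivity)] at this
    simp only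
    have hq : 0 < (r ^ n1) ^ (1 - t) * (r ^ n2) ^ t := by positivity
    rw [ENNReal.ofReal_div_of_pos hq, ENNReal.div_eq_inv_mul, mul_assoc]
    rw [← ENNReal.div_eq_inv_mul, ENNReal.le_div_iff_mul_le (Or.inl (by simpa using hq)) (Or.inl (by simp)), mul_comm]
    exact this

lemma null_a {f : ℝ → ℝ} {k : ℝ} (hf : GoodF f k) {K t : ℝ} (t0 : 0 < t) (t1 : t < 1) {v0 v1 : Pl → ℝ}
    {π : Measure (Pl × Pl)} {P : Set (Pl × Pl)} (hm0 : Measurable v0) (hm1 : Measurable v1)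
    (hP : GPiece f K t v0 v1 π P) {E : Set Pl} (hE : MeasurableSet E) (hE0 : volume E = 0) :
    π (P ∩ {ω | 0 < v0 ω.1 ∧ 0 < v1 ω.2} ∩ Mt f t ⁻¹' E) = 0 := by
  obtain ⟨L, C, mL, cov, -, hL⟩ := level_bound hf t0 t1 one_lt_two hm0 hm1 hP
  refine measure_mono_null (t := ⋃ n, (P ∩ L n) ∩ Mt f t ⁻¹' E) ?_ ?_
  · rintro ω ⟨⟨h1, h2, h3⟩, h4⟩
    obtain ⟨n, hn⟩ := cov ω h1 h2 h3
    exact Set.mem_iUnion.2 ⟨n, ⟨h1, hn⟩, h4⟩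
  · rw [measure_iUnion_null_iff]
    intro n
    have := hL n ((P ∩ L n) ∩ Mt f t ⁻¹' E) Set.inter_subset_left
      ((hP.meas.inter (mL n)).inter ((Mt_meas hf t) hE))
    have h0 : volume (Mt f t '' ((P ∩ L n) ∩ Mt f t ⁻¹' E)) = 0 :=
      measure_mono_null (by rintro _ ⟨ω, hω, rfl⟩; exact hω.2) hE0
    rw [h0, mul_zero] at this
    exact le_antisymm this (zero_le)

lemma null_b {f : ℝ → ℝ} {k : ℝ} (hf : GoodF f k) {K t r : ℝ} (t0 : 0 < t) (t1 : t < 1) (hr : 1 < r) {v0 v1 : Pl → ℝ}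
    {π : Measure (Pl × Pl)} {P Γ : Set (Pl × Pl)} (hm0 : Measurable v0) (hm1 : Measurable v1)
    (hP : GPiece f K t v0 v1 π P) (hΓ : GoodG f t Γ) (hΓ0 : π Γᶜ = 0) (hPΓ : P ⊆ Γ)
    {vt : Pl → ℝ≥0∞} (hvt : Measurable vt)
    (hd : ∀ E, MeasurableSet E → π (Mt f t ⁻¹' E) = ∫⁻ z in E, vt z) :
    π (P ∩ {ω | 0 < v0 ω.1 ∧ 0 < v1 ω.2} ∩
      {ω | ENNReal.ofReal (r ^ 2 * hB f K t v0 v1 ω) < vt (Mt f t ω)}) = 0 := by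
  obtain ⟨L, C, mL, cov, hC, hL⟩ := level_bound hf t0 t1 hr hm0 hm1 hP
  have mM := Mt_meas hf t
  have mw := (wt_cont hf K).measurable
  have mbad : MeasurableSet {ω | ENNReal.ofReal (r ^ 2 * hB f K t v0 v1 ω) < vt (Mt f t ω)} := by
    apply measurableSet_lt
    · unfold hB; fun_prop
    · fun_prop
  set bad := {ω | ENNReal.ofReal (r ^ 2 * hB f K t v0 v1 ω) < vt (Mt f t ω)}
  refine measure_mono_null (t := ⋃ n, (P ∩ L n) ∩ bad) ?_ ?_
  · rintro ω ⟨⟨h1, h2, h3⟩, h4⟩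
    obtain ⟨n, hn⟩ := cov ω h1 h2 h3
    exact Set.mem_iUnion.2 ⟨n, ⟨h1, hn⟩, h4⟩
  · rw [measure_iUnion_null_iff]
    intro n
    set S := (P ∩ L n) ∩ bad with hS
    have mS : MeasurableSet S := (hP.meas.inter (mL n)).inter mbad
    have SΓ : S ⊆ Γ := fun ω h => hPΓ h.1.1
    have h1 := hL n S Set.inter_subset_left mS
    have mI : MeasurableSet (Mt f t '' S) := mS.image_of_measurable_injOn mM (hΓ.inj.mono SΓ)
    have h2 : π S = ∫⁻ z in Mt f t '' S, vt z := by
      rw [← hd _ mI]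
      apply le_antisymm (measure_mono (Set.subset_preimage_image _ _))
      have : Mt f t ⁻¹' (Mt f t '' S) ⊆ S ∪ Γᶜ := by
        rintro ω ⟨η, hη, e⟩
        by_cases h : ω ∈ Γ
        · left; rw [← hΓ.inj (SΓ hη) h e]; exact hη
        · right; exact h
      refine (measure_mono this).trans ((measure_union_le _ _).trans ?_)
      rw [hΓ0, add_zero]
    by_contra hne
    have hv : volume (Mt f t '' S) ≠ 0 := by
      intro h0
      rw [h0, mul_zero] at h1
      exact hne (le_antisymm h1 (zero_le))
    have hfin : volume (Mt f t '' S) ≠ ∞ := by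
      refine ne_top_of_le_ne_top (XX_compact hf).measure_lt_top.ne (measure_mono ?_)
      rintro _ ⟨ω, hω, rfl⟩
      exact Mt_mem hf t0.le t1.le (hΓ.sub (SΓ hω)).1 (hΓ.sub (SΓ hω)).2
    have h3 : ∫⁻ z in Mt f t '' S, ENNReal.ofReal (C n) < ∫⁻ z in Mt f t '' S, vt z := by
      apply setLIntegral_strict_mono mI hv hvt
      · rw [setLIntegral_const]; exact ENNReal.mul_ne_top ENNReal.ofReal_ne_top hfin
      · refine Filter.Eventually.of_forall ?_
        rintro _ ⟨ω, hω, rfl⟩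
        exact (ENNReal.ofReal_le_ofReal (hC n ω hω.1)).trans_lt hω.2
    rw [setLIntegral_const, ← h2] at h3
    exact absurd h1 (not_le.2 h3)

end

open MeasureTheory ProbabilityTheory
open scoped ENNReal NNReal

lemma dens_bound {π : Measure (Pl × Pl)} {v : Pl → ℝ} (hv : Measurable v) {g : Pl × Pl → Pl} (hd : ∀ E, MeasurableSet E → π (g ⁻¹' E) = ∫⁻ z in E, ENNReal.ofReal (v z))
    {S : Set (Pl × Pl)} {α : ℝ} (hS : ∀ ω ∈ S, v (g ω) ≤ α) (E : Set Pl) (hE : MeasurableSet E) :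
    π (S ∩ g ⁻¹' E) ≤ ENNReal.ofReal α * volume E := by
  have hm : MeasurableSet (E ∩ {z | v z ≤ α}) := hE.inter (hv measurableSet_Iic)
  calc π (S ∩ g ⁻¹' E) ≤ π (g ⁻¹' (E ∩ {z | v z ≤ α})) :=
        measure_mono fun ω hω => ⟨hω.2, hS ω hω.1⟩
    _ = ∫⁻ z in E ∩ {z | v z ≤ α}, ENNReal.ofReal (v z) := hd _ hm
    _ ≤ ∫⁻ z in E ∩ {z | v z ≤ α}, ENNReal.ofReal α :=
        setLIntegral_mono' hm fun z hz => ENNReal.ofReal_le_ofReal hz.2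
    _ = ENNReal.ofReal α * volume (E ∩ {z | v z ≤ α}) := by simp
    _ ≤ _ := by gcongr; exact Set.inter_subset_left

section

lemma gpiece_of {f : ℝ → ℝ} {k : ℝ} (hf : GoodF f k) {K t : ℝ} (t0 : 0 < t) (t1 : t < 1) {v0 v1 : Pl → ℝ}
    {π : Measure (Pl × Pl)} [IsFiniteMeasure π] (hm0 : Measurable v0) (hm1 : Measurable v1)
    (hd0 : ∀ E, MeasurableSet E → π (Prod.fst ⁻¹' E) = ∫⁻ z in E, ENNReal.ofReal (v0 z))
    (hd1 : ∀ E, MeasurableSet E → π (Prod.snd ⁻¹' E) = ∫⁻ z in E, ENNReal.ofReal (v1 z))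
    {P : Set (Pl × Pl)} (hP : MeasurableSet P)
    (e : Pl ≃ᵐ Pl) (ep : MeasurePreserving e volume volume) {ga gb : Pl × Pl → ℝ}
    (hga : Measurable ga) (hgb : Measurable gb)
    (hj : ∀ ω ∈ P, 0 < ga ω ∧ 0 < gb ω ∧
      wt f K ω.1 ^ (1 - t) * wt f K ω.2 ^ t ≤ ga ω ^ (1 - t) * gb ω ^ t * wt f K (Mt f t ω))
    (hZ : ∀ ω ∈ P, (e (Mt f t ω)).1 = (1 - t) * (e ω.1).1 + t * (e ω.2).1)
    (ha : ∀ ω ∈ P, ∀ ω' ∈ P, (e ω.1).1 < (e ω'.1).1 → (e ω.2).1 ≤ (e ω'.2).1)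
    (hb : ∀ ω ∈ P, ∀ ω' ∈ P, (e ω.1).1 = (e ω'.1).1 → (e ω.2).1 = (e ω'.2).1 →
      (((e ω.1).2 ≤ (e ω'.1).2 ∧ (e ω.2).2 ≤ (e ω'.2).2) ∨ ((e ω'.1).2 ≤ (e ω.1).2 ∧ (e ω'.2).2 ≤ (e ω.2).2)) ∧
       (e (Mt f t ω')).2 - (e (Mt f t ω)).2 = (ga ω + ga ω') / 2 * (1 - t) * ((e ω'.1).2 - (e ω.1).2) +
         (gb ω + gb ω') / 2 * t * ((e ω'.2).2 - (e ω.2).2)) :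
    GPiece f K t v0 v1 π P := by
  refine ⟨hP, ga, gb, hga, hgb, hj, ?_⟩
  intro A B α β hA hB _ _ S hSP hS hb'
  refine tri_gen hS e ep t0 t1 (Mt f t) (fun ω h => hZ ω (hSP h)) (fun ω h η h' => ha ω (hSP h) η (hSP h'))
    hA hB ?_ (dens_bound hm0 hd0 fun ω h => (hb' ω h).2.2.1) (dens_bound hm1 hd1 fun ω h => (hb' ω h).2.2.2)
  intro ω h η h' e1 e2
  obtain ⟨h3, h4⟩ := hb ω (hSP h) η (hSP h') e1 e2
  obtain ⟨a1, b1, -⟩ := hb' ω h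
  obtain ⟨a2, b2, -⟩ := hb' η h'
  have s0 : 0 < 1 - t := by linarith
  rcases h3 with ⟨h5, h6⟩ | ⟨h5, h6⟩
  · left
    refine ⟨h5, h6, ?_⟩
    rw [h4]
    have c1 : 0 ≤ ((ga ω + ga η) / 2 - A) * ((1 - t) * ((e η.1).2 - (e ω.1).2)) :=
      mul_nonneg (by linarith) (mul_nonneg s0.le (by linarith))
    have c2 : 0 ≤ ((gb ω + gb η) / 2 - B) * (t * ((e η.2).2 - (e ω.2).2)) :=
      mul_nonneg (by linarith) (mul_nonneg t0.le (by linarith))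
    linarith
  · right
    refine ⟨h5, h6, ?_⟩
    have c1 : 0 ≤ ((ga ω + ga η) / 2 - A) * ((1 - t) * ((e ω.1).2 - (e η.1).2)) :=
      mul_nonneg (by linarith) (mul_nonneg s0.le (by linarith))
    have c2 : 0 ≤ ((gb ω + gb η) / 2 - B) * (t * ((e ω.2).2 - (e η.2).2)) :=
      mul_nonneg (by linarith) (mul_nonneg t0.le (by linarith))
    linarith

/-- `θ` and `τ` as functions for a horizontal piece. -/
lemma hor_piece {f : ℝ → ℝ} {k : ℝ} (hf : GoodF f k) {K t : ℝ} (hK : 1 ≤ K) (t0 : 0 < t) (t1 : t < 1) {v0 v1 : Pl → ℝ}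
    {π : Measure (Pl × Pl)} [IsFiniteMeasure π] (hm0 : Measurable v0) (hm1 : Measurable v1)
    (hd0 : ∀ E, MeasurableSet E → π (Prod.fst ⁻¹' E) = ∫⁻ z in E, ENNReal.ofReal (v0 z))
    (hd1 : ∀ E, MeasurableSet E → π (Prod.snd ⁻¹' E) = ∫⁻ z in E, ENNReal.ofReal (v1 z))
    {Γ : Set (Pl × Pl)} (hΓ : GoodG f t Γ) {P : Set (Pl × Pl)} (hP : MeasurableSet P) (hPΓ : P ⊆ Γ)
    (σ c s : ℝ) (hσ : σ = 1 ∨ σ = -1)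
    (hO : ∀ ω ∈ P, ∀ η ∈ P, |η.2.2 - ω.1.2| < σ * (η.2.1 - ω.1.1))
    (hθ : ∀ ω ∈ P, thS (ω.2.1 - ω.1.1) (ω.2.2 - ω.1.2) = c - s / |ω.2.1 - ω.1.1| * (ω.2.2 - ω.1.2))
    (hc : ∀ ω ∈ P, (c = 1 ∧ s = 0) ∨ (|s| ≤ 2 ∧ |ω.2.1 - ω.1.1| ≤ 2 * |ω.2.2 - ω.1.2|)) :
    GPiece f K t v0 v1 π P := by
  have hh : ∀ ω ∈ P, |ω.2.2 - ω.1.2| < |ω.2.1 - ω.1.1| := by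
    intro ω h
    refine (hO ω h ω h).trans_le ?_
    rcases hσ with rfl | rfl
    · rw [one_mul]; exact le_abs_self _
    · rw [neg_one_mul]; exact neg_le_abs _
  have hY : ∀ ω ∈ P, (Mt f t ω).2 = xt t ω.1.2 ω.2.2 + (c - s / |ω.2.1 - ω.1.1| * (ω.2.2 - ω.1.2)) * AL f t ω := by
    intro ω h
    rw [← hθ ω h]; rfl
  have mf := hf.cont.measurable
  have mAL : Measurable (AL f t) := by
    unfold AL At xt; fun_prop
  refine gpiece_of hf t0 t1 hm0 hm1 hd0 hd1 hP (MeasurableEquiv.refl _) (MeasurePreserving.id _)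
    (ga := fun ω => GA f t (c - s / |ω.2.1 - ω.1.1| * (ω.2.2 - ω.1.2)) (s / |ω.2.1 - ω.1.1|) ω)
    (gb := fun ω => GB f t (c - s / |ω.2.1 - ω.1.1| * (ω.2.2 - ω.1.2)) (s / |ω.2.1 - ω.1.1|) ω)
    ?_ ?_ ?_ ?_ ?_ ?_
  · unfold GA xt; fun_prop
  · unfold GB xt; fun_prop
  · intro ω h
    refine jac hf hK t0 t1 (hΓ.sub (hPΓ h)) (hY ω h) ?_
    rcases hc ω h with ⟨rfl, rfl⟩ | ⟨h1, h2⟩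
    · left; simp
    · right
      rw [← hθ ω h]
      refine ⟨thS_nonneg _ _, thS_le_one _ _, ?_, h2⟩
      rw [abs_div, abs_abs, div_mul_cancel₀]
      · exact h1
      · exact ((abs_nonneg _).trans_lt (hh ω h)).ne'
  · intro ω h; rfl
  · intro ω h η h' hlt
    change ω.1.1 < η.1.1 at hlt
    change ω.2.1 ≤ η.2.1
    have hcy := hΓ.cyc ω (hPΓ h) η (hPΓ h')
    have key : ∀ ω ∈ P, ∀ η ∈ P, cst1 (ω.1, η.2) = (η.2.1 - ω.1.1) ^ 2 := by
      intro ω h η h'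
      have := hO ω h η h'
      rw [cst1_eq, max_eq_left, sq_abs]
      refine this.le.trans ?_
      rcases hσ with rfl | rfl
      · rw [one_mul]; exact le_abs_self _
      · rw [neg_one_mul]; exact neg_le_abs _
    have k1 := key ω h ω h
    have k2 := key η h' η h'
    rw [key ω h η h', key η h' ω h] at hcy
    change cst1 ω = _ at k1
    change cst1 η = _ at k2
    rw [k1, k2] at hcy
    by_contra hcon
    push Not at hcon
    have := mul_pos (sub_pos.2 hlt) (sub_pos.2 hcon)
    linarith
  · intro ω h η h' e1 e2
    change ω.1.1 = η.1.1 at e1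
    change ω.2.1 = η.2.1 at e2
    constructor
    · change (ω.1.2 ≤ η.1.2 ∧ ω.2.2 ≤ η.2.2) ∨ (η.1.2 ≤ ω.1.2 ∧ η.2.2 ≤ ω.2.2)
      rcases lt_trichotomy ω.1.2 η.1.2 with h3 | h3 | h3
      · exact Or.inl ⟨h3.le, hΓ.hor ω (hPΓ h) η (hPΓ h') e1 e2 (hh ω h) (hh η h') h3⟩
      · rcases le_total ω.2.2 η.2.2 with h4 | h4
        · exact Or.inl ⟨h3.le, h4⟩
        · exact Or.inr ⟨h3.ge, h4⟩
      · exact Or.inr ⟨h3.le, hΓ.hor η (hPΓ h') ω (hPΓ h) e1.symm e2.symm (hh η h') (hh ω h) h3⟩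
    · have eD : |η.2.1 - η.1.1| = |ω.2.1 - ω.1.1| := by rw [e1, e2]
      have := Yincr hf t0 t1 e1 e2 (hY ω h) (by rw [← eD]; exact hY η h')
      simp only [eD]
      exact this

/-- Pieces with straight vertical interpolation. -/
lemma line_piece {f : ℝ → ℝ} {k : ℝ} (hf : GoodF f k) {K t : ℝ} (hK : 1 ≤ K) (t0 : 0 < t) (t1 : t < 1) {v0 v1 : Pl → ℝ}
    {π : Measure (Pl × Pl)} [IsFiniteMeasure π] (hm0 : Measurable v0) (hm1 : Measurable v1)
    (hd0 : ∀ E, MeasurableSet E → π (Prod.fst ⁻¹' E) = ∫⁻ z in E, ENNReal.ofReal (v0 z))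
    (hd1 : ∀ E, MeasurableSet E → π (Prod.snd ⁻¹' E) = ∫⁻ z in E, ENNReal.ofReal (v1 z))
    {Γ : Set (Pl × Pl)} (hΓ : GoodG f t Γ) {P : Set (Pl × Pl)} (hP : MeasurableSet P) (hPΓ : P ⊆ Γ)
    (e : Pl ≃ᵐ Pl) (ep : MeasurePreserving e volume volume)
    (hl1 : ∀ p q : Pl, (e (xt t p.1 q.1, xt t p.2 q.2)).1 = (1 - t) * (e p).1 + t * (e q).1)
    (hl2 : ∀ p q : Pl, (e (xt t p.1 q.1, xt t p.2 q.2)).2 = (1 - t) * (e p).2 + t * (e q).2)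
    (hO : ∀ ω ∈ P, |ω.2.1 - ω.1.1| ≤ |ω.2.2 - ω.1.2|)
    (ha : ∀ ω ∈ P, ∀ ω' ∈ P, (e ω.1).1 < (e ω'.1).1 → (e ω.2).1 ≤ (e ω'.2).1)
    (hb : ∀ ω ∈ P, ∀ ω' ∈ P, (e ω.1).1 = (e ω'.1).1 → (e ω.2).1 = (e ω'.2).1 →
      (e ω.1).2 < (e ω'.1).2 → (e ω.2).2 ≤ (e ω'.2).2) :
    GPiece f K t v0 v1 π P := by
  have hM : ∀ ω ∈ P, Mt f t ω = (xt t ω.1.1 ω.2.1, xt t ω.1.2 ω.2.2) := by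
    intro ω h
    exact Prod.ext rfl (Yt_line hf (hO ω h))
  refine gpiece_of hf t0 t1 hm0 hm1 hd0 hd1 hP e ep
    (ga := fun ω => 1) (gb := fun ω => 1) measurable_const measurable_const ?_ ?_ ha ?_
  · intro ω h
    have := jac hf (θ := 0) (τ := 0) hK t0 t1 (hΓ.sub (hPΓ h)) (by rw [hM ω h]; simp) (Or.inr ⟨le_rfl, zero_le_one, by simp, ?_⟩)
    · simpa [GA, GB] using this
    · have := hO ω h
      have := abs_nonneg (ω.2.2 - ω.1.2)
      linarith
  · intro ω h
    rw [hM ω h, hl1]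
  · intro ω h η h' e1 e2
    constructor
    · rcases lt_trichotomy (e ω.1).2 (e η.1).2 with h3 | h3 | h3
      · exact Or.inl ⟨h3.le, hb ω h η h' e1 e2 h3⟩
      · rcases le_total (e ω.2).2 (e η.2).2 with h4 | h4
        · exact Or.inl ⟨h3.le, h4⟩
        · exact Or.inr ⟨h3.ge, h4⟩
      · exact Or.inr ⟨h3.le, hb η h' ω h e1.symm e2.symm h3⟩
    · rw [hM ω h, hM η h', hl2, hl2]; ring
end

open MeasureTheory ProbabilityTheory
open scoped ENNReal NNReal

/-- Sheared coordinates adapted to diagonal lines. -/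
noncomputable def shr (σ : ℝ) : Pl ≃ᵐ Pl where
  toFun p := (p.2 - σ * p.1, p.1)
  invFun q := (q.2, q.1 + σ * q.2)
  left_inv p := by ext <;> simp
  right_inv q := by ext <;> simp
  measurable_toFun := by change Measurable fun p : Pl => (p.2 - σ * p.1, p.1); fun_prop
  measurable_invFun := by change Measurable fun q : Pl => (q.2, q.1 + σ * q.2); fun_prop

lemma shr_mp (σ : ℝ) : MeasurePreserving (shr σ) volume volume := by
  have h1 : MeasurePreserving (fun p : Pl => (p.1, p.2 - σ * p.1)) volume volume := by
    refine MeasurePreserving.skew_product (μc := volume) (μd := volume) (MeasurePreserving.id (volume : Measure ℝ)) (g := fun a b => b - σ * a) (by unfold Function.uncurry; fun_prop) ?_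
    exact ae_of_all _ fun a => (measurePreserving_sub_right volume (σ * a)).map_eq
  have h2 : MeasurePreserving (Prod.swap : Pl → Pl) volume volume := Measure.measurePreserving_swap
  exact h2.comp h1

lemma swp_mp : MeasurePreserving (MeasurableEquiv.prodComm : Pl ≃ᵐ Pl) volume volume :=
  Measure.measurePreserving_swap

section

lemma cov_hor {f : ℝ → ℝ} {k : ℝ} (hf : GoodF f k) {K t : ℝ} (hK : 1 ≤ K) (t0 : 0 < t) (t1 : t < 1) {v0 v1 : Pl → ℝ}
    {π : Measure (Pl × Pl)} [IsFiniteMeasure π] (hm0 : Measurable v0) (hm1 : Measurable v1)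
    (hd0 : ∀ E, MeasurableSet E → π (Prod.fst ⁻¹' E) = ∫⁻ z in E, ENNReal.ofReal (v0 z))
    (hd1 : ∀ E, MeasurableSet E → π (Prod.snd ⁻¹' E) = ∫⁻ z in E, ENNReal.ofReal (v1 z))
    {Γ : Set (Pl × Pl)} (hΓ : GoodG f t Γ) (σ : ℝ) (hσ : σ = 1 ∨ σ = -1) :
    ∃ C : Set (Set (Pl × Pl)), C.Countable ∧ (∀ P ∈ C, GPiece f K t v0 v1 π P ∧ P ⊆ Γ) ∧
      ∀ ω ∈ Γ, |ω.2.2 - ω.1.2| < σ * (ω.2.1 - ω.1.1) → ∃ P ∈ C, ω ∈ P := by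
  have ho : IsOpen {ω : Pl × Pl | |ω.2.2 - ω.1.2| < σ * (ω.2.1 - ω.1.1)} :=
    isOpen_lt (by fun_prop) (by fun_prop)
  obtain ⟨U, V, hU, hV, h⟩ := open_rect ho
  have hUV : ∀ n, MeasurableSet (Γ ∩ (U n ×ˢ V n)) := fun n =>
    hΓ.meas.inter ((hU n).measurableSet.prod (hV n).measurableSet)
  have mR0 : MeasurableSet {ω : Pl × Pl | 2 * |ω.2.2 - ω.1.2| ≤ |ω.2.1 - ω.1.1|} :=
    measurableSet_le (by fun_prop) (by fun_prop)
  have mR1 : MeasurableSet {ω : Pl × Pl | |ω.2.1 - ω.1.1| ≤ 2 * |ω.2.2 - ω.1.2|} :=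
    measurableSet_le (by fun_prop) (by fun_prop)
  have mR2 : MeasurableSet {ω : Pl × Pl | 0 ≤ ω.2.2 - ω.1.2} :=
    measurableSet_le (by fun_prop) (by fun_prop)
  have mR3 : MeasurableSet {ω : Pl × Pl | ω.2.2 - ω.1.2 ≤ 0} :=
    measurableSet_le (by fun_prop) (by fun_prop)
  have hOO : ∀ n, ∀ ω ∈ Γ ∩ (U n ×ˢ V n), ∀ η ∈ Γ ∩ (U n ×ˢ V n), |η.2.2 - ω.1.2| < σ * (η.2.1 - ω.1.1) := by
    intro n ω hω η hη
    exact (h ω.1 η.2).2 ⟨n, hω.2.1, hη.2.2⟩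
  have hne : ∀ n, ∀ ω ∈ Γ ∩ (U n ×ˢ V n), |ω.2.2 - ω.1.2| ≤ |ω.2.1 - ω.1.1| ∧ ω.2.1 - ω.1.1 ≠ 0 := by
    intro n ω hω
    have := hOO n ω hω ω hω
    have h3 : σ * (ω.2.1 - ω.1.1) ≤ |ω.2.1 - ω.1.1| := by
      rcases hσ with rfl | rfl
      · rw [one_mul]; exact le_abs_self _
      · rw [neg_one_mul]; exact neg_le_abs _
    refine ⟨this.le.trans h3, ?_⟩
    have := abs_pos.1 ((abs_nonneg _).trans_lt (this.trans_le h3))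
    exact this
  refine ⟨Set.range (fun n => (Γ ∩ (U n ×ˢ V n)) ∩ {ω : Pl × Pl | 2 * |ω.2.2 - ω.1.2| ≤ |ω.2.1 - ω.1.1|}) ∪
    Set.range (fun n => (Γ ∩ (U n ×ˢ V n)) ∩ ({ω : Pl × Pl | |ω.2.1 - ω.1.1| ≤ 2 * |ω.2.2 - ω.1.2|} ∩ {ω : Pl × Pl | 0 ≤ ω.2.2 - ω.1.2})) ∪
    Set.range (fun n => (Γ ∩ (U n ×ˢ V n)) ∩ ({ω : Pl × Pl | |ω.2.1 - ω.1.1| ≤ 2 * |ω.2.2 - ω.1.2|} ∩ {ω : Pl × Pl | ω.2.2 - ω.1.2 ≤ 0})),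
    ((Set.countable_range _).union (Set.countable_range _)).union (Set.countable_range _), ?_, ?_⟩
  · rintro P ((⟨n, rfl⟩ | ⟨n, rfl⟩) | ⟨n, rfl⟩)
    · refine ⟨hor_piece hf hK t0 t1 hm0 hm1 hd0 hd1 hΓ ((hUV n).inter mR0) (fun ω h => h.1.1) σ 1 0 hσ
        (fun ω h η h' => hOO n ω h.1 η h'.1) ?_ (fun ω h => Or.inl ⟨rfl, rfl⟩), fun ω h => h.1.1⟩
      intro ω hω
      rw [thS_eq_one hω.2]; simp
    · refine ⟨hor_piece hf hK t0 t1 hm0 hm1 hd0 hd1 hΓ ((hUV n).inter (mR1.inter mR2)) (fun ω h => h.1.1) σ 2 2 hσ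
        (fun ω h η h' => hOO n ω h.1 η h'.1) ?_ (fun ω h => Or.inr ⟨by norm_num, h.2.1⟩), fun ω h => h.1.1⟩
      intro ω hω
      rw [thS_mid hω.2.1 (hne n ω hω.1).1 (hne n ω hω.1).2, abs_of_nonneg (a := ω.2.2 - ω.1.2) hω.2.2]; ring
    · refine ⟨hor_piece hf hK t0 t1 hm0 hm1 hd0 hd1 hΓ ((hUV n).inter (mR1.inter mR3)) (fun ω h => h.1.1) σ 2 (-2) hσ
        (fun ω h η h' => hOO n ω h.1 η h'.1) ?_ (fun ω h => Or.inr ⟨by norm_num, h.2.1⟩), fun ω h => h.1.1⟩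
      intro ω hω
      rw [thS_mid hω.2.1 (hne n ω hω.1).1 (hne n ω hω.1).2, abs_of_nonpos (a := ω.2.2 - ω.1.2) hω.2.2]; ring
  · intro ω hω hlt
    obtain ⟨n, h1, h2⟩ := (h ω.1 ω.2).1 hlt
    have hm : ω ∈ Γ ∩ (U n ×ˢ V n) := ⟨hω, h1, h2⟩
    rcases le_total (2 * |ω.2.2 - ω.1.2|) |ω.2.1 - ω.1.1| with h3 | h3
    · exact ⟨_, Or.inl (Or.inl ⟨n, rfl⟩), hm, h3⟩
    · rcases le_total 0 (ω.2.2 - ω.1.2) with h4 | h4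
      · exact ⟨_, Or.inl (Or.inr ⟨n, rfl⟩), hm, h3, h4⟩
      · exact ⟨_, Or.inr ⟨n, rfl⟩, hm, h3, h4⟩

lemma cov_ver {f : ℝ → ℝ} {k : ℝ} (hf : GoodF f k) {K t : ℝ} (hK : 1 ≤ K) (t0 : 0 < t) (t1 : t < 1) {v0 v1 : Pl → ℝ}
    {π : Measure (Pl × Pl)} [IsFiniteMeasure π] (hm0 : Measurable v0) (hm1 : Measurable v1)
    (hd0 : ∀ E, MeasurableSet E → π (Prod.fst ⁻¹' E) = ∫⁻ z in E, ENNReal.ofReal (v0 z))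
    (hd1 : ∀ E, MeasurableSet E → π (Prod.snd ⁻¹' E) = ∫⁻ z in E, ENNReal.ofReal (v1 z))
    {Γ : Set (Pl × Pl)} (hΓ : GoodG f t Γ) (σ : ℝ) (hσ : σ = 1 ∨ σ = -1) :
    ∃ C : Set (Set (Pl × Pl)), C.Countable ∧ (∀ P ∈ C, GPiece f K t v0 v1 π P ∧ P ⊆ Γ) ∧
      ∀ ω ∈ Γ, |ω.2.1 - ω.1.1| < σ * (ω.2.2 - ω.1.2) → ∃ P ∈ C, ω ∈ P := by
  have ho : IsOpen {ω : Pl × Pl | |ω.2.1 - ω.1.1| < σ * (ω.2.2 - ω.1.2)} :=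
    isOpen_lt (by fun_prop) (by fun_prop)
  obtain ⟨U, V, hU, hV, h⟩ := open_rect ho
  have hUV : ∀ n, MeasurableSet (Γ ∩ (U n ×ˢ V n)) := fun n =>
    hΓ.meas.inter ((hU n).measurableSet.prod (hV n).measurableSet)
  have hab : ∀ a : ℝ, σ * a ≤ |a| := by
    intro a
    rcases hσ with rfl | rfl
    · rw [one_mul]; exact le_abs_self _
    · rw [neg_one_mul]; exact neg_le_abs _
  have hOO : ∀ n, ∀ ω ∈ Γ ∩ (U n ×ˢ V n), ∀ η ∈ Γ ∩ (U n ×ˢ V n), |η.2.1 - ω.1.1| < |η.2.2 - ω.1.2| := by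
    intro n ω hω η hη
    have : |η.2.1 - ω.1.1| < σ * (η.2.2 - ω.1.2) := (h ω.1 η.2).2 ⟨n, hω.2.1, hη.2.2⟩
    exact this.trans_le (hab _)
  refine ⟨Set.range (fun n => (Γ ∩ (U n ×ˢ V n))), Set.countable_range _, ?_, ?_⟩
  · rintro P ⟨n, rfl⟩
    have key : ∀ ω ∈ Γ ∩ (U n ×ˢ V n), ∀ η ∈ Γ ∩ (U n ×ˢ V n), cst1 (ω.1, η.2) = (η.2.2 - ω.1.2) ^ 2 := by
      intro ω h η h'
      rw [cst1_eq, max_eq_right (hOO n ω h η h').le, sq_abs]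
    refine ⟨line_piece hf hK t0 t1 hm0 hm1 hd0 hd1 hΓ (hUV n) (fun ω h => h.1) MeasurableEquiv.prodComm swp_mp
      (fun p q => rfl) (fun p q => rfl) (fun ω h => (hOO n ω h ω h).le) ?_ ?_, fun ω h => h.1⟩
    · intro ω h η h' hlt
      change ω.1.2 < η.1.2 at hlt
      change ω.2.2 ≤ η.2.2
      have hcy := hΓ.cyc ω h.1 η h'.1
      have k1 := key ω h ω h
      have k2 := key η h' η h'
      rw [key ω h η h', key η h' ω h] at hcy
      change cst1 ω = _ at k1
      change cst1 η = _ at k2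
      rw [k1, k2] at hcy
      by_contra hcon
      push Not at hcon
      have := mul_pos (sub_pos.2 hlt) (sub_pos.2 hcon)
      linarith
    · intro ω h η h' e1 e2 hlt
      exact hΓ.ver ω h.1 η h'.1 e1 e2 (hOO n ω h ω h) (hOO n η h' η h') hlt
  · intro ω hω hlt
    obtain ⟨n, h1, h2⟩ := (h ω.1 ω.2).1 hlt
    exact ⟨_, ⟨n, rfl⟩, hω, h1, h2⟩

lemma cov_dia {f : ℝ → ℝ} {k : ℝ} (hf : GoodF f k) {K t : ℝ} (hK : 1 ≤ K) (t0 : 0 < t) (t1 : t < 1) {v0 v1 : Pl → ℝ}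
    {π : Measure (Pl × Pl)} [IsFiniteMeasure π] (hm0 : Measurable v0) (hm1 : Measurable v1)
    (hd0 : ∀ E, MeasurableSet E → π (Prod.fst ⁻¹' E) = ∫⁻ z in E, ENNReal.ofReal (v0 z))
    (hd1 : ∀ E, MeasurableSet E → π (Prod.snd ⁻¹' E) = ∫⁻ z in E, ENNReal.ofReal (v1 z))
    {Γ : Set (Pl × Pl)} (hΓ : GoodG f t Γ) (σ : ℝ) (hσ : σ = 1 ∨ σ = -1) :
    ∃ C : Set (Set (Pl × Pl)), C.Countable ∧ (∀ P ∈ C, GPiece f K t v0 v1 π P ∧ P ⊆ Γ) ∧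
      ∀ ω ∈ Γ, ω.2.2 - ω.1.2 = σ * (ω.2.1 - ω.1.1) → ∃ P ∈ C, ω ∈ P := by
  have hm : MeasurableSet (Γ ∩ {ω : Pl × Pl | ω.2.2 - ω.1.2 = σ * (ω.2.1 - ω.1.1)}) :=
    hΓ.meas.inter (measurableSet_eq_fun (by fun_prop) (by fun_prop))
  have hab : ∀ a : ℝ, |σ * a| = |a| := by
    intro a
    rcases hσ with rfl | rfl
    · rw [one_mul]
    · rw [neg_one_mul, abs_neg]
  refine ⟨{Γ ∩ {ω : Pl × Pl | ω.2.2 - ω.1.2 = σ * (ω.2.1 - ω.1.1)}}, Set.countable_singleton _, ?_, ?_⟩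
  · rintro P rfl
    refine ⟨line_piece hf hK t0 t1 hm0 hm1 hd0 hd1 hΓ hm (fun ω h => h.1) (shr σ) (shr_mp σ)
      ?_ (fun p q => rfl) (fun ω h => ?_) ?_ ?_, fun ω h => h.1⟩
    · intro p q
      change xt t p.2 q.2 - σ * xt t p.1 q.1 = (1 - t) * (p.2 - σ * p.1) + t * (q.2 - σ * q.1)
      unfold xt; ring
    · have : ω.2.2 - ω.1.2 = σ * (ω.2.1 - ω.1.1) := h.2
      rw [this, hab]
    · intro ω h η h' hlt
      change ω.1.2 - σ * ω.1.1 < η.1.2 - σ * η.1.1 at hlt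
      change ω.2.2 - σ * ω.2.1 ≤ η.2.2 - σ * η.2.1
      have h2 : ω.2.2 - ω.1.2 = σ * (ω.2.1 - ω.1.1) := h.2
      have h3 : η.2.2 - η.1.2 = σ * (η.2.1 - η.1.1) := h'.2
      linarith
    · intro ω h η h' e1 e2 hlt
      change ω.1.2 - σ * ω.1.1 = η.1.2 - σ * η.1.1 at e1
      change ω.2.2 - σ * ω.2.1 = η.2.2 - σ * η.2.1 at e2
      change ω.1.1 < η.1.1 at hlt
      change ω.2.1 ≤ η.2.1
      have h2 : ω.2.2 - ω.1.2 = σ * (ω.2.1 - ω.1.1) := h.2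
      have h3 : η.2.2 - η.1.2 = σ * (η.2.1 - η.1.1) := h'.2
      have key : ∀ p q : Pl, q.2 - p.2 = σ * (q.1 - p.1) → cst1 (p, q) = (q.1 - p.1) ^ 2 := by
        intro p q hpq
        rw [cst1_eq, hpq, hab, max_self, sq_abs]
      have hcy := hΓ.cyc ω h.1 η h'.1
      have k1 := key ω.1 ω.2 h2
      have k2 := key η.1 η.2 h3
      rw [key ω.1 η.2 (by linarith), key η.1 ω.2 (by linarith)] at hcy
      change cst1 ω = _ at k1
      change cst1 η = _ at k2
      rw [k1, k2] at hcy
      by_contra hcon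
      push Not at hcon
      have := mul_pos (sub_pos.2 hlt) (sub_pos.2 hcon)
      linarith
  · intro ω hω hlt
    exact ⟨_, rfl, hω, hlt⟩

lemma cov_all {f : ℝ → ℝ} {k : ℝ} (hf : GoodF f k) {K t : ℝ} (hK : 1 ≤ K) (t0 : 0 < t) (t1 : t < 1) {v0 v1 : Pl → ℝ}
    {π : Measure (Pl × Pl)} [IsFiniteMeasure π] (hm0 : Measurable v0) (hm1 : Measurable v1)
    (hd0 : ∀ E, MeasurableSet E → π (Prod.fst ⁻¹' E) = ∫⁻ z in E, ENNReal.ofReal (v0 z))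
    (hd1 : ∀ E, MeasurableSet E → π (Prod.snd ⁻¹' E) = ∫⁻ z in E, ENNReal.ofReal (v1 z))
    {Γ : Set (Pl × Pl)} (hΓ : GoodG f t Γ) :
    ∃ C : Set (Set (Pl × Pl)), C.Countable ∧ (∀ P ∈ C, GPiece f K t v0 v1 π P ∧ P ⊆ Γ) ∧
      ∀ ω ∈ Γ, ∃ P ∈ C, ω ∈ P := by
  have l : (1 : ℝ) = 1 ∨ (1 : ℝ) = -1 := Or.inl rfl
  have r : (-1 : ℝ) = 1 ∨ (-1 : ℝ) = -1 := Or.inr rfl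
  obtain ⟨C1, a1, b1, c1⟩ := cov_hor hf hK t0 t1 hm0 hm1 hd0 hd1 hΓ 1 l
  obtain ⟨C2, a2, b2, c2⟩ := cov_hor hf hK t0 t1 hm0 hm1 hd0 hd1 hΓ (-1) r
  obtain ⟨C3, a3, b3, c3⟩ := cov_ver hf hK t0 t1 hm0 hm1 hd0 hd1 hΓ 1 l
  obtain ⟨C4, a4, b4, c4⟩ := cov_ver hf hK t0 t1 hm0 hm1 hd0 hd1 hΓ (-1) r
  obtain ⟨C5, a5, b5, c5⟩ := cov_dia hf hK t0 t1 hm0 hm1 hd0 hd1 hΓ 1 l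
  obtain ⟨C6, a6, b6, c6⟩ := cov_dia hf hK t0 t1 hm0 hm1 hd0 hd1 hΓ (-1) r
  refine ⟨C1 ∪ C2 ∪ C3 ∪ C4 ∪ C5 ∪ C6, ((((a1.union a2).union a3).union a4).union a5).union a6, ?_, ?_⟩
  · rintro P (((((h | h) | h) | h) | h) | h)
    exacts [b1 P h, b2 P h, b3 P h, b4 P h, b5 P h, b6 P h]
  · intro ω hω
    suffices hs : (∃ P ∈ C1, ω ∈ P) ∨ (∃ P ∈ C2, ω ∈ P) ∨ (∃ P ∈ C3, ω ∈ P) ∨ (∃ P ∈ C4, ω ∈ P) ∨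
      (∃ P ∈ C5, ω ∈ P) ∨ (∃ P ∈ C6, ω ∈ P) by
      rcases hs with ⟨P, h, h'⟩ | ⟨P, h, h'⟩ | ⟨P, h, h'⟩ | ⟨P, h, h'⟩ | ⟨P, h, h'⟩ | ⟨P, h, h'⟩ <;>
      refine ⟨P, ?_, h'⟩ <;> simp only [Set.mem_union, h, true_or, or_true]
    rcases lt_trichotomy |ω.2.2 - ω.1.2| |ω.2.1 - ω.1.1| with h | h | h
    · rcases abs_choice (ω.2.1 - ω.1.1) with h2 | h2
      · exact Or.inl (c1 ω hω (by rw [h2] at h; linarith))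
      · exact Or.inr (Or.inl (c2 ω hω (by rw [h2] at h; linarith)))
    · rcases abs_eq_abs.1 h with h2 | h2
      · exact Or.inr (Or.inr (Or.inr (Or.inr (Or.inl (c5 ω hω (by linarith))))))
      · exact Or.inr (Or.inr (Or.inr (Or.inr (Or.inr (c6 ω hω (by linarith))))))
    · rcases abs_choice (ω.2.2 - ω.1.2) with h2 | h2
      · exact Or.inr (Or.inr (Or.inl (c3 ω hω (by rw [h2] at h; linarith))))
      · exact Or.inr (Or.inr (Or.inr (Or.inl (c4 ω hω (by rw [h2] at h; linarith)))))
end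

open MeasureTheory ProbabilityTheory
open scoped ENNReal NNReal

/-- The reference measure. -/
noncomputable def mm (f : ℝ → ℝ) (K : ℝ) : Measure Pl :=
  volume.withDensity ((XX f).indicator fun z => ENNReal.ofReal (wt f K z))

/-- Real valued Lebesgue density. -/
noncomputable def vd (μ : Measure Pl) (z : Pl) : ℝ := (μ.rnDeriv volume z).toReal

lemma vd_meas (μ : Measure Pl) : Measurable (vd μ) :=
  (Measure.measurable_rnDeriv _ _).ennreal_toReal

lemma vd_int {μ : Measure Pl} [IsProbabilityMeasure μ] (h : μ ≪ volume) (E : Set Pl) :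
    ∫⁻ z in E, ENNReal.ofReal (vd μ z) = μ E := by
  rw [← Measure.setLIntegral_rnDeriv h E]
  refine lintegral_congr_ae (ae_restrict_of_ae ?_)
  filter_upwards [Measure.rnDeriv_lt_top μ volume] with z hz
  exact ENNReal.ofReal_toReal hz.ne

lemma vd_pos {μ : Measure Pl} [IsProbabilityMeasure μ] (h : μ ≪ volume) : ∀ᵐ z ∂μ, 0 < vd μ z := by
  filter_upwards [Measure.rnDeriv_pos h, h.ae_le (Measure.rnDeriv_lt_top μ volume)] with z h1 h2
  exact ENNReal.toReal_pos h1.ne' h2.ne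

section

lemma XX_meas {f : ℝ → ℝ} {k : ℝ} (hf : GoodF f k) : MeasurableSet (XX f) := (XX_compact hf).measurableSet

lemma mm_dens_meas {f : ℝ → ℝ} {k : ℝ} (hf : GoodF f k) (K : ℝ) : Measurable ((XX f).indicator fun z => ENNReal.ofReal (wt f K z)) :=
  ((wt_cont hf K).measurable.ennreal_ofReal).indicator (XX_meas hf)

lemma mm_fin {f : ℝ → ℝ} {k : ℝ} (hf : GoodF f k) (K : ℝ) : IsFiniteMeasure (mm f K) := by
  refine isFiniteMeasure_withDensity ?_
  rw [lintegral_indicator (XX_meas hf)]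
  obtain ⟨C, hC⟩ := (XX_compact hf).exists_bound_of_continuousOn (wt_cont hf K).continuousOn
  refine ne_of_lt ?_
  calc ∫⁻ z in XX f, ENNReal.ofReal (wt f K z) ≤ ∫⁻ z in XX f, ENNReal.ofReal C :=
        setLIntegral_mono' (XX_meas hf) fun z hz => ENNReal.ofReal_le_ofReal ((le_abs_self _).trans (hC z hz))
    _ = ENNReal.ofReal C * volume (XX f) := by simp
    _ < ∞ := ENNReal.mul_lt_top ENNReal.ofReal_lt_top (XX_compact hf).measure_lt_top

lemma mm_ac {f : ℝ → ℝ} {k : ℝ} (hf : GoodF f k) (K : ℝ) : mm f K ≪ volume := withDensity_absolutelyContinuous _ _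

lemma mm_compl {f : ℝ → ℝ} {k : ℝ} (hf : GoodF f k) (K : ℝ) : mm f K (XX f)ᶜ = 0 := by
  rw [mm, withDensity_apply_eq_zero (mm_dens_meas hf K)]
  convert measure_empty (μ := (volume : Measure Pl))
  ext z
  simp only [Set.mem_inter_iff, Set.mem_compl_iff, Set.mem_empty_iff_false, iff_false, not_and, not_not]
  intro h
  by_contra hz
  exact h (Set.indicator_of_notMem hz _)

lemma ac_mm {f : ℝ → ℝ} {k : ℝ} (hf : GoodF f k) (K : ℝ) {μ : Measure Pl} (h : μ ≪ volume) (hX : μ (XX f)ᶜ = 0) : μ ≪ mm f K := by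
  intro E hE
  rw [mm, withDensity_apply_eq_zero (mm_dens_meas hf K)] at hE
  have h1 := h hE
  refine measure_mono_null ?_ (measure_union_null h1 hX)
  intro z hz
  by_cases hzX : z ∈ XX f
  · left
    refine ⟨?_, hz⟩
    change (XX f).indicator _ z ≠ 0
    rw [Set.indicator_of_mem hzX]
    simpa using wt_pos hf K z
  · exact Or.inr hzX

lemma llr_eq {f : ℝ → ℝ} {k : ℝ} (hf : GoodF f k) (K : ℝ) {μ : Measure Pl} [IsProbabilityMeasure μ] (h : μ ≪ mm f K) :
    ∀ᵐ z ∂μ, llr μ (mm f K) z = Real.log (vd μ z) - Real.log (wt f K z) := by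
  have := mm_fin hf K
  have hv := h.trans (mm_ac hf K)
  filter_upwards [hv.ae_le (Measure.rnDeriv_mul_rnDeriv (κ := volume) h),
    hv.ae_le (Measure.rnDeriv_withDensity volume (mm_dens_meas hf K)), Measure.rnDeriv_pos h,
    h.ae_le (Measure.rnDeriv_lt_top μ (mm f K)), measure_eq_zero_iff_ae_notMem.1 (h (mm_compl hf K))]
    with z h1 h2 h3 h4 h5
  rw [Set.mem_compl_iff, not_not] at h5
  rw [Set.indicator_of_mem h5] at h2
  change μ.rnDeriv (mm f K) z * (mm f K).rnDeriv volume z = μ.rnDeriv volume z at h1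
  change (mm f K).rnDeriv volume z = _ at h2
  rw [h2] at h1
  have h6 : (μ.rnDeriv (mm f K) z).toReal * wt f K z = vd μ z := by
    rw [vd, ← h1, ENNReal.toReal_mul, ENNReal.toReal_ofReal (wt_pos hf K z).le]
  rw [llr_def, ← h6, Real.log_mul (ENNReal.toReal_pos h3.ne' h4.ne).ne' (wt_pos hf K z).ne']
  ring

lemma dens_main {f : ℝ → ℝ} {k : ℝ} (hf : GoodF f k) {K t : ℝ} (hK : 1 ≤ K) (t0 : 0 < t) (t1 : t < 1) {μ ν : Measure Pl} [IsProbabilityMeasure μ]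
    [IsProbabilityMeasure ν] (hμ : μ ≪ volume) (hν : ν ≪ volume) {π : Measure (Pl × Pl)}
    (hπ : LexOpt μ ν π) (hX : π (XX f ×ˢ XX f)ᶜ = 0) :
    π.map (Mt f t) ≪ volume ∧ ∀ᵐ ω ∂π, 0 < hB f K t (vd μ) (vd ν) ω ∧ 
      (π.map (Mt f t)).rnDeriv volume (Mt f t ω) ≤ ENNReal.ofReal (hB f K t (vd μ) (vd ν) ω) := by
  obtain ⟨Γ, hΓ, hΓ0⟩ := exists_goodG hf t0 t1 hπ hX
  have : IsProbabilityMeasure π := hπ.cpl.prob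
  have mM := Mt_meas hf t
  have hd0 : ∀ E, MeasurableSet E → π (Prod.fst ⁻¹' E) = ∫⁻ z in E, ENNReal.ofReal (vd μ z) := by
    intro E hE
    rw [vd_int hμ, ← hπ.cpl.1, Measure.map_apply measurable_fst hE]
  have hd1 : ∀ E, MeasurableSet E → π (Prod.snd ⁻¹' E) = ∫⁻ z in E, ENNReal.ofReal (vd ν z) := by
    intro E hE
    rw [vd_int hν, ← hπ.cpl.2, Measure.map_apply measurable_snd hE]
  have p0 : ∀ᵐ ω ∂π, 0 < vd μ ω.1 := by
    have := vd_pos hμ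
    rw [← hπ.cpl.1] at this
    exact hπ.cpl.1 ▸ ae_of_ae_map measurable_fst.aemeasurable this
  have p1 : ∀ᵐ ω ∂π, 0 < vd ν ω.2 := by
    have := vd_pos hν
    rw [← hπ.cpl.2] at this
    exact hπ.cpl.2 ▸ ae_of_ae_map measurable_snd.aemeasurable this
  have hG : ∀ᵐ ω ∂π, ω ∈ Γ := by rw [ae_iff]; exact hΓ0
  obtain ⟨C, hCc, hC, hcov⟩ := cov_all hf hK t0 t1 (vd_meas μ) (vd_meas ν) hd0 hd1 hΓ
  have hac : π.map (Mt f t) ≪ volume := by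
    refine Measure.AbsolutelyContinuous.mk fun E hE hE0 => ?_
    rw [Measure.map_apply mM hE]
    have h1 : ∀ P ∈ C, ∀ᵐ ω ∂π, ¬ (ω ∈ P ∩ {ω | 0 < vd μ ω.1 ∧ 0 < vd ν ω.2} ∩ Mt f t ⁻¹' E) := fun P hP =>
      measure_eq_zero_iff_ae_notMem.1 (null_a hf t0 t1 (vd_meas μ) (vd_meas ν) (hC P hP).1 hE hE0)
    rw [measure_eq_zero_iff_ae_notMem]
    filter_upwards [(ae_ball_iff hCc).2 h1, p0, p1, hG] with ω h1 h2 h3 h4 h5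
    obtain ⟨P, hP, hωP⟩ := hcov ω h4
    exact h1 P hP ⟨⟨hωP, h2, h3⟩, h5⟩
  refine ⟨hac, ?_⟩
  have : IsProbabilityMeasure (π.map (Mt f t)) := Measure.isProbabilityMeasure_map mM.aemeasurable
  have hd : ∀ E, MeasurableSet E → π (Mt f t ⁻¹' E) = ∫⁻ z in E, (π.map (Mt f t)).rnDeriv volume z := by
    intro E hE
    rw [Measure.setLIntegral_rnDeriv hac, Measure.map_apply mM hE]
  have h1 : ∀ n : ℕ, ∀ P ∈ C, ∀ᵐ ω ∂π, ¬ (ω ∈ P ∩ {ω | 0 < vd μ ω.1 ∧ 0 < vd ν ω.2} ∩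
      {ω | ENNReal.ofReal ((1 + 1 / ((n : ℝ) + 1)) ^ 2 * hB f K t (vd μ) (vd ν) ω) <
        (π.map (Mt f t)).rnDeriv volume (Mt f t ω)}) := fun n P hP =>
    measure_eq_zero_iff_ae_notMem.1 (null_b hf t0 t1 (by have : 0 < 1 / ((n : ℝ) + 1) := by positivity
                                                         linarith) (vd_meas μ) (vd_meas ν) (hC P hP).1 hΓ hΓ0 (hC P hP).2
      (Measure.measurable_rnDeriv _ _) hd)
  filter_upwards [ae_all_iff.2 fun n => (ae_ball_iff hCc).2 (h1 n), p0, p1, hG] with ω h1 h2 h3 h4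
  constructor
  · have := wt_pos hf K ω.1
    have := wt_pos hf K ω.2
    have := wt_pos hf K (Mt f t ω)
    unfold hB; positivity
  obtain ⟨P, hP, hωP⟩ := hcov ω h4
  have h5 : ∀ n : ℕ, (π.map (Mt f t)).rnDeriv volume (Mt f t ω) ≤
      ENNReal.ofReal ((1 + 1 / ((n : ℝ) + 1)) ^ 2 * hB f K t (vd μ) (vd ν) ω) := by
    intro n
    by_contra hcon
    exact h1 n P hP ⟨⟨hωP, h2, h3⟩, not_le.1 hcon⟩
  refine ge_of_tendsto' (x := Filter.atTop) ?_ h5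
  refine ENNReal.tendsto_ofReal ?_
  have := (((tendsto_one_div_add_atTop_nhds_zero_nat (𝕜 := ℝ)).const_add 1).pow 2).mul_const (hB f K t (vd μ) (vd ν) ω)
  simpa using this

lemma llr_main {f : ℝ → ℝ} {k : ℝ} (hf : GoodF f k) {K t : ℝ} (hK : 1 ≤ K) (t0 : 0 < t) (t1 : t < 1) {μ ν : Measure Pl} [IsProbabilityMeasure μ]
    [IsProbabilityMeasure ν] (hμ : μ ≪ mm f K) (hν : ν ≪ mm f K) {π : Measure (Pl × Pl)}
    (hπ : LexOpt μ ν π) (hX : π (XX f ×ˢ XX f)ᶜ = 0) (hXt : π.map (Mt f t) (XX f)ᶜ = 0) :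
    π.map (Mt f t) ≪ mm f K ∧ ∀ᵐ ω ∂π,
      llr (π.map (Mt f t)) (mm f K) (Mt f t ω) ≤ (1 - t) * llr μ (mm f K) ω.1 + t * llr ν (mm f K) ω.2 := by
  have hμv := hμ.trans (mm_ac hf K)
  have hνv := hν.trans (mm_ac hf K)
  have : IsProbabilityMeasure π := hπ.cpl.prob
  have mM := Mt_meas hf t
  have : IsProbabilityMeasure (π.map (Mt f t)) := Measure.isProbabilityMeasure_map mM.aemeasurable
  obtain ⟨h1, h2⟩ := dens_main hf hK t0 t1 hμv hνv hπ hX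
  have hac := ac_mm hf K h1 hXt
  refine ⟨hac, ?_⟩
  have p0 : ∀ᵐ ω ∂π, 0 < vd μ ω.1 ∧ llr μ (mm f K) ω.1 = Real.log (vd μ ω.1) - Real.log (wt f K ω.1) := by
    have := (vd_pos hμv).and (llr_eq hf K hμ)
    rw [← hπ.cpl.1] at this
    exact hπ.cpl.1 ▸ ae_of_ae_map measurable_fst.aemeasurable this
  have p1 : ∀ᵐ ω ∂π, 0 < vd ν ω.2 ∧ llr ν (mm f K) ω.2 = Real.log (vd ν ω.2) - Real.log (wt f K ω.2) := by
    have := (vd_pos hνv).and (llr_eq hf K hν)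
    rw [← hπ.cpl.2] at this
    exact hπ.cpl.2 ▸ ae_of_ae_map measurable_snd.aemeasurable this
  have pt := ae_of_ae_map mM.aemeasurable ((vd_pos h1).and (llr_eq hf K hac))
  filter_upwards [h2, p0, p1, pt] with ω h2 h3 h4 h5
  rw [h3.2, h4.2, h5.2]
  have w0 := wt_pos hf K ω.1
  have w1 := wt_pos hf K ω.2
  have w2 := wt_pos hf K (Mt f t ω)
  have q0 := h3.1
  have q1 := h4.1
  have h6 : vd (π.map (Mt f t)) (Mt f t ω) ≤ hB f K t (vd μ) (vd ν) ω :=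
    ENNReal.toReal_le_of_le_ofReal h2.1.le h2.2
  have h7 := Real.log_le_log h5.1 h6
  unfold hB at h7
  rw [Real.log_div (by positivity) (by positivity), Real.log_mul (by positivity) (by positivity),
    Real.log_mul (by positivity) (by positivity), Real.log_mul (by positivity) (by positivity),
    Real.log_rpow w0, Real.log_rpow w1, Real.log_rpow q0, Real.log_rpow q1] at h7
  linarith
end

open MeasureTheory ProbabilityTheory
open scoped ENNReal NNReal

lemma mul_neg_log_le {a : ℝ≥0∞} : a * ENNReal.ofReal (- Real.log a.toReal) ≤ 1 := by
  rcases eq_or_ne a ⊤ with rfl | ha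
  · simp
  rcases eq_or_ne a 0 with rfl | h0
  · simp
  have hp := ENNReal.toReal_pos h0 ha
  conv_lhs => rw [← ENNReal.ofReal_toReal ha]
  rw [ENNReal.toReal_ofReal hp.le, ← ENNReal.ofReal_mul hp.le, ← ENNReal.ofReal_one]
  refine ENNReal.ofReal_le_ofReal ?_
  have := Real.one_sub_inv_le_log_of_pos hp
  have h2 := mul_le_mul_of_nonneg_left this hp.le
  rw [mul_sub, mul_inv_cancel₀ hp.ne'] at h2
  linarith

lemma llr_neg_int {α : Type*} [MeasurableSpace α] {m μ : Measure α} [IsFiniteMeasure m] [IsProbabilityMeasure μ]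
    (h : μ ≪ m) : Integrable (fun z => max (- llr μ m z) 0) μ := by
  refine ⟨by fun_prop, ?_⟩
  rw [HasFiniteIntegral]
  calc ∫⁻ z, ‖max (- llr μ m z) 0‖ₑ ∂μ = ∫⁻ z, ENNReal.ofReal (- llr μ m z) ∂μ := by
        refine lintegral_congr fun z => ?_
        rw [Real.enorm_of_nonneg (le_max_right _ _), ENNReal.ofReal_max]; simp
    _ = ∫⁻ z, μ.rnDeriv m z * ENNReal.ofReal (- llr μ m z) ∂m :=
        (lintegral_rnDeriv_mul h (by fun_prop)).symm
    _ ≤ ∫⁻ z, 1 ∂m := lintegral_mono fun z => mul_neg_log_le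
    _ < ∞ := by simp

lemma ent_ne_bot {α : Type*} [MeasurableSpace α] (m μ : Measure α) : Ent m μ ≠ ⊥ := by
  unfold Ent
  split_ifs <;> simp

section

lemma ent_main {f : ℝ → ℝ} {k : ℝ} (hf : GoodF f k) {K t : ℝ} (hK : 1 ≤ K) (t0 : 0 < t) (t1 : t < 1) {μ ν : Measure Pl} [IsProbabilityMeasure μ]
    [IsProbabilityMeasure ν] (hμ : μ ≪ mm f K) (hν : ν ≪ mm f K) {π : Measure (Pl × Pl)}
    (hπ : LexOpt μ ν π) (hX : π (XX f ×ˢ XX f)ᶜ = 0) (hXt : π.map (Mt f t) (XX f)ᶜ = 0) :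
    Ent (mm f K) (π.map (Mt f t)) ≤
      ((1 - t : ℝ) : EReal) * Ent (mm f K) μ + ((t : ℝ) : EReal) * Ent (mm f K) ν := by
  have := mm_fin hf K
  have : IsProbabilityMeasure π := hπ.cpl.prob
  have mM := Mt_meas hf t
  have : IsProbabilityMeasure (π.map (Mt f t)) := Measure.isProbabilityMeasure_map mM.aemeasurable
  have s0 : 0 < 1 - t := by linarith
  by_cases i0 : Integrable (llr μ (mm f K)) μ
  swap
  · have e : Ent (mm f K) μ = ⊤ := by unfold Ent; rw [if_neg]; exact fun h => i0 h.2
    rw [e, EReal.coe_mul_top_of_pos s0, EReal.top_add_of_ne_bot]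
    · exact le_top
    · unfold Ent
      split_ifs
      · rw [← EReal.coe_mul]; exact EReal.coe_ne_bot _
      · rw [EReal.coe_mul_top_of_pos t0]; simp
  by_cases i1 : Integrable (llr ν (mm f K)) ν
  swap
  · have e : Ent (mm f K) ν = ⊤ := by unfold Ent; rw [if_neg]; exact fun h => i1 h.2
    rw [e, EReal.coe_mul_top_of_pos t0, EReal.add_top_of_ne_bot]
    · exact le_top
    · unfold Ent
      split_ifs
      · rw [← EReal.coe_mul]; exact EReal.coe_ne_bot _
      · rw [EReal.coe_mul_top_of_pos s0]; simp
  obtain ⟨hac, hle⟩ := llr_main hf hK t0 t1 hμ hν hπ hX hXt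
  have ml0 := measurable_llr μ (mm f K)
  have ml1 := measurable_llr ν (mm f K)
  have mlt := measurable_llr (π.map (Mt f t)) (mm f K)
  have j0 : Integrable (fun ω => llr μ (mm f K) ω.1) π := by
    refine (integrable_map_measure (f := Prod.fst) (g := llr μ (mm f K)) ml0.aestronglyMeasurable measurable_fst.aemeasurable).1 ?_
    rw [hπ.cpl.1]; exact i0
  have j1 : Integrable (fun ω => llr ν (mm f K) ω.2) π := by
    refine (integrable_map_measure (f := Prod.snd) (g := llr ν (mm f K)) ml1.aestronglyMeasurable measurable_snd.aemeasurable).1 ?_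
    rw [hπ.cpl.2]; exact i1
  have k0 : ∫ ω, llr μ (mm f K) ω.1 ∂π = ∫ z, llr μ (mm f K) z ∂μ := by
    have := integral_map (μ := π) (φ := Prod.fst) measurable_fst.aemeasurable (f := llr μ (mm f K)) ml0.aestronglyMeasurable
    rw [← this, hπ.cpl.1]
  have k1 : ∫ ω, llr ν (mm f K) ω.2 ∂π = ∫ z, llr ν (mm f K) z ∂ν := by
    have := integral_map (μ := π) (φ := Prod.snd) measurable_snd.aemeasurable (f := llr ν (mm f K)) ml1.aestronglyMeasurable
    rw [← this, hπ.cpl.2]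
  have ju : Integrable (fun ω => (1 - t) * llr μ (mm f K) ω.1 + t * llr ν (mm f K) ω.2) π :=
    (j0.const_mul _).add (j1.const_mul _)
  have jn := (llr_neg_int hac).comp_measurable mM
  have jt : Integrable (fun ω => llr (π.map (Mt f t)) (mm f K) (Mt f t ω)) π := by
    refine (ju.abs.add jn).mono' (mlt.comp mM).aestronglyMeasurable ?_
    filter_upwards [hle] with ω h
    rw [Real.norm_eq_abs]
    change _ ≤ |(1 - t) * llr μ (mm f K) ω.1 + t * llr ν (mm f K) ω.2| + max (- llr (π.map (Mt f t)) (mm f K) (Mt f t ω)) 0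
    have a1 := le_abs_self ((1 - t) * llr μ (mm f K) ω.1 + t * llr ν (mm f K) ω.2)
    have a2 := abs_nonneg ((1 - t) * llr μ (mm f K) ω.1 + t * llr ν (mm f K) ω.2)
    have a3 := le_max_left (- llr (π.map (Mt f t)) (mm f K) (Mt f t ω)) 0
    have a4 := le_max_right (- llr (π.map (Mt f t)) (mm f K) (Mt f t ω)) 0
    rw [abs_le]
    constructor <;> linarith
  have it : Integrable (llr (π.map (Mt f t)) (mm f K)) (π.map (Mt f t)) :=
    (integrable_map_measure mlt.aestronglyMeasurable mM.aemeasurable).2 jt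
  have kt := integral_map (μ := π) mM.aemeasurable (f := llr (π.map (Mt f t)) (mm f K)) mlt.aestronglyMeasurable
  have e0 : Ent (mm f K) μ = ((∫ z, llr μ (mm f K) z ∂μ : ℝ) : EReal) := by unfold Ent; rw [if_pos ⟨hμ, i0⟩]
  have e1 : Ent (mm f K) ν = ((∫ z, llr ν (mm f K) z ∂ν : ℝ) : EReal) := by unfold Ent; rw [if_pos ⟨hν, i1⟩]
  have et : Ent (mm f K) (π.map (Mt f t)) = ((∫ z, llr (π.map (Mt f t)) (mm f K) z ∂(π.map (Mt f t)) : ℝ) : EReal) := by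
    unfold Ent; rw [if_pos ⟨hac, it⟩]
  rw [e0, e1, et, ← EReal.coe_mul, ← EReal.coe_mul, ← EReal.coe_add, EReal.coe_le_coe_iff, kt, ← k0, ← k1,
    ← integral_const_mul, ← integral_const_mul, ← integral_add (j0.const_mul _) (j1.const_mul _)]
  exact integral_mono_ae jt ju hle

lemma geo_upper {f : ℝ → ℝ} {k : ℝ} (hf : GoodF f k) {s t : ℝ} (s0 : 0 ≤ s) (s1 : s ≤ 1) (t0 : 0 ≤ t) (t1 : t ≤ 1) {μ ν : Measure Pl}
    {π : Measure (Pl × Pl)} (hπ : LexOpt μ ν π) (hX : π (XX f ×ˢ XX f)ᶜ = 0) :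
    W2sq dist (π.map (Mt f s)) (π.map (Mt f t)) ≤ ENNReal.ofReal ((t - s) ^ 2) * W2sq dist μ ν := by
  have mS := Mt_meas hf s
  have mT := Mt_meas hf t
  have hW : W2sq dist μ ν = Tot cst1 π := by
    refine le_antisymm ?_ ?_
    · unfold W2sq; exact iInf₂_le π hπ.cpl
    · unfold W2sq; exact le_iInf₂ fun π' h => hπ.opt1 π' h
  rw [hW]
  have hcpl : Measure.map Prod.fst (π.map fun ω => (Mt f s ω, Mt f t ω)) = π.map (Mt f s) ∧
      Measure.map Prod.snd (π.map fun ω => (Mt f s ω, Mt f t ω)) = π.map (Mt f t) := by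
    rw [Measure.map_map measurable_fst (mS.prodMk mT), Measure.map_map measurable_snd (mS.prodMk mT)]
    exact ⟨rfl, rfl⟩
  unfold W2sq
  refine le_trans (iInf₂_le (π.map fun ω => (Mt f s ω, Mt f t ω)) hcpl) ?_
  rw [lintegral_map (by fun_prop) (mS.prodMk mT), Tot, ← lintegral_const_mul' _ _ ENNReal.ofReal_ne_top]
  refine lintegral_mono_ae ?_
  filter_upwards [measure_eq_zero_iff_ae_notMem.1 hX] with ω hω
  rw [Set.mem_compl_iff, not_not] at hω
  rw [← ENNReal.ofReal_mul (sq_nonneg _)]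
  refine ENNReal.ofReal_le_ofReal ?_
  have := Mt_speed hf s0 s1 t0 t1 hω.1 hω.2
  have h2 := pow_le_pow_left₀ dist_nonneg this 2
  rw [mul_pow, sq_abs] at h2
  exact h2

end

open MeasureTheory ProbabilityTheory
open scoped ENNReal NNReal

lemma W2_symm_le (μ ν : Measure Pl) : W2sq dist μ ν ≤ W2sq dist ν μ := by
  refine le_iInf₂ fun π h => ?_
  have hm : Measurable (Prod.swap : Pl × Pl → Pl × Pl) := measurable_swap
  have hc : Measure.map Prod.fst (π.map Prod.swap) = μ ∧ Measure.map Prod.snd (π.map Prod.swap) = ν := by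
    rw [Measure.map_map measurable_fst hm, Measure.map_map measurable_snd hm]
    exact ⟨h.2, h.1⟩
  unfold W2sq
  refine le_trans (iInf₂_le (π.map Prod.swap) hc) ?_
  rw [lintegral_map (by fun_prop) hm]
  refine lintegral_mono fun ω => ?_
  simp only [Prod.fst_swap, Prod.snd_swap]
  rw [dist_comm]

lemma W2_comm (μ ν : Measure Pl) : W2sq dist μ ν = W2sq dist ν μ :=
  le_antisymm (W2_symm_le _ _) (W2_symm_le _ _)

lemma W2_tri_real {μ ν ρ : Measure Pl} [IsProbabilityMeasure μ] [IsProbabilityMeasure ν]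
    [IsProbabilityMeasure ρ] {l : ℝ} (h0 : 0 < l) (h1 : l < 1) (f1 : W2sq dist μ ν ≠ ⊤) (f2 : W2sq dist ν ρ ≠ ⊤) :
    (W2sq dist μ ρ).toReal ≤ 1 / l * (W2sq dist μ ν).toReal + 1 / (1 - l) * (W2sq dist ν ρ).toReal := by
  have h := W2_tri (μ := μ) (ν := ν) (ρ := ρ) h0 h1
  have a1 : ENNReal.ofReal (1 / l) * W2sq dist μ ν ≠ ⊤ := ENNReal.mul_ne_top ENNReal.ofReal_ne_top f1
  have a2 : ENNReal.ofReal (1 / (1 - l)) * W2sq dist ν ρ ≠ ⊤ := ENNReal.mul_ne_top ENNReal.ofReal_ne_top f2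
  have h' := ENNReal.toReal_mono (ENNReal.add_ne_top.2 ⟨a1, a2⟩) h
  have l1 : 0 < 1 - l := by linarith
  rwa [ENNReal.toReal_add a1 a2, ENNReal.toReal_mul, ENNReal.toReal_mul, ENNReal.toReal_ofReal (by positivity),
    ENNReal.toReal_ofReal (by positivity)] at h'

lemma geo_eq_aux (M : ℝ → Measure Pl) (hM : ∀ t ∈ Set.Icc (0 : ℝ) 1, IsProbabilityMeasure (M t))
    (hfin : W2sq dist (M 0) (M 1) ≠ ⊤)
    (hu : ∀ s ∈ Set.Icc (0 : ℝ) 1, ∀ t ∈ Set.Icc (0 : ℝ) 1,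
      W2sq dist (M s) (M t) ≤ ENNReal.ofReal ((t - s) ^ 2) * W2sq dist (M 0) (M 1))
    {s t : ℝ} (s0 : 0 ≤ s) (hst : s < t) (t1 : t ≤ 1) :
    ENNReal.ofReal ((t - s) ^ 2) * W2sq dist (M 0) (M 1) ≤ W2sq dist (M s) (M t) := by
  have m0 : (0 : ℝ) ∈ Set.Icc (0 : ℝ) 1 := by simp
  have m1 : (1 : ℝ) ∈ Set.Icc (0 : ℝ) 1 := by simp
  have ms : s ∈ Set.Icc (0 : ℝ) 1 := ⟨s0, by linarith⟩
  have mt : t ∈ Set.Icc (0 : ℝ) 1 := ⟨by linarith, t1⟩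
  have := hM 0 m0
  have := hM 1 m1
  have := hM s ms
  have := hM t mt
  have fin : ∀ a ∈ Set.Icc (0 : ℝ) 1, ∀ b ∈ Set.Icc (0 : ℝ) 1, W2sq dist (M a) (M b) ≠ ⊤ := fun a ha b hb =>
    ne_top_of_le_ne_top (ENNReal.mul_ne_top ENNReal.ofReal_ne_top hfin) (hu a ha b hb)
  set W := (W2sq dist (M 0) (M 1)).toReal with hW
  have ur : ∀ a ∈ Set.Icc (0 : ℝ) 1, ∀ b ∈ Set.Icc (0 : ℝ) 1, (W2sq dist (M a) (M b)).toReal ≤ (b - a) ^ 2 * W := by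
    intro a ha b hb
    have h := ENNReal.toReal_mono (ENNReal.mul_ne_top ENNReal.ofReal_ne_top hfin) (hu a ha b hb)
    rwa [ENNReal.toReal_mul, ENNReal.toReal_ofReal (sq_nonneg _)] at h
  have W0 : 0 ≤ W := ENNReal.toReal_nonneg
  have t0 : 0 < t := by linarith
  have d0 : 0 < t - s := by linarith
  set w := (W2sq dist (M s) (M t)).toReal with hw
  have w0 : 0 ≤ w := ENNReal.toReal_nonneg
  -- first step
  have A : t ^ 2 * W ≤ (W2sq dist (M 0) (M t)).toReal := by
    rcases t1.lt_or_eq with h | h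
    · have h1 := W2_tri_real t0 h (fin 0 m0 t mt) (fin t mt 1 m1)
      have h2 := ur t mt 1 m1
      have l1 : 0 < 1 - t := by linarith
      have h3 : 1 / (1 - t) * (W2sq dist (M t) (M 1)).toReal ≤ (1 - t) * W := by
        rw [one_div, inv_mul_le_iff₀ l1]; linarith
      have h4 : t * W ≤ 1 / t * (W2sq dist (M 0) (M t)).toReal := by linarith
      rw [one_div, le_inv_mul_iff₀ t0] at h4
      linarith
    · subst h; rw [hW]; simp
  have B : (t - s) ^ 2 * W ≤ w := by
    rcases s0.lt_or_eq with h | h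
    · have q0 : 0 < s / t := by positivity
      have q1 : s / t < 1 := by rw [div_lt_one t0]; exact hst
      have h1 := W2_tri_real q0 q1 (fin 0 m0 s ms) (fin s ms t mt)
      have h2 := ur 0 m0 s ms
      have h3 : 1 / (s / t) * (W2sq dist (M 0) (M s)).toReal ≤ t * s * W := by
        rw [one_div_div, div_mul_eq_mul_div, div_le_iff₀ h]
        have := mul_le_mul_of_nonneg_left h2 t0.le
        linarith
      have h4 : 1 / (1 - s / t) = t / (t - s) := by field_simp
      rw [h4] at h1
      have h5 : t * ((t - s) * W) ≤ t * (w / (t - s)) := by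
        have e : t / (t - s) * w = t * (w / (t - s)) := by ring
        linarith
      have h6 := le_of_mul_le_mul_left h5 t0
      rw [le_div_iff₀ d0] at h6
      linarith
    · subst h; rw [hw]; simpa using A
  rw [← ENNReal.ofReal_toReal hfin, ← ENNReal.ofReal_mul (sq_nonneg _)]
  exact ENNReal.ofReal_le_of_le_toReal B

lemma geo_eq (M : ℝ → Measure Pl) (hM : ∀ t ∈ Set.Icc (0 : ℝ) 1, IsProbabilityMeasure (M t))
    (hfin : W2sq dist (M 0) (M 1) ≠ ⊤)
    (hu : ∀ s ∈ Set.Icc (0 : ℝ) 1, ∀ t ∈ Set.Icc (0 : ℝ) 1,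
      W2sq dist (M s) (M t) ≤ ENNReal.ofReal ((t - s) ^ 2) * W2sq dist (M 0) (M 1)) :
    ∀ s ∈ Set.Icc (0 : ℝ) 1, ∀ t ∈ Set.Icc (0 : ℝ) 1,
      W2sq dist (M s) (M t) = ENNReal.ofReal ((t - s) ^ 2) * W2sq dist (M 0) (M 1) := by
  intro s hs t ht
  refine le_antisymm (hu s hs t ht) ?_
  rcases lt_trichotomy s t with h | h | h
  · exact geo_eq_aux M hM hfin hu hs.1 h ht.2
  · subst h; simp
  · have := geo_eq_aux M hM hfin hu ht.1 h hs.2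
    rw [W2_comm (M s), show (t - s) ^ 2 = (s - t) ^ 2 by ring]
    exact this

theorem stmt_13 :
    ∃ k₀ > (0 : ℝ), ∃ K₀ : ℝ, 1 ≤ K₀ ∧
    ∀ ε k K : ℝ, 0 < ε → ε < k → k < k₀ → K₀ ≤ K →
    ∀ φ : ℝ → ℝ, Continuous φ → (∀ x, 0 ≤ φ x) → (∀ x, φ x ≤ 1) →
      (∀ x, x ∉ Set.Icc (-k) k → φ x = 0) → (∫ x, φ x) = k →
    ∀ f f' : ℝ → ℝ, (∀ x, HasDerivAt f (f' x) x) → (∀ x, HasDerivAt f' (φ x) x) →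
      f' (-1) = 0 → f (-1) = ε →
    ∀ X : Set (ℝ × ℝ),
      X = {p : ℝ × ℝ | p.1 ∈ Set.Icc (-1 : ℝ) 1 ∧ 0 ≤ p.2 ∧ p.2 ≤ f p.1} →
    ∀ m : Measure (ℝ × ℝ),
      m = volume.withDensity
        (X.indicator fun z => ENNReal.ofReal ((1 / f z.1) * Real.exp (-K * (z.2 / f z.1) ^ 2))) →
    ∀ μ₀ μ₁ : Measure (ℝ × ℝ), IsProbabilityMeasure μ₀ → IsProbabilityMeasure μ₁ →
      μ₀ ≪ m → μ₁ ≪ m →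
    ∃ μ : ℝ → Measure (ℝ × ℝ),
      μ 0 = μ₀ ∧ μ 1 = μ₁ ∧
      (∀ t ∈ Set.Icc (0 : ℝ) 1, IsProbabilityMeasure (μ t) ∧ (μ t) Xᶜ = 0) ∧
      (∀ s ∈ Set.Icc (0 : ℝ) 1, ∀ t ∈ Set.Icc (0 : ℝ) 1,
        W2sq dist (μ s) (μ t) = ENNReal.ofReal ((t - s) ^ 2) * W2sq dist μ₀ μ₁) ∧
      (∀ t ∈ Set.Icc (0 : ℝ) 1,
        Ent m (μ t) ≤ ((1 - t : ℝ) : EReal) * Ent m μ₀ + ((t : ℝ) : EReal) * Ent m μ₁) := by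
  refine ⟨1 / 1000, by norm_num, 1, le_rfl, ?_⟩
  intro ε k K he hek hk hK φ hc p0 p1 hs hi f f' hf1 hf2 e1 e2 X hX m hm μ₀ μ₁ i0 i1 a0 a1
  have hf : GoodF f k := goodF_of he hek hk hc p0 p1 hs hi hf1 hf2 e1 e2
  have hX' : X = XX f := hX
  have hm' : m = mm f K := by rw [hm, hX']; rfl
  clear hX hm
  subst hX'
  subst hm'
  have x0 : μ₀ (XX f)ᶜ = 0 := a0 (mm_compl hf K)
  have x1 : μ₁ (XX f)ᶜ = 0 := a1 (mm_compl hf K)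
  obtain ⟨π, hπ⟩ := exists_lexOpt (XX_compact hf) x0 x1
  have hπX : π (XX f ×ˢ XX f)ᶜ = 0 := hπ.cpl.ae_mem (XX_meas hf) x0 x1
  have : IsProbabilityMeasure π := hπ.cpl.prob
  have h0 : π.map (Mt f 0) = μ₀ := by
    rw [← hπ.cpl.1]; congr 1; funext ω; exact Mt_zero hf ω
  have h1 : π.map (Mt f 1) = μ₁ := by
    rw [← hπ.cpl.2]; congr 1; funext ω; exact Mt_one hf ω
  have hpr : ∀ t ∈ Set.Icc (0 : ℝ) 1, IsProbabilityMeasure (π.map (Mt f t)) := fun t _ =>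
    Measure.isProbabilityMeasure_map (Mt_meas hf t).aemeasurable
  have hXt : ∀ t ∈ Set.Icc (0 : ℝ) 1, π.map (Mt f t) (XX f)ᶜ = 0 := by
    intro t ht
    rw [Measure.map_apply (Mt_meas hf t) (XX_meas hf).compl]
    refine measure_mono_null ?_ hπX
    intro ω hω hin
    exact hω (Mt_mem hf ht.1 ht.2 hin.1 hin.2)
  refine ⟨fun t => π.map (Mt f t), h0, h1, fun t ht => ⟨hpr t ht, hXt t ht⟩, ?_, ?_⟩
  · have hfin : W2sq dist μ₀ μ₁ ≠ ⊤ := by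
      refine ne_top_of_le_ne_top hπ.fin1 ?_
      unfold W2sq
      exact iInf₂_le π hπ.cpl
    have := geo_eq (fun t => π.map (Mt f t)) hpr (by simp only [h0, h1]; exact hfin) (by
      intro s hs t ht
      simp only [h0, h1]
      exact geo_upper hf hs.1 hs.2 ht.1 ht.2 hπ hπX)
    simp only [h0, h1] at this
    exact this
  · intro t ht
    rcases ht.1.lt_or_eq with t0 | t0
    · rcases ht.2.lt_or_eq with t1 | t1
      · exact ent_main hf hK t0 t1 a0 a1 hπ hπX (hXt t ht)
      · subst t1; simp [h1]
    · subst t0; simp [h0]
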